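/- arXiv:math/0505186 — 3 statements merged into one kernel-verified Lean document; each statement's English description precedes it below -/
import Mathlib

section
/- Let ε > 0 and let X ⊂ P^n be a geometrically integral hypersurface of degree d. Then there exist linear subspaces M_1, …, M_J ⊆ X defined over ℚ, with J = O_{d,ε,n}(B^{n−1+ε}) and 0 ≤ dim M_j ≤ n−1 for each j, such that N_X(B) ≤ Σ_{j=1}^J N_{M_j}(B). Moreover, every M_j with dim M_j ≥ 1 satisfies H(M_j) = O_{d,ε,n}(B^{1+ε}). -/
noncomputable section

abbrev KK : Type := AlgebraicClosure ℚ

abbrev Pn (N : ℕ) := Projectivization KK (Fin (N + 1) → KK)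

/-- The common zero set in projective space of a family of polynomials
(membership tested on the chosen representative). -/
def projZeros {N : ℕ} (S : Set (MvPolynomial (Fin (N + 1)) KK)) : Set (Pn N) :=
  {x | ∀ f ∈ S, MvPolynomial.eval x.rep f = 0}

/-- Zariski-closed subsets of projective space: common zero sets of families of forms. -/
def ProjClosed {N : ℕ} (V : Set (Pn N)) : Prop :=
  ∃ S : Set (MvPolynomial (Fin (N + 1)) KK),
    (∀ f ∈ S, ∃ d, f.IsHomogeneous d) ∧ V = projZeros S

def ProjIrred {N : ℕ} (V : Set (Pn N)) : Prop :=
  V.Nonempty ∧ ∀ C₁ C₂ : Set (Pn N), ProjClosed C₁ → ProjClosed C₂ →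
    V ⊆ C₁ ∪ C₂ → V ⊆ C₁ ∨ V ⊆ C₂

/-- A (geometrically integral) projective variety: an irreducible Zariski-closed set. -/
def ProjVariety {N : ℕ} (V : Set (Pn N)) : Prop := ProjClosed V ∧ ProjIrred V

/-- Dimension of a subset of projective space: Krull dimension of the poset of
irreducible closed subsets contained in it. The empty set has dimension `⊥`. -/
def projDim {N : ℕ} (V : Set (Pn N)) : WithBot ENat :=
  Order.krullDim {W : Set (Pn N) // ProjVariety W ∧ W ⊆ V}

/-- The set of projective points lying on a linear subspace. -/
def planeSet {N : ℕ} (W : Submodule KK (Fin (N + 1) → KK)) : Set (Pn N) :=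
  {x | x.rep ∈ W}

/-- Degree of a subset of projective space: the largest (finite) number of points
in a linear section. -/
def projDeg {N : ℕ} (V : Set (Pn N)) : ℕ :=
  sSup {k : ℕ | ∃ W : Submodule KK (Fin (N + 1) → KK),
    (V ∩ planeSet W).Finite ∧ (V ∩ planeSet W).ncard = k}

/-- The hypersurface cut out by a form. -/
def hyp {n : ℕ} (F : MvPolynomial (Fin (n + 1)) KK) : Set (Pn n) :=
  {x | MvPolynomial.eval x.rep F = 0}

/-- A form over the algebraic closure is non-singular if its partial derivatives
have no common non-trivial zero. -/
def NonsingularK {n : ℕ} (F : MvPolynomial (Fin (n + 1)) KK) : Prop :=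
  ∀ z : Fin (n + 1) → KK,
    (∀ i, MvPolynomial.eval z (MvPolynomial.pderiv i F) = 0) → z = 0

/-- The Fano set of (projective) m-planes contained in X, as linear subspaces of
dimension m+1. -/
def Fano (m n : ℕ) (X : Set (Pn n)) : Set (Submodule KK (Fin (n + 1) → KK)) :=
  {W | Module.finrank KK W = m + 1 ∧ planeSet W ⊆ X}

/-- Closed subsets of the Grassmannian of m-planes in Pⁿ, described via Stiefel
coordinates: Z is closed iff the set of (m+1)-tuples of vectors which, when
linearly independent, span a member of Z, is Zariski-closed in affine space. -/
def GrClosed (m n : ℕ) (Z : Set (Submodule KK (Fin (n + 1) → KK))) : Prop :=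
  (∀ W ∈ Z, Module.finrank KK W = m + 1) ∧
  ∃ S : Set (MvPolynomial (Fin (m + 1) × Fin (n + 1)) KK),
    {v : Fin (m + 1) → Fin (n + 1) → KK |
      LinearIndependent KK v → Submodule.span KK (Set.range v) ∈ Z}
    = {v | ∀ f ∈ S, MvPolynomial.eval (fun p => v p.1 p.2) f = 0}

def GrIrred (m n : ℕ) (Z : Set (Submodule KK (Fin (n + 1) → KK))) : Prop :=
  Z.Nonempty ∧ ∀ C₁ C₂ : Set (Submodule KK (Fin (n + 1) → KK)),
    GrClosed m n C₁ → GrClosed m n C₂ → Z ⊆ C₁ ∪ C₂ → Z ⊆ C₁ ∨ Z ⊆ C₂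

/-- A (geometrically integral) subvariety of the Grassmannian. -/
def GrVariety (m n : ℕ) (Z : Set (Submodule KK (Fin (n + 1) → KK))) : Prop :=
  GrClosed m n Z ∧ GrIrred m n Z

/-- Dimension of a subset of the Grassmannian of m-planes in Pⁿ. -/
def grDim (m n : ℕ) (Z : Set (Submodule KK (Fin (n + 1) → KK))) : WithBot ENat :=
  Order.krullDim {W : Set (Submodule KK (Fin (n + 1) → KK)) // GrVariety m n W ∧ W ⊆ Z}

/-- D(Z): the union of the planes parametrised by Z. -/
def DSet {n : ℕ} (Z : Set (Submodule KK (Fin (n + 1) → KK))) : Set (Pn n) :=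
  {x | ∃ Λ ∈ Z, x.rep ∈ Λ}

/-- A primitive integer vector: the gcd of its coordinates is 1. -/
def IsPrimitiveVec {n : ℕ} (x : Fin n → ℤ) : Prop := Finset.univ.gcd x = 1

/-- Height of an integer vector: the maximum modulus of its coordinates. -/
def heightVec {n : ℕ} (x : Fin n → ℤ) : ℝ :=
  ((Finset.univ.sup fun i => (x i).natAbs : ℕ) : ℝ)

def coeK {n : ℕ} (x : Fin n → ℤ) : Fin n → KK := fun i => ((x i : ℤ) : KK)

def coeQ {n : ℕ} (x : Fin n → ℤ) : Fin n → ℚ := fun i => ((x i : ℤ) : ℚ)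

/-- The number of rational points of height at most B on a subset V of projective
space, counted via primitive integer vectors (each projective rational point
corresponds to exactly two primitive vectors). -/
def NV {n : ℕ} (V : Set (Pn n)) (B : ℝ) : ℕ :=
  Set.ncard {x : Fin (n + 1) → ℤ | IsPrimitiveVec x ∧ heightVec x ≤ B ∧
    ∃ h : coeK x ≠ 0, Projectivization.mk KK (coeK x) h ∈ V}

/-- An integer form is non-singular if its partial derivatives have no common
non-trivial zero over the algebraic closure of ℚ. -/
def NonsingularZ {n : ℕ} (F : MvPolynomial (Fin (n + 1)) ℤ) : Prop :=
  ∀ z : Fin (n + 1) → KK,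
    (∀ i, MvPolynomial.aeval z (MvPolynomial.pderiv i F) = 0) → z = 0

/-- Base change of an integer polynomial to the algebraic closure of ℚ. -/
def mapK {n : ℕ} (F : MvPolynomial (Fin (n + 1)) ℤ) : MvPolynomial (Fin (n + 1)) KK :=
  MvPolynomial.map (Int.castRingHom KK) F

/-- The Plücker height of the rational m-plane spanned by the integer vectors v:
the maximum modulus of the (m+1)×(m+1) minors, divided by their gcd. -/
def pluckerHeight {m n : ℕ} (v : Fin (m + 1) → Fin (n + 1) → ℤ) : ℕ :=
  (Finset.univ.sup fun s : Fin (m + 1) → Fin (n + 1) =>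
    (Matrix.det (Matrix.of fun i j => v i (s j))).natAbs) /
  (Finset.univ.gcd fun s : Fin (m + 1) → Fin (n + 1) =>
    (Matrix.det (Matrix.of fun i j => v i (s j))).natAbs)

def betaExp (k : ℕ) : ℝ := if k ≤ 3 then 0 else 1/4

def sigmaExp (n k : ℕ) : ℝ :=
  if (k : ℝ) ≤ ((n : ℝ) - 1) / 2 then (k : ℝ) + 1 else (k : ℝ) + betaExp k

def tauExp (n k : ℕ) : ℝ :=
  if (k : ℝ) < ((n : ℝ) - 1) / 2 then (k : ℝ) + 1 else (k : ℝ) + betaExp k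

/-- E: the union of the (n-1)/2-planes contained in X (for n odd; empty for n even). -/
def bigE {n : ℕ} (X : Set (Pn n)) : Set (Pn n) :=
  {x | n % 2 = 1 ∧ ∃ W : Submodule KK (Fin (n + 1) → KK),
    Module.finrank KK W = (n - 1) / 2 + 1 ∧ planeSet W ⊆ X ∧ x ∈ planeSet W}

/-- The cone of lines contained in X passing through x. -/
def coneOfLines {n : ℕ} (X : Set (Pn n)) (x : Pn n) : Set (Pn n) :=
  {y | ∃ L : Submodule KK (Fin (n + 1) → KK),
    Module.finrank KK L = 2 ∧ planeSet L ⊆ X ∧ x.rep ∈ L ∧ y.rep ∈ L}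

theorem dbl_count {α : Type*} [DecidableEq α] (P : Finset α) (l : ℕ) (f : Finset α → α → ℝ) :
    ∑ T ∈ P.powersetCard (l+1), ∑ p ∈ T, f T p =
    ∑ S ∈ P.powersetCard l, ∑ p ∈ P \ S, f (insert p S) p := by
  rw [Finset.sum_sigma', Finset.sum_sigma']
  refine Finset.sum_bij' (fun x _ => ⟨x.1.erase x.2, x.2⟩) (fun x _ => ⟨insert x.2 x.1, x.2⟩) ?_ ?_ ?_ ?_ ?_
  · rintro ⟨T, p⟩ h
    simp only [Finset.mem_sigma, Finset.mem_powersetCard] at h ⊢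
    refine ⟨⟨(Finset.erase_subset _ _).trans h.1.1, ?_⟩, ?_⟩
    · rw [Finset.card_erase_of_mem h.2]; omega
    · simp [h.1.1 h.2]
  · rintro ⟨S, p⟩ h
    simp only [Finset.mem_sigma, Finset.mem_powersetCard, Finset.mem_sdiff] at h ⊢
    refine ⟨⟨?_, ?_⟩, ?_⟩
    · exact Finset.insert_subset h.2.1 h.1.1
    · rw [Finset.card_insert_of_notMem h.2.2]; omega
    · simp
  · rintro ⟨T, p⟩ h
    simp only [Finset.mem_sigma] at h
    simp [Finset.insert_erase h.2]
  · rintro ⟨S, p⟩ h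
    simp only [Finset.mem_sigma, Finset.mem_sdiff] at h
    simp [Finset.erase_insert h.2.2]
  · rintro ⟨T, p⟩ h
    simp only [Finset.mem_sigma] at h
    simp [Finset.insert_erase h.2]

theorem leave_one_out {α : Type*} [DecidableEq α] (P : Finset α) (Φ : Finset α → ℕ)
    (bad : Finset α → Finset α) (φ A' N L β : ℕ)
    (hanti : ∀ S p, Φ (insert p S) ≤ Φ S)
    (hΦ : ∀ S, Φ S ≤ φ) (hbad : ∀ S, (bad S).card ≤ A')
    (heq : ∀ S p, Φ (insert p S) = Φ S → bad (insert p S) = bad S)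
    (hK : (N+L) + A'*(N+L) ≤ P.card) (hL : (N+L)*φ < L*β) :
    ∃ T ⊆ P, N ≤ T.card ∧ T.card ≤ N+L ∧ (T ∩ bad T).card ≤ β := by
  classical
  by_contra hcon
  push Not at hcon
  set K := P.card with hKdef
  let w : ℕ → ℝ := fun l => (∑ S ∈ P.powersetCard l, (Φ S : ℝ)) / (K.choose l : ℝ)
  have hw0 : ∀ l, 0 ≤ w l := fun l => by positivity
  have hwφ : ∀ l, w l ≤ φ := by
    intro l
    refine div_le_of_le_mul₀ (by positivity) (by positivity) ?_
    have := Finset.sum_le_card_nsmul (P.powersetCard l) (fun S => (Φ S : ℝ)) φ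
      (fun S _ => by exact_mod_cast hΦ S)
    rw [Finset.card_powersetCard, nsmul_eq_mul] at this
    linarith
  have hRpos : 0 < N + L := by
    rcases Nat.eq_zero_or_pos L with h | h
    · subst h; simp at hL
    · omega
  have step : ∀ l, N ≤ l → l < N + L → w (l+1) + (β:ℝ)/((N+L : ℕ):ℝ) ≤ w l := by
    intro l hl1 hl2
    have hlK : l + 1 ≤ K := by
      have : 0 ≤ A'*(N+L) := Nat.zero_le _
      omega
    have hKl : (A':ℝ)*((N+L:ℕ):ℝ) + 1 ≤ (K:ℝ) - l := by
      have : l + 1 + A'*(N+L) ≤ K := by omega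
      have : (l:ℝ) + 1 + A'*((N+L:ℕ):ℝ) ≤ K := by exact_mod_cast this
      linarith
    have hch : ((l:ℝ)+1) * (K.choose (l+1)) = ((K:ℝ) - l) * K.choose l := by
      have := Nat.choose_succ_right_eq K l
      have h2 : ((K.choose (l+1) * (l+1) : ℕ):ℝ) = ((K.choose l * (K - l) : ℕ) : ℝ) := by rw [this]
      push_cast [Nat.cast_sub (by omega : l ≤ K)] at h2
      linarith
    have hc1 : 0 < (K.choose (l+1) : ℝ) := by exact_mod_cast Nat.choose_pos hlK
    have hc0 : 0 < (K.choose l : ℝ) := by exact_mod_cast Nat.choose_pos (by omega)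
    have e1 := dbl_count P l (fun T p => if p ∈ bad T then (1:ℝ) else 0)
    have e2 := dbl_count P l (fun T p => (Φ T : ℝ))
    have lhs : ((β:ℝ)+1) * K.choose (l+1) ≤ ∑ T ∈ P.powersetCard (l+1), ∑ p ∈ T, (if p ∈ bad T then (1:ℝ) else 0) := by
      have := Finset.card_nsmul_le_sum (P.powersetCard (l+1)) (fun T => ∑ p ∈ T, (if p ∈ bad T then (1:ℝ) else 0)) ((β:ℝ)+1) ?_
      · rw [Finset.card_powersetCard, nsmul_eq_mul] at this
        linarith
      · intro T hT
        rw [Finset.mem_powersetCard] at hT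
        have := hcon T hT.1 (by omega) (by omega)
        rw [← Finset.sum_filter, Finset.sum_const, nsmul_eq_mul, mul_one, Finset.filter_mem_eq_inter]
        exact_mod_cast this
    have rhs : ∑ S ∈ P.powersetCard l, ∑ p ∈ P \ S, (if p ∈ bad (insert p S) then (1:ℝ) else 0)
        ≤ ∑ S ∈ P.powersetCard l, ((∑ p ∈ P \ S, ((Φ S : ℝ) - Φ (insert p S))) + A') := by
      apply Finset.sum_le_sum
      intro S hS
      have h1 : ∀ p ∈ P \ S, (if p ∈ bad (insert p S) then (1:ℝ) else 0) ≤ ((Φ S : ℝ) - Φ (insert p S)) + (if p ∈ bad S then 1 else 0) := by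
        intro p hp
        have h0 : (0:ℝ) ≤ (if p ∈ bad S then 1 else 0) := by split_ifs <;> norm_num
        rcases (hanti S p).lt_or_eq with h | h
        · have : (Φ (insert p S) : ℝ) + 1 ≤ Φ S := by exact_mod_cast h
          split_ifs at * <;> linarith
        · rw [heq S p h, h]; simp
      refine (Finset.sum_le_sum h1).trans ?_
      rw [Finset.sum_add_distrib]
      gcongr
      rw [← Finset.sum_filter, Finset.sum_const, nsmul_eq_mul, mul_one, Finset.filter_mem_eq_inter]
      exact_mod_cast (Finset.card_le_card Finset.inter_subset_right).trans (hbad S)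
    have e3 : ∑ S ∈ P.powersetCard l, ((∑ p ∈ P \ S, ((Φ S : ℝ) - Φ (insert p S))) + A')
        = ((K:ℝ) - l) * (∑ S ∈ P.powersetCard l, (Φ S : ℝ)) - ((l:ℝ)+1) * (∑ T ∈ P.powersetCard (l+1), (Φ T:ℝ)) + A' * K.choose l := by
      rw [Finset.sum_add_distrib, Finset.sum_const, Finset.card_powersetCard, nsmul_eq_mul]
      simp_rw [Finset.sum_sub_distrib]
      rw [← e2]
      rw [Finset.mul_sum, Finset.mul_sum]
      rw [mul_comm (A':ℝ)]
      congr 2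
      · apply Finset.sum_congr rfl
        intro S hS
        rw [Finset.mem_powersetCard] at hS
        rw [Finset.sum_const, Finset.card_sdiff_of_subset hS.1, nsmul_eq_mul, Nat.cast_sub (Finset.card_le_card hS.1), hS.2]
      · apply Finset.sum_congr rfl
        intro S hS
        rw [Finset.mem_powersetCard] at hS
        rw [Finset.sum_const, nsmul_eq_mul, hS.2]; push_cast; ring
    have main : ((β:ℝ)+1) * K.choose (l+1) ≤ ((K:ℝ) - l) * (∑ S ∈ P.powersetCard l, (Φ S : ℝ)) - ((l:ℝ)+1) * (∑ T ∈ P.powersetCard (l+1), (Φ T:ℝ)) + A' * K.choose l := by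
      rw [← e3]; exact lhs.trans (e1.le.trans rhs)
    have hwl : (∑ S ∈ P.powersetCard l, (Φ S : ℝ)) = w l * K.choose l := by
      simp only [w]; field_simp
    have hwl1 : (∑ S ∈ P.powersetCard (l+1), (Φ S : ℝ)) = w (l+1) * K.choose (l+1) := by
      simp only [w]; field_simp
    rw [hwl, hwl1] at main
    have hR : (0:ℝ) < ((N+L:ℕ):ℝ) := by exact_mod_cast hRpos
    have hlR : (l:ℝ) + 1 ≤ ((N+L:ℕ):ℝ) := by exact_mod_cast hl2
    set R : ℝ := ((N+L:ℕ):ℝ)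
    have hAc : (A':ℝ) * K.choose l * R ≤ (l+1) * K.choose (l+1) := by
      rw [hch]; nlinarith
    have h3 : (β+1) * (K.choose (l+1)) * R ≤ ((l:ℝ)+1) * K.choose (l+1) * (w l - w (l+1)) * R + (l+1) * K.choose (l+1) := by
      have := mul_le_mul_of_nonneg_right main hR.le
      have h4 : ((K:ℝ) - l) * (w l * K.choose l) = (l+1) * K.choose (l+1) * w l := by rw [hch]; ring
      rw [h4] at this
      nlinarith
    have h5 : (β+1) * R ≤ ((l:ℝ)+1) * (w l - w (l+1)) * R + (l+1) := by
      have h6 : (K.choose (l+1) : ℝ) * ((β+1) * R) ≤ (K.choose (l+1) : ℝ) * (((l:ℝ)+1) * (w l - w (l+1)) * R + (l+1)) := by linarith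
      exact le_of_mul_le_mul_left h6 hc1
    have h7 : (β:ℝ) * R ≤ ((l:ℝ)+1) * (w l - w (l+1)) * R := by linarith
    have h8 : (β:ℝ) ≤ ((l:ℝ)+1) * (w l - w (l+1)) := le_of_mul_le_mul_right h7 hR
    have h9 : 0 ≤ w l - w (l+1) := by
      by_contra h
      push Not at h
      have : ((l:ℝ)+1) * (w l - w (l+1)) < 0 := mul_neg_of_pos_of_neg (by positivity) h
      have : (0:ℝ) ≤ β := by positivity
      linarith
    have h10 : (β:ℝ) / R ≤ w l - w (l+1) := by
      rw [div_le_iff₀ hR]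
      nlinarith
    linarith
  have tot : ∀ k, k ≤ L → w (N+k) + k * ((β:ℝ)/((N+L : ℕ):ℝ)) ≤ w N := by
    intro k
    induction k with
    | zero => intro _; simp
    | succ k ih =>
      intro hk
      have := ih (by omega)
      have h2 := step (N+k) (by omega) (by omega)
      push_cast at *
      rw [← add_assoc]
      linarith
  have h1 := tot L le_rfl
  have h2 := hw0 (N+L)
  have h3 := hwφ N
  have hR : (0:ℝ) < ((N+L:ℕ):ℝ) := by exact_mod_cast hRpos
  have h4 : (L:ℝ) * ((β:ℝ)/((N+L : ℕ):ℝ)) ≤ φ := by linarith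
  rw [← mul_div_assoc, div_le_iff₀ hR] at h4
  have h5 : L * β ≤ φ * (N+L) := by exact_mod_cast h4
  rw [mul_comm] at hL
  have : φ * (N+L) < L * β := hL
  omega

open MvPolynomial in
/-- Directional derivative. -/
def dirD {n : ℕ} (z : Fin (n+1) → ℤ) (g : MvPolynomial (Fin (n+1)) ℤ) : MvPolynomial (Fin (n+1)) ℤ :=
  ∑ i, MvPolynomial.C (z i) * MvPolynomial.pderiv i g

theorem dirD_hom {n e : ℕ} (z : Fin (n+1) → ℤ) {g : MvPolynomial (Fin (n+1)) ℤ}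
    (hg : g.IsHomogeneous e) : (dirD z g).IsHomogeneous (e-1) := by
  unfold dirD
  apply MvPolynomial.IsHomogeneous.sum
  intro i _
  have := (MvPolynomial.isHomogeneous_C (Fin (n+1)) (z i)).mul (hg.pderiv (i := i))
  simpa using this

theorem dirD_iter_hom {n e : ℕ} (z : Fin (n+1) → ℤ) {g : MvPolynomial (Fin (n+1)) ℤ}
    (hg : g.IsHomogeneous e) (j : ℕ) : ((dirD z)^[j] g).IsHomogeneous (e-j) := by
  induction j with
  | zero => simpa using hg
  | succ j ih =>
    rw [Function.iterate_succ_apply', ← Nat.sub_sub]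
    exact dirD_hom z ih

theorem eval_dirD {n : ℕ} (z x : Fin (n+1) → ℤ) (g : MvPolynomial (Fin (n+1)) ℤ) :
    MvPolynomial.eval x (dirD z g) = ∑ i, z i * MvPolynomial.eval x (MvPolynomial.pderiv i g) := by
  simp [dirD]

theorem euler_eval {n e : ℕ} (x : Fin (n+1) → ℤ) {g : MvPolynomial (Fin (n+1)) ℤ}
    (hg : g.IsHomogeneous e) :
    ∑ i, x i * MvPolynomial.eval x (MvPolynomial.pderiv i g) = e * MvPolynomial.eval x g := by
  have := congrArg (MvPolynomial.eval x) hg.sum_X_mul_pderiv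
  simpa using this

theorem dirD_iter_top {n : ℕ} (z : Fin (n+1) → ℤ) (e : ℕ) : ∀ {g : MvPolynomial (Fin (n+1)) ℤ},
    g.IsHomogeneous e → (dirD z)^[e] g = MvPolynomial.C ((e.factorial : ℤ) * MvPolynomial.eval z g) := by
  induction e with
  | zero =>
    intro g hg
    have : g.totalDegree = 0 := by
      by_cases h : g = 0
      · simp [h]
      · exact hg.totalDegree h
    rw [MvPolynomial.totalDegree_eq_zero_iff_eq_C] at this
    rw [this]; simp
  | succ e ih =>
    intro g hg
    rw [Function.iterate_succ_apply, ih (dirD_hom z hg), eval_dirD, euler_eval z hg]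
    push_cast [Nat.factorial_succ]
    congr 1; ring

theorem eval_smul_hom {n e : ℕ} (l : ℤ) (x : Fin (n+1) → ℤ) {g : MvPolynomial (Fin (n+1)) ℤ}
    (hg : g.IsHomogeneous e) :
    MvPolynomial.eval (fun i => l * x i) g = l^e * MvPolynomial.eval x g := by
  rw [MvPolynomial.eval_eq', MvPolynomial.eval_eq', Finset.mul_sum]
  apply Finset.sum_congr rfl
  intro m hm
  simp_rw [mul_pow, Finset.prod_mul_distrib, Finset.prod_pow_eq_pow_sum]
  have : ∑ i, m i = e := by
    have := hg (MvPolynomial.mem_support_iff.mp hm)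
    rw [← this]
    simp [Finsupp.weight_apply, Finsupp.sum_fintype]
  rw [this]; ring

theorem taylor2 {n : ℕ} (p : ℤ) (a t : Fin (n+1) → ℤ) (g : MvPolynomial (Fin (n+1)) ℤ) :
    ∃ q : ℤ, MvPolynomial.eval (fun i => a i + p * t i) g = MvPolynomial.eval a g
      + p * (∑ i, t i * MvPolynomial.eval a (MvPolynomial.pderiv i g)) + p^2 * q := by
  induction g using MvPolynomial.induction_on with
  | C c => exact ⟨0, by simp⟩
  | add f g hf hg =>
    obtain ⟨q1, h1⟩ := hf
    obtain ⟨q2, h2⟩ := hg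
    refine ⟨q1 + q2, ?_⟩
    simp only [map_add, h1, h2, mul_add, Finset.sum_add_distrib]
    ring
  | mul_X f i hf =>
    obtain ⟨q1, h1⟩ := hf
    simp only [map_mul, h1, MvPolynomial.eval_X, Derivation.leibniz, map_add, smul_eq_mul, MvPolynomial.pderiv_X,
      mul_add, Finset.sum_add_distrib]
    have e1 : ∑ j, t j * (MvPolynomial.eval a f * MvPolynomial.eval a ((Pi.single j 1 : Fin (n+1) → MvPolynomial (Fin (n+1)) ℤ) i)) = t i * MvPolynomial.eval a f := by
      rw [Finset.sum_eq_single i]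
      · simp
      · intro j _ hj; simp [hj.symm]
      · simp
    have e2 : ∑ j, t j * (a i * MvPolynomial.eval a (MvPolynomial.pderiv j f)) = a i * ∑ j, t j * (MvPolynomial.eval a (MvPolynomial.pderiv j f)) := by
      rw [Finset.mul_sum]; apply Finset.sum_congr rfl; intros; ring
    rw [e1, e2]
    set S := ∑ j, t j * (MvPolynomial.eval a (MvPolynomial.pderiv j f))
    exact ⟨q1 * a i + p * q1 * t i + S * t i, by ring⟩

theorem tangency {n e : ℕ} {p : ℤ} (hp : Prime p) {l : ℤ} (hl : ¬ p ∣ l) (x y t : Fin (n+1) → ℤ)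
    (hy : ∀ i, y i = l * x i + p * t i) {g : MvPolynomial (Fin (n+1)) ℤ}
    (hg : g.IsHomogeneous e) (hx0 : MvPolynomial.eval x g = 0) (hy0 : MvPolynomial.eval y g = 0) :
    p ∣ ∑ i, t i * MvPolynomial.eval x (MvPolynomial.pderiv i g) := by
  obtain ⟨q, hq⟩ := taylor2 p (fun i => l * x i) t g
  have : (fun i => l * x i + p * t i) = y := by ext i; rw [hy]
  rw [this, hy0, eval_smul_hom l x hg, hx0] at hq
  have e2 : ∑ i, t i * MvPolynomial.eval (fun i => l * x i) (MvPolynomial.pderiv i g) =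
      l^(e-1) * ∑ i, t i * MvPolynomial.eval x (MvPolynomial.pderiv i g) := by
    rw [Finset.mul_sum]; apply Finset.sum_congr rfl; intro i _
    rw [eval_smul_hom l x hg.pderiv]; ring
  rw [e2] at hq
  set S := ∑ i, t i * MvPolynomial.eval x (MvPolynomial.pderiv i g)
  have h3 : p * (l^(e-1) * S) = p * (p * (-q)) := by linear_combination -hq
  have h4 := mul_left_cancel₀ hp.ne_zero h3
  have h5 : p ∣ l^(e-1) * S := ⟨_, h4⟩
  rcases hp.dvd_or_dvd h5 with h | h
  · exact absurd (hp.dvd_of_dvd_pow h) hl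
  · exact h

theorem exists_minor {ι κ : Type*} [Fintype ι] [DecidableEq ι] [Fintype κ] (v : ι → κ → ℚ)
    (hv : LinearIndependent ℚ v) : ∃ s : ι → κ, (Matrix.of fun i j => v i (s j)).det ≠ 0 := by
  classical
  let M : Matrix ι κ ℚ := Matrix.of v
  have hr : M.rank = Fintype.card ι := LinearIndependent.rank_matrix (M := M) hv
  rw [Matrix.rank_eq_finrank_span_cols] at hr
  obtain ⟨f, hf1, _, hf3⟩ := Submodule.exists_fun_fin_finrank_span_eq ℚ (Set.range M.col)
  have e : Fin (Module.finrank ℚ (Submodule.span ℚ (Set.range M.col))) ≃ ι :=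
    Fintype.equivOfCardEq (by simp [hr])
  choose s hs using hf1
  refine ⟨fun j => s (e.symm j), ?_⟩
  have h1 : LinearIndependent ℚ (fun j => f (e.symm j)) := hf3.comp _ e.symm.injective
  have h2 : LinearIndependent ℚ (Matrix.of fun i j => v i (s (e.symm j))).col := by
    convert h1 using 2 with j
    rw [← hs]; rfl
  rw [Matrix.linearIndependent_cols_iff_isUnit, Matrix.isUnit_iff_isUnit_det] at h2
  exact h2.ne_zero

theorem exists_minor_int {ι : Type*} [Fintype ι] [DecidableEq ι] {n : ℕ} (v : ι → Fin (n+1) → ℤ)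
    (hv : LinearIndependent ℚ (fun i => coeQ (v i))) :
    ∃ s : ι → Fin (n+1), (Matrix.of fun i j => v i (s j)).det ≠ 0 := by
  obtain ⟨s, hs⟩ := exists_minor _ hv
  refine ⟨s, fun h => hs ?_⟩
  have := congrArg (Int.cast : ℤ → ℚ) h
  rw [Int.cast_det] at this
  simpa [coeQ, Matrix.map] using this

/-- integer Cramer -/
theorem cramer_dvd {ι : Type*} [Fintype ι] [DecidableEq ι] {n : ℕ} (p : ℤ) (W : ι → Fin (n+1) → ℤ)
    (s : ι → Fin (n+1)) (L z : Fin (n+1) → ℤ)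
    (hz : coeQ z ∈ Submodule.span ℚ (Set.range fun i => coeQ (W i)))
    (hL : ∀ j, p ∣ ∑ i, W j i * L i) :
    p ∣ (Matrix.of fun i j => W i (s j)).det * ∑ i, z i * L i := by
  rw [Submodule.mem_span_range_iff_exists_fun] at hz
  obtain ⟨a, ha⟩ := hz
  set A : Matrix ι ι ℤ := Matrix.of fun i j => W i (s j) with hA
  let zs : ι → ℤ := fun j => z (s j)
  let m : ι → ℤ := Matrix.vecMul zs A.adjugate
  have hzA : (fun j => (zs j : ℚ)) = Matrix.vecMul a (A.map (Int.cast : ℤ → ℚ)) := by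
    ext j
    have := congrFun ha (s j)
    simp only [Finset.sum_apply, Pi.smul_apply, coeQ, smul_eq_mul] at this
    simp only [zs, Matrix.vecMul, dotProduct, Matrix.map_apply, hA, Matrix.of_apply, this]
  have hm : ∀ j, (m j : ℚ) = (A.det : ℚ) * a j := by
    intro j
    have e1 : (fun j => (m j : ℚ)) = Matrix.vecMul (fun j => (zs j : ℚ)) (A.adjugate.map (Int.cast : ℤ → ℚ)) := by
      ext j; simp [m, Matrix.vecMul, dotProduct]
    have e2 : (A.adjugate.map (Int.cast : ℤ → ℚ)) = (A.map (Int.cast : ℤ → ℚ)).adjugate :=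
      (Int.castRingHom ℚ).map_adjugate A
    have e3 := congrFun e1 j
    rw [e3, hzA, e2, Matrix.vecMul_vecMul, Matrix.mul_adjugate, ← Int.cast_det]
    simp [Matrix.vecMul_smul]
  have hfin : ∀ i, A.det * z i = ∑ j, m j * W j i := by
    intro i
    have := congrFun ha i
    simp only [Finset.sum_apply, Pi.smul_apply, coeQ, smul_eq_mul] at this
    have h : ((A.det * z i : ℤ) : ℚ) = ((∑ j, m j * W j i : ℤ) : ℚ) := by
      rw [Int.cast_mul, Int.cast_sum]
      simp_rw [Int.cast_mul, hm, ← this, Finset.mul_sum, mul_assoc]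
    exact_mod_cast h
  have : A.det * ∑ i, z i * L i = ∑ j, m j * ∑ i, W j i * L i := by
    simp_rw [Finset.mul_sum]
    rw [Finset.sum_comm]
    apply Finset.sum_congr rfl
    intro i _
    rw [← mul_assoc, hfin, Finset.sum_mul]
    apply Finset.sum_congr rfl
    intros; ring
  rw [this]
  exact Finset.dvd_sum fun j _ => Dvd.dvd.mul_left (hL j) _

theorem det_rows_mod {ι : Type*} [Fintype ι] [DecidableEq ι] {n : ℕ} (p : ℤ) (v W : ι → Fin (n+1) → ℤ)
    (i₀ : ι) (l : ι → ℤ) (h0 : v i₀ = W i₀)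
    (h1 : ∀ j, j ≠ i₀ → ∀ i, v j i = l j * W i₀ i + p * W j i) (s : ι → Fin (n+1)) :
    (Matrix.of fun i j => v i (s j)).det = p^(Fintype.card ι - 1) * (Matrix.of fun i j => W i (s j)).det := by
  let c : ι → ℤ := fun j => if j = i₀ then 1 else p
  have e1 : (Matrix.of fun i j => v i (s j)).det = (Matrix.of fun i j => c i * (Matrix.of fun i j => W i (s j)) i j).det := by
    apply Matrix.det_eq_of_forall_row_eq_smul_add_const (fun j => if j = i₀ then 0 else l j) i₀ (by simp)
    intro i j
    by_cases h : i = i₀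
    · subst h; simp [c, h0]
    · simp [c, h, h1 i h]; ring
  rw [e1, Matrix.det_mul_column]
  congr 1
  simp only [c]
  rw [Finset.prod_ite]
  simp [Finset.filter_ne', Finset.card_erase_of_mem, Finset.card_univ]

def RelP {n : ℕ} (p : ℕ) (x y : Fin (n+1) → ℤ) : Prop :=
  ∃ l : ℤ, ¬ (p:ℤ) ∣ l ∧ ∀ i, (p:ℤ) ∣ y i - l * x i

theorem prod_pow_dvd (T : Finset ℕ) (hT : ∀ p ∈ T, p.Prime) (k : ℕ) (D : ℤ)
    (h : ∀ p ∈ T, (p:ℤ)^k ∣ D) : ((∏ p ∈ T, p : ℕ) : ℤ)^k ∣ D := by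
  rw [Nat.cast_prod, ← Finset.prod_pow]
  apply Finset.prod_dvd_of_coprime
  · intro p hp q hq hpq
    simp only [Function.onFun]
    apply IsCoprime.pow
    rw [Nat.isCoprime_iff_coprime]
    exact (Nat.coprime_primes (hT p hp) (hT q hq)).mpr hpq
  · exact h

theorem det_bound {ι : Type*} [Fintype ι] [DecidableEq ι] (A : Matrix ι ι ℤ) (b : ℕ)
    (h : ∀ i j, |A i j| ≤ b) : |A.det| ≤ (Fintype.card ι).factorial * (b:ℤ)^(Fintype.card ι) := by
  have := Matrix.det_le (A := A) (abv := AbsoluteValue.abs) (x := (b:ℤ)) (by simpa using h)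
  simpa using this

theorem rel_rows {n : ℕ} {ι : Type*} [Fintype ι] [DecidableEq ι] (p : ℕ) (v : ι → Fin (n+1) → ℤ) (i₀ : ι)
    (h : ∀ j, RelP p (v i₀) (v j)) : ∃ (W : ι → Fin (n+1) → ℤ) (l : ι → ℤ),
      v i₀ = W i₀ ∧ (∀ j, j ≠ i₀ → ¬ (p:ℤ) ∣ l j) ∧ ∀ j, j ≠ i₀ → ∀ i, v j i = l j * W i₀ i + p * W j i := by
  choose l hl ht using h
  choose t ht using ht
  refine ⟨fun j => if j = i₀ then v i₀ else t j, l, by simp, fun j _ => hl j, ?_⟩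
  intro j hj i
  simp only [hj, if_true, if_false]
  linear_combination ht j i

theorem minor_dvd {n : ℕ} {ι : Type*} [Fintype ι] [DecidableEq ι] (T : Finset ℕ) (hT : ∀ p ∈ T, p.Prime)
    (v : ι → Fin (n+1) → ℤ) (i₀ : ι)
    (h : ∀ p ∈ T, ∀ j, RelP p (v i₀) (v j)) (s : ι → Fin (n+1)) :
    ((∏ p ∈ T, p : ℕ) : ℤ)^(Fintype.card ι - 1) ∣ (Matrix.of fun i j => v i (s j)).det := by
  apply prod_pow_dvd T hT
  intro p hp
  obtain ⟨W, l, h0, _, h1⟩ := rel_rows p v i₀ (h p hp)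
  rw [det_rows_mod (p:ℤ) v W i₀ l h0 h1 s]
  exact dvd_mul_right _ _

theorem key_lemma {n e : ℕ} (C : Set (Fin (n+1) → ℤ)) (x : Fin (n+1) → ℤ) (hx : x ∈ C) (hx0 : x ≠ 0)
    (b : ℕ) (hb : ∀ y ∈ C, ∀ i, |y i| ≤ b) (g : MvPolynomial (Fin (n+1)) ℤ) (hg : g.IsHomogeneous e)
    (hgC : ∀ y ∈ C, MvPolynomial.eval y g = 0) (z : Fin (n+1) → ℤ)
    (hz : coeQ z ∈ Submodule.span ℚ (coeQ '' C)) (T : Finset ℕ) (hT : ∀ p ∈ T, p.Prime)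
    (hΔ : ∀ p ∈ T, ¬ (p:ℤ) ∣ MvPolynomial.eval x (dirD z g))
    (hR : ∀ p ∈ T, ∀ y ∈ C, RelP p x y) : (∏ p ∈ T, p) ≤ (n+1).factorial * b := by
  classical
  have hx0Q : coeQ x ≠ 0 := by
    intro h; apply hx0; ext i
    have := congrFun h i
    simpa [coeQ] using this
  have hli : LinearIndepOn ℚ (coeQ (n := n+1)) {x} := by
    rw [linearIndepOn_singleton_iff]; exact hx0Q
  obtain ⟨bb, hbC, hxb, hspan, hlib⟩ := exists_linearIndepOn_extension hli (Set.singleton_subset_iff.mpr hx)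
  have hlib' : LinearIndependent ℚ (fun i : bb => coeQ (i : Fin (n+1) → ℤ)) := hlib
  have : Finite bb := hlib'.finite
  have : Fintype bb := Fintype.ofFinite _
  let v : bb → Fin (n+1) → ℤ := fun i => i
  let i₀ : bb := ⟨x, hxb rfl⟩
  have hcard : Fintype.card bb ≤ n+1 := by
    simpa using hlib'.fintype_card_le_finrank
  have hcard1 : 1 ≤ Fintype.card bb := Fintype.card_pos_iff.mpr ⟨i₀⟩
  obtain ⟨s, hs⟩ := exists_minor_int v hlib'
  set k := Fintype.card bb
  have hdiv : ((∏ p ∈ T, p : ℕ) : ℤ)^k ∣ (Matrix.of fun i j => v i (s j)).det := by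
    apply prod_pow_dvd T hT
    intro p hp
    have hpp : Prime (p:ℤ) := Nat.prime_iff_prime_int.mp (hT p hp)
    obtain ⟨W, l, h0, hl, h1⟩ := rel_rows p v i₀ (fun j => hR p hp j (hbC j.2))
    rw [det_rows_mod (p:ℤ) v W i₀ l h0 h1 s]
    have hk : k = (k-1)+1 := by omega
    have h2 : (p:ℤ) ∣ (Matrix.of fun i j => W i (s j)).det *
        ∑ i, z i * MvPolynomial.eval x (MvPolynomial.pderiv i g) := by
      apply cramer_dvd
      · have hle : Submodule.span ℚ (coeQ '' C) ≤ Submodule.span ℚ (Set.range fun i => coeQ (W i)) := by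
          rw [Submodule.span_le]
          refine hspan.trans ?_
          have : Submodule.span ℚ (coeQ '' bb) ≤ Submodule.span ℚ (Set.range fun i => coeQ (W i)) := by
            rw [Submodule.span_le]
            rintro _ ⟨y, hy, rfl⟩
            have hmem : ∀ j, coeQ (W j) ∈ Submodule.span ℚ (Set.range fun i => coeQ (W i)) :=
              fun j => Submodule.subset_span ⟨j, rfl⟩
            by_cases hj : (⟨y, hy⟩ : bb) = i₀
            · have : y = W i₀ := by rw [← h0, ← hj]
              rw [this]; exact hmem i₀
            · have : coeQ y = (l ⟨y,hy⟩ : ℚ) • coeQ (W i₀) + (p : ℚ) • coeQ (W ⟨y, hy⟩) := by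
                ext i
                have := h1 _ hj i
                simp only [v] at this
                simp [coeQ, this]
              rw [this]
              exact Submodule.add_mem _ (Submodule.smul_mem _ _ (hmem _)) (Submodule.smul_mem _ _ (hmem _))
          exact this
        exact hle hz
      · intro j
        by_cases hj : j = i₀
        · subst hj
          rw [← h0]
          change (p:ℤ) ∣ ∑ i, x i * _
          rw [euler_eval x hg, hgC x hx]; simp
        · exact tangency hpp (hl j hj) x (v j) (W j) (fun i => by rw [h1 j hj i, ← h0]) hg (hgC x hx) (hgC _ (hbC j.2))
    rw [← eval_dirD] at h2
    have h3 := (hpp.dvd_or_dvd h2).resolve_right (hΔ p hp)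
    conv_lhs => rw [hk, pow_succ]
    exact mul_dvd_mul_left _ h3
  have hle := Int.le_of_dvd (abs_pos.mpr hs) ((dvd_abs _ _).mpr hdiv)
  have hbd := det_bound (Matrix.of fun i j => v i (s j)) b (fun i j => hb _ (hbC i.2) _)
  have h4 : (∏ p ∈ T, p)^k ≤ k.factorial * b^k := by exact_mod_cast hle.trans hbd
  have h5 : k.factorial * b^k ≤ ((n+1).factorial * b)^k := by
    rw [mul_pow]
    gcongr
    calc k.factorial ≤ (n+1).factorial := Nat.factorial_le hcard
      _ ≤ _ := Nat.le_self_pow (by omega) _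
  exact (Nat.pow_le_pow_iff_left (by omega)).mp (h4.trans h5)

theorem plucker_bound {m n : ℕ} (v : Fin (m+1) → Fin (n+1) → ℤ)
    (hv : LinearIndependent ℚ (fun i => coeQ (v i))) (b : ℕ) (hb : ∀ i j, |v i j| ≤ b)
    (T : Finset ℕ) (hT : ∀ p ∈ T, p.Prime) (hR : ∀ p ∈ T, ∀ j, RelP p (v 0) (v j))
    (hbT : b ≤ ∏ p ∈ T, p) : pluckerHeight v ≤ (n+1).factorial * b := by
  have hcard : m+1 ≤ n+1 := by simpa using hv.fintype_card_le_finrank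
  unfold pluckerHeight
  set f : (Fin (m+1) → Fin (n+1)) → ℕ := fun s => (Matrix.det (Matrix.of fun i j => v i (s j))).natAbs with hf
  have hsup : Finset.univ.sup f ≤ (m+1).factorial * b^(m+1) := by
    apply Finset.sup_le
    intro s _
    have := det_bound (Matrix.of fun i j => v i (s j)) b (fun i j => hb _ _)
    rw [Int.abs_eq_natAbs] at this
    simp only [Fintype.card_fin] at this
    exact_mod_cast this
  have hg : (∏ p ∈ T, p)^m ∣ Finset.univ.gcd f := by
    apply Finset.dvd_gcd
    intro s _
    have := minor_dvd T hT v 0 hR s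
    simp only [Fintype.card_fin, Nat.add_sub_cancel] at this
    rw [hf]
    have h2 := Int.natAbs_dvd_natAbs.mpr this
    rwa [Int.natAbs_pow, Int.natAbs_natCast] at h2
  have hg0 : Finset.univ.gcd f ≠ 0 := by
    intro h
    obtain ⟨s, hs⟩ := exists_minor_int v hv
    have := Finset.gcd_eq_zero_iff.mp h s (Finset.mem_univ _)
    exact hs (Int.natAbs_eq_zero.mp this)
  have hle := Nat.le_of_dvd (Nat.pos_of_ne_zero hg0) hg
  apply Nat.div_le_of_le_mul
  calc Finset.univ.sup f ≤ (m+1).factorial * b^(m+1) := hsup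
    _ = b^m * ((m+1).factorial * b) := by ring
    _ ≤ Finset.univ.gcd f * ((n+1).factorial * b) := by
      gcongr
      exact (Nat.pow_le_pow_left hbT m).trans hle

/-- l1 norm of an integer polynomial -/
def nrm {n : ℕ} (g : MvPolynomial (Fin (n+1)) ℤ) : ℤ := ∑ m ∈ g.support, |g.coeff m|

theorem nrm_nonneg {n : ℕ} (g : MvPolynomial (Fin (n+1)) ℤ) : 0 ≤ nrm g :=
  Finset.sum_nonneg fun _ _ => abs_nonneg _

theorem nrm_eq {n : ℕ} (g : MvPolynomial (Fin (n+1)) ℤ) (S : Finset (Fin (n+1) →₀ ℕ)) (h : g.support ⊆ S) :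
    nrm g = ∑ m ∈ S, |g.coeff m| := by
  apply Finset.sum_subset h
  intro m _ hm
  rw [MvPolynomial.notMem_support_iff.mp hm]; simp

theorem nrm_add {n : ℕ} (f g : MvPolynomial (Fin (n+1)) ℤ) : nrm (f+g) ≤ nrm f + nrm g := by
  classical
  rw [nrm_eq (f+g) (f.support ∪ g.support) MvPolynomial.support_add,
    nrm_eq f (f.support ∪ g.support) Finset.subset_union_left,
    nrm_eq g (f.support ∪ g.support) Finset.subset_union_right, ← Finset.sum_add_distrib]
  apply Finset.sum_le_sum
  intro m _
  rw [MvPolynomial.coeff_add]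
  exact abs_add_le _ _

theorem nrm_zero {n : ℕ} : nrm (0 : MvPolynomial (Fin (n+1)) ℤ) = 0 := by simp [nrm]

theorem nrm_sum {n : ℕ} {ι : Type*} (S : Finset ι) (f : ι → MvPolynomial (Fin (n+1)) ℤ) :
    nrm (∑ i ∈ S, f i) ≤ ∑ i ∈ S, nrm (f i) := by
  classical
  induction S using Finset.induction_on with
  | empty => simp [nrm_zero]
  | insert a S ha ih =>
    rw [Finset.sum_insert ha, Finset.sum_insert ha]
    exact (nrm_add _ _).trans (by linarith)

theorem nrm_monomial {n : ℕ} (m : Fin (n+1) →₀ ℕ) (c : ℤ) : nrm (MvPolynomial.monomial m c) = |c| := by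
  rw [nrm_eq _ {m} MvPolynomial.support_monomial_subset]; simp

theorem nrm_C_mul {n : ℕ} (c : ℤ) (g : MvPolynomial (Fin (n+1)) ℤ) : nrm (MvPolynomial.C c * g) = |c| * nrm g := by
  have : (MvPolynomial.C c * g).support ⊆ g.support := by
    intro m hm
    rw [MvPolynomial.mem_support_iff] at *
    rw [MvPolynomial.coeff_C_mul] at hm
    exact right_ne_zero_of_mul hm
  rw [nrm_eq _ _ this, nrm, Finset.mul_sum]
  simp only [MvPolynomial.coeff_C_mul, abs_mul]

theorem hom_sum {n e : ℕ} {R : Type*} [CommSemiring R] {g : MvPolynomial (Fin (n+1)) R} (hg : g.IsHomogeneous e)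
    {m : Fin (n+1) →₀ ℕ} (hm : m ∈ g.support) : ∑ i, m i = e := by
  have := hg (MvPolynomial.mem_support_iff.mp hm)
  rw [← this]
  simp [Finsupp.weight_apply, Finsupp.sum_fintype]

theorem nrm_pderiv {n e d : ℕ} {g : MvPolynomial (Fin (n+1)) ℤ} (hg : g.IsHomogeneous e) (hed : e ≤ d) (i : Fin (n+1)) :
    nrm (MvPolynomial.pderiv i g) ≤ d * nrm g := by
  conv_lhs => rw [g.as_sum]
  rw [map_sum]
  refine (nrm_sum _ _).trans ?_
  rw [nrm, Finset.mul_sum]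
  apply Finset.sum_le_sum
  intro m hm
  rw [MvPolynomial.pderiv_monomial, nrm_monomial, abs_mul, mul_comm]
  gcongr
  have h1 := hom_sum hg hm
  have h2 : m i ≤ ∑ i, m i := Finset.single_le_sum (fun _ _ => Nat.zero_le _) (Finset.mem_univ i)
  rw [Nat.abs_cast]
  exact_mod_cast (by omega : m i ≤ d)

theorem nrm_dirD {n e d Z : ℕ} {g : MvPolynomial (Fin (n+1)) ℤ} (hg : g.IsHomogeneous e) (hed : e ≤ d)
    (z : Fin (n+1) → ℤ) (hz : ∀ i, |z i| ≤ Z) : nrm (dirD z g) ≤ ((n+1)*Z*d : ℕ) * nrm g := by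
  unfold dirD
  refine (nrm_sum _ _).trans ?_
  have : ∀ i ∈ Finset.univ, nrm (MvPolynomial.C (z i) * MvPolynomial.pderiv i g) ≤ Z * (d * nrm g) := by
    intro i _
    rw [nrm_C_mul]
    exact mul_le_mul (hz i) (nrm_pderiv hg hed i) (nrm_nonneg _) (by positivity)
  refine (Finset.sum_le_card_nsmul _ _ _ this).trans ?_
  simp only [Finset.card_univ, Fintype.card_fin, nsmul_eq_mul]
  push_cast
  apply le_of_eq; ring

theorem nrm_dirD_iter {n d Z : ℕ} {g : MvPolynomial (Fin (n+1)) ℤ} (hg : g.IsHomogeneous d)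
    (z : Fin (n+1) → ℤ) (hz : ∀ i, |z i| ≤ Z) (j : ℕ) : nrm ((dirD z)^[j] g) ≤ (((n+1)*Z*d)^j : ℕ) * nrm g := by
  induction j with
  | zero => simp
  | succ j ih =>
    rw [Function.iterate_succ_apply']
    refine (nrm_dirD (dirD_iter_hom z hg j) (by omega : d - j ≤ d) z hz).trans ?_
    have h := mul_le_mul_of_nonneg_left ih (Int.natCast_nonneg ((n+1)*Z*d))
    refine h.trans (le_of_eq ?_)
    rw [pow_succ]; push_cast; ring

theorem eval_bound {n e d b : ℕ} (hb1 : 1 ≤ b) {g : MvPolynomial (Fin (n+1)) ℤ} (hg : g.IsHomogeneous e) (hed : e ≤ d)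
    (x : Fin (n+1) → ℤ) (hx : ∀ i, |x i| ≤ b) : |MvPolynomial.eval x g| ≤ nrm g * b^d := by
  rw [MvPolynomial.eval_eq']
  refine (Finset.abs_sum_le_sum_abs _ _).trans ?_
  rw [nrm, Finset.sum_mul]
  apply Finset.sum_le_sum
  intro m hm
  rw [abs_mul]
  gcongr
  rw [Finset.abs_prod]
  calc ∏ i, |x i ^ m i| ≤ ∏ i, (b:ℤ)^(m i) := by
        apply Finset.prod_le_prod (fun _ _ => abs_nonneg _)
        intro i _
        rw [abs_pow]
        gcongr
        exact hx i
    _ = (b:ℤ)^e := by rw [Finset.prod_pow_eq_pow_sum, hom_sum hg hm]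
    _ ≤ (b:ℤ)^d := pow_le_pow_right₀ (by exact_mod_cast hb1) hed

/-- exponents of degree d -/
def expo (n d : ℕ) : Finset (Fin (n+1) →₀ ℕ) := Finset.univ.finsuppAntidiag d

theorem mem_expo {n d : ℕ} {m : Fin (n+1) →₀ ℕ} : m ∈ expo n d ↔ ∑ i, m i = d := by
  simp [expo, Finset.mem_finsuppAntidiag]

def monZ {n : ℕ} (d : ℕ) (x : Fin (n+1) → ℤ) : expo n d → ℤ := fun α => ∏ i, x i ^ (α.1 i)

def monQ {n : ℕ} (d : ℕ) (x : Fin (n+1) → ℤ) : expo n d → ℚ := fun α => (monZ d x α : ℚ)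

theorem monZ_bound {n d b : ℕ} (x : Fin (n+1) → ℤ) (hx : ∀ i, |x i| ≤ b) (α : expo n d) : |monZ d x α| ≤ (b:ℤ)^d := by
  rw [monZ, Finset.abs_prod]
  calc ∏ i, |x i ^ α.1 i| ≤ ∏ i, (b:ℤ)^(α.1 i) := by
        apply Finset.prod_le_prod (fun _ _ => abs_nonneg _)
        intro i _
        rw [abs_pow]
        gcongr
        exact hx i
    _ = (b:ℤ)^d := by rw [Finset.prod_pow_eq_pow_sum, mem_expo.mp α.2]

def lamF {n : ℕ} (d : ℕ) (F : MvPolynomial (Fin (n+1)) KK) : (expo n d → ℚ) →ₗ[ℚ] KK where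
  toFun v := ∑ α, v α • F.coeff α.1
  map_add' u v := by simp [add_smul, Finset.sum_add_distrib]
  map_smul' c v := by simp [Finset.smul_sum, mul_smul]

theorem lamF_mon {n d : ℕ} {F : MvPolynomial (Fin (n+1)) KK} (hF : F.IsHomogeneous d) (x : Fin (n+1) → ℤ) :
    lamF d F (monQ d x) = MvPolynomial.eval (coeK x) F := by
  have hsub : F.support ⊆ expo n d := fun m hm => mem_expo.mpr (hom_sum hF hm)
  rw [MvPolynomial.eval_eq', Finset.sum_subset hsub]
  · change ∑ α, monQ d x α • F.coeff α.1 = _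
    rw [← Finset.sum_coe_sort (expo n d)]
    apply Finset.sum_congr rfl
    intro α _
    rw [Algebra.smul_def, mul_comm]
    simp [monQ, monZ, coeK]
  · intro m _ hm
    rw [MvPolynomial.notMem_support_iff.mp hm, zero_mul]

theorem exists_form {n d b : ℕ} (hb1 : 1 ≤ b) {F : MvPolynomial (Fin (n+1)) KK} (hF : F.IsHomogeneous d)
    (X : Set (Fin (n+1) → ℤ)) (hXb : ∀ x ∈ X, ∀ i, |x i| ≤ b) (hX : ∀ x ∈ X, MvPolynomial.eval (coeK x) F = 0)
    (z : Fin (n+1) → ℤ) (hz : MvPolynomial.eval (coeK z) F ≠ 0) :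
    ∃ G : MvPolynomial (Fin (n+1)) ℤ, G.IsHomogeneous d ∧ (∀ x ∈ X, MvPolynomial.eval x G = 0) ∧
      MvPolynomial.eval z G ≠ 0 ∧
      nrm G ≤ ((expo n d).card * (expo n d).card.factorial * b^(d * (expo n d).card) : ℕ) := by
  classical
  obtain ⟨r, f, hf1, hf2, hf3⟩ : ∃ (r : ℕ) (f : Fin r → expo n d → ℚ), (∀ i, f i ∈ monQ d '' X) ∧
      Submodule.span ℚ (Set.range f) = Submodule.span ℚ (monQ d '' X) ∧ LinearIndependent ℚ f :=
    ⟨_, Submodule.exists_fun_fin_finrank_span_eq ℚ (monQ d '' X)⟩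
  choose y hyX hyf using hf1
  have hker : Submodule.span ℚ (monQ d '' X) ≤ LinearMap.ker (lamF d F) := by
    rw [Submodule.span_le]
    rintro _ ⟨x, hx, rfl⟩
    rw [SetLike.mem_coe, LinearMap.mem_ker, lamF_mon hF, hX x hx]
  have hznot : monQ d z ∉ Submodule.span ℚ (Set.range f) := by
    rw [hf2]
    intro h
    have := hker h
    rw [LinearMap.mem_ker, lamF_mon hF] at this
    exact hz this
  have hli := hf3.finCons hznot
  obtain ⟨s, hs⟩ := exists_minor _ hli
  have hr : r + 1 ≤ (expo n d).card := by
    simpa using hli.fintype_card_le_finrank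
  let A : (Fin (n+1) → ℤ) → Matrix (Fin (r+1)) (Fin (r+1)) ℤ := fun u =>
    Matrix.of fun i j => monZ d ((Fin.cons u y : Fin (r+1) → Fin (n+1) → ℤ) i) (s j)
  have hAQ : ∀ u, ((A u).det : ℚ) = (Matrix.of fun i j => (Fin.cons (monQ d u) f : Fin (r+1) → expo n d → ℚ) i (s j)).det := by
    intro u
    rw [Int.cast_det]
    congr 1
    ext i j
    refine Fin.cases ?_ (fun i => ?_) i
    · simp [A, monQ]
    · simp [A, ← hyf, monQ]
  let cf : Fin (r+1) → ℤ := fun j => (-1)^(j:ℕ) * ((A z).submatrix Fin.succ j.succAbove).det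
  let G : MvPolynomial (Fin (n+1)) ℤ := ∑ j, MvPolynomial.monomial (s j).1 (cf j)
  have hGeval : ∀ u, MvPolynomial.eval u G = (A u).det := by
    intro u
    rw [Matrix.det_succ_row_zero]
    simp only [G, map_sum]
    apply Finset.sum_congr rfl
    intro j _
    rw [MvPolynomial.eval_monomial]
    have e1 : (A u).submatrix Fin.succ j.succAbove = (A z).submatrix Fin.succ j.succAbove := by
      ext a c; simp [A]
    rw [e1]
    have e2 : A u 0 j = (s j).1.prod fun i k => u i ^ k := by
      simp only [A, Matrix.of_apply, Fin.cons_zero, monZ]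
      rw [Finsupp.prod_fintype]; simp
    rw [← e2]
    simp only [cf]; ring
  refine ⟨G, ?_, ?_, ?_, ?_⟩
  · apply MvPolynomial.IsHomogeneous.sum
    intro j _
    apply MvPolynomial.isHomogeneous_monomial
    have := mem_expo.mp (s j).2
    rw [Finsupp.degree_eq_sum]
    exact this
  · intro x hx
    rw [hGeval]
    have : ((A x).det : ℚ) = 0 := by
      rw [hAQ, ← Matrix.exists_vecMul_eq_zero_iff]
      have hmem : monQ d x ∈ Submodule.span ℚ (Set.range f) := by
        rw [hf2]; exact Submodule.subset_span ⟨x, hx, rfl⟩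
      rw [Submodule.mem_span_range_iff_exists_fun] at hmem
      obtain ⟨a, ha⟩ := hmem
      refine ⟨Fin.cons (-1) a, ?_, ?_⟩
      · intro h
        have := congrFun h 0
        simp at this
      · ext j
        have := congrFun ha (s j)
        simp only [Finset.sum_apply, Pi.smul_apply, smul_eq_mul] at this
        simp [Matrix.vecMul, dotProduct, Fin.sum_univ_succ, this]
    exact_mod_cast this
  · rw [hGeval]
    intro h
    apply hs
    rw [← hAQ, h]; simp
  · refine (nrm_sum _ _).trans ?_
    have : ∀ j ∈ Finset.univ, nrm (MvPolynomial.monomial (s j).1 (cf j)) ≤ ((r.factorial * (b^d)^r : ℕ) : ℤ) := by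
      intro j _
      rw [nrm_monomial, abs_mul, abs_pow]
      simp only [abs_neg, abs_one, one_pow, one_mul]
      have := det_bound ((A z).submatrix Fin.succ j.succAbove) (b^d) (by
        intro i k
        simp only [A, Matrix.submatrix_apply, Matrix.of_apply, Fin.cons_succ]
        have := monZ_bound (y i) (hXb _ (hyX i)) (s (j.succAbove k))
        exact_mod_cast this)
      simpa using this
    refine (Finset.sum_le_card_nsmul _ _ _ this).trans ?_
    simp only [Finset.card_univ, Fintype.card_fin, nsmul_eq_mul]
    rw [← Nat.cast_mul]
    norm_cast
    rw [← mul_assoc, ← pow_mul]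
    gcongr
    · omega
    · omega

theorem choose_z {n d b k : ℕ} {F : MvPolynomial (Fin (n+1)) KK} (hF : F.IsHomogeneous d)
    (v : Fin k → Fin (n+1) → ℤ) (hv : ∀ i j, |v i j| ≤ b)
    (w : Fin (n+1) → ℚ) (hw : w ∈ Submodule.span ℚ (Set.range fun i => coeQ (v i)))
    (hwF : MvPolynomial.eval (fun i => algebraMap ℚ KK (w i)) F ≠ 0) :
    ∃ z : Fin (n+1) → ℤ, coeQ z ∈ Submodule.span ℚ (Set.range fun i => coeQ (v i)) ∧
      MvPolynomial.eval (coeK z) F ≠ 0 ∧ ∀ j, |z j| ≤ (k * d * b : ℕ) := by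
  classical
  let lin : Fin (n+1) → MvPolynomial (Fin k) KK := fun j => ∑ i, MvPolynomial.C ((v i j : ℤ) : KK) * MvPolynomial.X i
  let H : MvPolynomial (Fin k) KK := MvPolynomial.bind₁ lin F
  have hHhom : H.IsHomogeneous d := by
    have := hF.aeval lin (n := 1) (fun j => by
      apply MvPolynomial.IsHomogeneous.sum
      intro i _
      simpa using (MvPolynomial.isHomogeneous_C (Fin k) ((v i j : ℤ) : KK)).mul (MvPolynomial.isHomogeneous_X KK i))
    rw [one_mul] at this
    exact this
  have hHeval : ∀ u : Fin k → KK, MvPolynomial.eval u H = MvPolynomial.eval (fun j => ∑ i, ((v i j : ℤ) : KK) * u i) F := by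
    intro u
    simp only [H]
    rw [MvPolynomial.eval, MvPolynomial.eval₂Hom_bind₁]
    congr 2
    ext j
    simp [lin]
  have hH0 : H ≠ 0 := by
    intro h0
    rw [Submodule.mem_span_range_iff_exists_fun] at hw
    obtain ⟨a, ha⟩ := hw
    apply hwF
    have := hHeval (fun i => algebraMap ℚ KK (a i))
    rw [h0, map_zero] at this
    rw [this]
    congr 2
    ext j
    rw [← ha]
    simp [coeQ, mul_comm]
  by_contra hcon
  push Not at hcon
  apply hH0
  apply MvPolynomial.eq_zero_of_eval_zero_at_prod_finset H (fun _ => (Finset.range (d+1)).image (fun m : ℕ => (m : KK)))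
  · intro i
    rw [Finset.card_image_of_injective _ Nat.cast_injective, Finset.card_range]
    have h1 := H.degreeOf_le_totalDegree i
    rw [hHhom.totalDegree hH0] at h1
    omega
  · intro u hu
    simp only [Finset.mem_image, Finset.mem_range] at hu
    choose c hc hcu using hu
    rw [hHeval]
    by_contra hne
    let z : Fin (n+1) → ℤ := fun j => ∑ i, v i j * c i
    have hz : coeK z = fun j => ∑ i, ((v i j : ℤ) : KK) * u i := by
      ext j; simp [coeK, z, ← hcu]
    obtain ⟨j, hj⟩ := hcon z (by
      have : coeQ z = ∑ i, (c i : ℚ) • coeQ (v i) := by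
        ext j; simp [coeQ, z, mul_comm]
      rw [this]
      exact Submodule.sum_mem _ fun i _ => Submodule.smul_mem _ _ (Submodule.subset_span ⟨i, rfl⟩)) (by rw [hz]; exact hne)
    apply absurd hj
    push Not
    refine (Finset.abs_sum_le_sum_abs _ _).trans ?_
    have : ∀ i ∈ Finset.univ, |v i j * (c i : ℤ)| ≤ (b:ℤ) * d := by
      intro i _
      rw [abs_mul, Nat.abs_cast]
      have := hc i
      have h2 : ((c i : ℕ) : ℤ) ≤ d := by exact_mod_cast (by omega : c i ≤ d)
      exact mul_le_mul (hv i j) h2 (by positivity) (by positivity)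
    refine (Finset.sum_le_card_nsmul _ _ _ this).trans ?_
    simp only [Finset.card_univ, Fintype.card_fin, nsmul_eq_mul]
    push_cast
    apply le_of_eq; ring

def spanQ {n : ℕ} (C : Set (Fin (n+1) → ℤ)) : Submodule ℚ (Fin (n+1) → ℚ) := Submodule.span ℚ (coeQ '' C)

theorem spanQ_mono {n : ℕ} {C D : Set (Fin (n+1) → ℤ)} (h : C ⊆ D) : spanQ C ≤ spanQ D :=
  Submodule.span_mono (Set.image_mono h)

theorem finrank_le_n {n : ℕ} (M : Submodule ℚ (Fin (n+1) → ℚ)) : Module.finrank ℚ M ≤ n+1 := by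
  simpa using M.finrank_le

def Van {n : ℕ} (F : MvPolynomial (Fin (n+1)) KK) (M : Submodule ℚ (Fin (n+1) → ℚ)) : Prop :=
  ∀ w ∈ M, MvPolynomial.eval (fun i => algebraMap ℚ KK (w i)) F = 0

def cA (n d : ℕ) : ℕ := ((n+1)*(n+1)*d*d + 1)^d * ((expo n d).card * (expo n d).card.factorial) + 1
def aA (n d : ℕ) : ℕ := d + d * (expo n d).card + d

/-- an integral basis of the span taken from the set itself -/
theorem exists_basis {n : ℕ} (D : Set (Fin (n+1) → ℤ)) : ∃ (k : ℕ) (v : Fin k → Fin (n+1) → ℤ),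
    k = Module.finrank ℚ (spanQ D) ∧ (∀ i, v i ∈ D) ∧ LinearIndependent ℚ (fun i => coeQ (v i)) ∧
    Submodule.span ℚ (Set.range fun i => coeQ (v i)) = spanQ D := by
  obtain ⟨f, hf1, hf2, hf3⟩ := Submodule.exists_fun_fin_finrank_span_eq ℚ (coeQ '' D)
  choose v hv hvf using hf1
  have : (fun i => coeQ (v i)) = f := funext hvf
  exact ⟨_, v, rfl, hv, by rw [this]; exact hf3, by rw [this]; exact hf2⟩

theorem tangent_data {n d b : ℕ} (hb1 : 1 ≤ b) {F : MvPolynomial (Fin (n+1)) KK} (hF : F.IsHomogeneous d)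
    (X : Set (Fin (n+1) → ℤ)) (hXb : ∀ x ∈ X, ∀ i, |x i| ≤ b) (hX : ∀ x ∈ X, MvPolynomial.eval (coeK x) F = 0)
    (D : Set (Fin (n+1) → ℤ)) (hD : D ⊆ X) (hV : ¬ Van F (spanQ D)) :
    ∃ (G : MvPolynomial (Fin (n+1)) ℤ) (z : Fin (n+1) → ℤ), G.IsHomogeneous d ∧
      (∀ x ∈ X, MvPolynomial.eval x G = 0) ∧ MvPolynomial.eval z G ≠ 0 ∧ coeQ z ∈ spanQ D ∧
      ∀ x ∈ X, ∀ j ≤ d, |MvPolynomial.eval x ((dirD z)^[j] G)| ≤ (cA n d * b^(aA n d) : ℕ) := by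
  obtain ⟨k, v, hk, hvD, hli, hspan⟩ := exists_basis D
  unfold Van at hV
  push Not at hV
  obtain ⟨w, hw, hwF⟩ := hV
  obtain ⟨z, hz1, hz2, hz3⟩ := choose_z (b := b) hF v (fun i j => hXb _ (hD (hvD i)) j) w (by rw [hspan]; exact hw) hwF
  obtain ⟨G, hG1, hG2, hG3, hG4⟩ := exists_form hb1 hF X hXb hX z hz2
  refine ⟨G, z, hG1, hG2, hG3, by rw [← hspan]; exact hz1, ?_⟩
  intro x hx j hj
  have h1 := eval_bound hb1 (dirD_iter_hom z hG1 j) (by omega : d - j ≤ d) x (hXb x hx)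
  have h2 := nrm_dirD_iter hG1 z hz3 j
  have hkn : k ≤ n+1 := by rw [hk]; exact finrank_le_n _
  have h3 : ((n+1)*(k*d*b)*d)^j ≤ ((n+1)*(n+1)*d*d + 1)^d * b^d := by
    rw [← mul_pow]
    calc ((n+1)*(k*d*b)*d)^j ≤ (((n+1)*(n+1)*d*d + 1) * b)^j := by
          apply Nat.pow_le_pow_left
          calc (n+1)*(k*d*b)*d ≤ (n+1)*((n+1)*d*b)*d := by gcongr
            _ = ((n+1)*(n+1)*d*d) * b := by ring
            _ ≤ _ := by gcongr; omega
      _ ≤ _ := Nat.pow_le_pow_right (Nat.mul_pos (by omega) hb1) hj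
  set E := (expo n d).card
  have hN := nrm_nonneg G
  calc |MvPolynomial.eval x ((dirD z)^[j] G)| ≤ nrm ((dirD z)^[j] G) * b^d := h1
    _ ≤ ((((n+1)*(k*d*b)*d)^j : ℕ) * nrm G) * b^d := by gcongr
    _ ≤ (((((n+1)*(n+1)*d*d + 1)^d * b^d : ℕ) : ℤ) * ((E * E.factorial * b^(d * E) : ℕ):ℤ)) * b^d := by
        gcongr
    _ = ((((n+1)*(n+1)*d*d + 1)^d * (E * E.factorial) * b^(aA n d) : ℕ) : ℤ) := by
        simp only [aA, pow_add]; push_cast; ring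
    _ ≤ _ := by
        unfold cA
        apply Int.ofNat_le.mpr
        exact Nat.mul_le_mul_right _ (Nat.le_succ _)

theorem exists_tau_M {n d b : ℕ} (hb1 : 1 ≤ b) {F : MvPolynomial (Fin (n+1)) KK} (hF : F.IsHomogeneous d)
    (X : Set (Fin (n+1) → ℤ)) (hXb : ∀ x ∈ X, ∀ i, |x i| ≤ b) (hX : ∀ x ∈ X, MvPolynomial.eval (coeK x) F = 0)
    (hX0 : ∀ x ∈ X, x ≠ 0) (M : Submodule ℚ (Fin (n+1) → ℚ)) :
    ∃ (τ : (Fin (n+1) → ℤ) → ℕ) (Δ : (Fin (n+1) → ℤ) → ℤ), (∀ y, τ y ≤ d) ∧ (Van F M → ∀ y, τ y = 0) ∧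
      (∀ y ∈ X, Δ y ≠ 0 ∧ |Δ y| ≤ (cA n d * b^(aA n d) : ℕ)) ∧
      (∀ C ⊆ X, spanQ C = M → ¬ Van F M → ∀ x ∈ C, spanQ {y ∈ C | τ y = τ x} = M →
        ∀ T : Finset ℕ, (∀ p ∈ T, p.Prime) → (∀ p ∈ T, ¬ (p:ℤ) ∣ Δ x) → (∀ p ∈ T, ∀ y ∈ C, RelP p x y) →
        ∏ p ∈ T, p ≤ (n+1).factorial * b) := by
  classical
  by_cases h : (∃ D ⊆ X, spanQ D = M) ∧ ¬ Van F M
  · obtain ⟨⟨D, hDX, rfl⟩, hV⟩ := h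
    obtain ⟨G, z, hG1, hG2, hG3, hG4, hG5⟩ := tangent_data hb1 hF X hXb hX D hDX hV
    have htop : ∀ y, MvPolynomial.eval y ((dirD z)^[d] G) ≠ 0 := by
      intro y
      rw [dirD_iter_top z d hG1, MvPolynomial.eval_C]
      exact mul_ne_zero (by exact_mod_cast Nat.factorial_ne_zero d) hG3
    have hex : ∀ y, ∃ j, MvPolynomial.eval y ((dirD z)^[j] G) ≠ 0 := fun y => ⟨d, htop y⟩
    have hled : ∀ y, Nat.find (hex y) ≤ d := fun y => Nat.find_min' _ (htop y)
    refine ⟨fun y => Nat.find (hex y), fun y => MvPolynomial.eval y ((dirD z)^[Nat.find (hex y)] G), hled,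
      fun h => absurd h hV, fun y hy => ⟨Nat.find_spec (hex y), hG5 y hy _ (hled y)⟩, ?_⟩
    intro C hC hCM _ x hx hspan T hT hΔ hR
    set a := Nat.find (hex x) with ha
    have ha1 : a ≠ 0 := by
      intro h0
      have := Nat.find_spec (hex x)
      rw [← ha, h0] at this
      exact this (hG2 x (hC hx))
    obtain ⟨a', ha'⟩ := Nat.exists_eq_succ_of_ne_zero ha1
    refine key_lemma {y ∈ C | Nat.find (hex y) = a} x ⟨hx, rfl⟩ (hX0 x (hC hx)) b (fun y hy => hXb y (hC hy.1))
      ((dirD z)^[a'] G) (dirD_iter_hom z hG1 a') ?_ z ?_ T hT ?_ (fun p hp y hy => hR p hp y hy.1)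
    · intro y hy
      by_contra hne
      have := Nat.find_min' (hex y) hne
      have h2 := hy.2
      omega
    · change coeQ z ∈ spanQ _
      rw [hspan]; exact hG4
    · intro p hp
      have : ¬ (p:ℤ) ∣ MvPolynomial.eval x ((dirD z)^[a] G) := hΔ p hp
      rw [ha', Function.iterate_succ_apply'] at this
      exact this
  · refine ⟨fun _ => 0, fun _ => 1, fun _ => Nat.zero_le _, fun _ _ => rfl, fun y _ => ⟨one_ne_zero, ?_⟩, ?_⟩
    · have : 1 ≤ cA n d * b^(aA n d) := Nat.mul_pos (by unfold cA; omega) (Nat.pow_pos hb1)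
      rw [abs_one]; exact_mod_cast this
    · intro C hC hCM hV
      exact absurd ⟨⟨C, hC, hCM⟩, hV⟩ h

section Rec
variable {n : ℕ} (d : ℕ) (τ : Submodule ℚ (Fin (n+1) → ℚ) → (Fin (n+1) → ℤ) → ℕ)
  (Δ : Submodule ℚ (Fin (n+1) → ℚ) → (Fin (n+1) → ℤ) → ℤ) (x : Fin (n+1) → ℤ) (P : Finset ℕ)

def stepA (a : ℕ) (C : Set (Fin (n+1) → ℤ)) : Set (Fin (n+1) → ℤ) := {y ∈ C | τ (spanQ C) y = a}

def Phi : ℕ → Set (Fin (n+1) → ℤ) → ℕ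
  | 0, _ => 0
  | f+1, C => Module.finrank ℚ (spanQ C) * (n+2)^f + Phi f (stepA τ (τ (spanQ C) x) C)

open Classical in
def badf : ℕ → Set (Fin (n+1) → ℤ) → Finset ℕ
  | 0, _ => ∅
  | f+1, C => (P.filter fun p => (p:ℤ) ∣ Δ (spanQ C) x) ∪ badf f (stepA τ (τ (spanQ C) x) C)

def desc : ℕ → ℕ → Set (Fin (n+1) → ℤ) → Set (Fin (n+1) → ℤ)
  | 0, _, C => C
  | f+1, a, C => desc f (a / (d+1)) (stepA τ (a % (d+1)) C)

theorem Phi_lt (f : ℕ) : ∀ C, Phi τ x f C < (n+2)^f := by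
  induction f with
  | zero => intro C; simp [Phi]
  | succ f ih =>
    intro C
    have h1 := ih (stepA τ (τ (spanQ C) x) C)
    have h2 := finrank_le_n (spanQ C)
    simp only [Phi]
    have h3 := Nat.mul_le_mul_right ((n+2)^f) h2
    rw [pow_succ]
    nlinarith

theorem Phi_mono (f : ℕ) : ∀ C1 C2, C1 ⊆ C2 → Phi τ x f C1 ≤ Phi τ x f C2 ∧
    (Phi τ x f C1 = Phi τ x f C2 → badf τ Δ x P f C1 = badf τ Δ x P f C2) := by
  induction f with
  | zero => intro C1 C2 _; simp [Phi, badf]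
  | succ f ih =>
    intro C1 C2 h
    have hle := spanQ_mono h
    have hfr := Submodule.finrank_mono hle
    rcases hfr.lt_or_eq with hlt | heq
    · have : Phi τ x (f+1) C1 < Phi τ x (f+1) C2 := by
        simp only [Phi]
        have h1 := Phi_lt τ x f (stepA τ (τ (spanQ C1) x) C1)
        have h3 := Nat.mul_le_mul_right ((n+2)^f) (Nat.succ_le_of_lt hlt)
        rw [Nat.succ_mul] at h3
        omega
      exact ⟨this.le, fun h => absurd h this.ne⟩
    · have hs : spanQ C1 = spanQ C2 := Submodule.eq_of_le_of_finrank_eq hle heq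
      have hsub : stepA τ (τ (spanQ C1) x) C1 ⊆ stepA τ (τ (spanQ C2) x) C2 := by
        rintro y ⟨hy1, hy2⟩
        exact ⟨h hy1, by rw [← hs]; exact hy2⟩
      obtain ⟨i1, i2⟩ := ih _ _ hsub
      simp only [Phi, badf]
      rw [heq]
      refine ⟨by omega, fun he => ?_⟩
      rw [i2 (by omega), hs]

theorem badf_card (m : ℕ) (hm : ∀ M, ∀ S ⊆ P, (∀ p ∈ S, ((p:ℕ):ℤ) ∣ Δ M x) → S.card ≤ m) (f : ℕ) :
    ∀ C, (badf τ Δ x P f C).card ≤ f * m := by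
  classical
  induction f with
  | zero => intro C; simp [badf]
  | succ f ih =>
    intro C
    simp only [badf]
    refine (Finset.card_union_le _ _).trans ?_
    have h2 := ih (stepA τ (τ (spanQ C) x) C)
    rw [Nat.succ_mul, add_comm]
    exact add_le_add h2 (hm (spanQ C) _ (Finset.filter_subset _ _) (fun p hp => (Finset.mem_filter.mp hp).2))

theorem desc_sub (f : ℕ) : ∀ a C, desc d τ f a C ⊆ C := by
  induction f with
  | zero => intro a C; exact subset_rfl
  | succ f ih =>
    intro a C
    exact (ih _ _).trans (fun y hy => hy.1)

theorem desc_van (f : ℕ) (C : Set (Fin (n+1) → ℤ)) (h : ∀ y, τ (spanQ C) y = 0) : desc d τ f 0 C = C := by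
  induction f with
  | zero => rfl
  | succ f ih =>
    have : stepA τ 0 C = C := by
      ext y; simp [stepA, h]
    simp only [desc, Nat.zero_div, Nat.zero_mod, this, ih]

theorem desc_exists {b : ℕ} (F : MvPolynomial (Fin (n+1)) KK) (X : Set (Fin (n+1) → ℤ)) (hX0 : ∀ x ∈ X, x ≠ 0)
    (h1 : ∀ M y, τ M y ≤ d) (h2 : ∀ M, Van F M → ∀ y, τ M y = 0)
    (h4 : ∀ M, ∀ C ⊆ X, spanQ C = M → ¬ Van F M → ∀ x ∈ C, spanQ {y ∈ C | τ M y = τ M x} = M →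
        ∀ T : Finset ℕ, (∀ p ∈ T, p.Prime) → (∀ p ∈ T, ¬ (p:ℤ) ∣ Δ M x) → (∀ p ∈ T, ∀ y ∈ C, RelP p x y) →
        ∏ p ∈ T, p ≤ (n+1).factorial * b)
    (T : Finset ℕ) (hTP : T ⊆ P) (hT : ∀ p ∈ T, p.Prime) (f : ℕ) : ∀ C ⊆ X, x ∈ C → (∀ p ∈ T, ∀ y ∈ C, RelP p x y) →
      Module.finrank ℚ (spanQ C) ≤ f → (n+1).factorial * b < ∏ p ∈ T \ badf τ Δ x P f C, p →
      ∃ a < (d+1)^f, Van F (spanQ (desc d τ f a C)) ∧ x ∈ desc d τ f a C := by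
  classical
  induction f with
  | zero =>
    intro C hC hx _ hr _
    exfalso
    have h0 : spanQ C = ⊥ := Submodule.finrank_eq_zero.mp (by omega)
    have : coeQ x ∈ spanQ C := Submodule.subset_span ⟨x, hx, rfl⟩
    rw [h0, Submodule.mem_bot] at this
    apply hX0 x (hC hx)
    ext i
    have := congrFun this i
    simpa [coeQ] using this
  | succ f ih =>
    intro C hC hx hR hr hprod
    have hprodle : ∀ S1 S2 : Finset ℕ, S1 ⊆ S2 → S2 ⊆ T → ∏ p ∈ S1, p ≤ ∏ p ∈ S2, p := by
      intro S1 S2 hS hS2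
      exact Finset.prod_le_prod_of_subset_of_one_le' hS (fun p hp _ => (hT p (hS2 hp)).one_le)
    by_cases hV : Van F (spanQ C)
    · refine ⟨0, by positivity, ?_⟩
      rw [desc_van d τ (f+1) C (h2 _ hV)]
      exact ⟨hV, hx⟩
    · set C' := stepA τ (τ (spanQ C) x) C with hC'
      have hC'C : C' ⊆ C := fun y hy => hy.1
      have hxC' : x ∈ C' := ⟨hx, rfl⟩
      by_cases hs : spanQ C' = spanQ C
      · exfalso
        have := h4 _ C hC rfl hV x hx hs (T.filter fun p => ¬ (p:ℤ) ∣ Δ (spanQ C) x)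
          (fun p hp => hT p (Finset.mem_filter.mp hp).1) (fun p hp => (Finset.mem_filter.mp hp).2)
          (fun p hp => hR p (Finset.mem_filter.mp hp).1)
        have h5 := hprodle (T \ badf τ Δ x P (f+1) C) (T.filter fun p => ¬ (p:ℤ) ∣ Δ (spanQ C) x) (by
          intro p hp
          rw [Finset.mem_sdiff] at hp
          rw [Finset.mem_filter]
          refine ⟨hp.1, fun hd => hp.2 ?_⟩
          simp only [badf]
          exact Finset.mem_union_left _ (Finset.mem_filter.mpr ⟨hTP hp.1, hd⟩)) (Finset.filter_subset _ _)
        omega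
      · have hlt : Module.finrank ℚ (spanQ C') < Module.finrank ℚ (spanQ C) :=
          Submodule.finrank_lt_finrank_of_lt (lt_of_le_of_ne (spanQ_mono hC'C) hs)
        obtain ⟨a', ha', hv', hx'⟩ := ih C' (hC'C.trans hC) hxC' (fun p hp y hy => hR p hp y (hC'C hy)) (by omega)
          (lt_of_lt_of_le hprod (hprodle _ _ (by
            intro p hp
            rw [Finset.mem_sdiff] at hp ⊢
            refine ⟨hp.1, fun hd => hp.2 ?_⟩
            simp only [badf]
            exact Finset.mem_union_right _ hd) Finset.sdiff_subset))
        have hτ := h1 (spanQ C) x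
        have hmod : (τ (spanQ C) x + (d+1) * a') % (d+1) = τ (spanQ C) x := by
          rw [Nat.add_mul_mod_self_left]; exact Nat.mod_eq_of_lt (by omega)
        have hdiv : (τ (spanQ C) x + (d+1) * a') / (d+1) = a' := by
          rw [Nat.add_mul_div_left _ _ (by omega), Nat.div_eq_of_lt (by omega), zero_add]
        refine ⟨τ (spanQ C) x + (d+1) * a', ?_, ?_⟩
        · rw [pow_succ]
          have := Nat.mul_le_mul_left (d+1) (Nat.succ_le_of_lt ha')
          rw [Nat.mul_succ] at this
          rw [mul_comm ((d+1)^f)]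
          omega
        · simp only [desc, hmod, hdiv]
          exact ⟨hv', hx'⟩
end Rec

theorem exists_int_ne {n : ℕ} {F : MvPolynomial (Fin (n+1)) KK} (hF : F ≠ 0) :
    ∃ z : Fin (n+1) → ℤ, MvPolynomial.eval (coeK z) F ≠ 0 := by
  by_contra! h
  apply hF
  apply MvPolynomial.funext_set (fun _ => Set.range (fun k : ℤ => (k : KK)))
    (fun _ => Set.infinite_range_of_injective Int.cast_injective)
  intro x hx
  rw [map_zero]
  have hx' : ∀ i, ∃ k : ℤ, (k : KK) = x i := fun i => hx i (Set.mem_univ i)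
  choose z hz using hx'
  have : coeK z = x := funext hz
  rw [← this]; exact h z

theorem van_ne_top {n : ℕ} {F : MvPolynomial (Fin (n+1)) KK} (hF : F ≠ 0)
    {M : Submodule ℚ (Fin (n+1) → ℚ)} (hV : Van F M) : Module.finrank ℚ M ≤ n := by
  by_contra hlt
  have hfr : Module.finrank ℚ M = Module.finrank ℚ (Fin (n+1) → ℚ) := by
    have := finrank_le_n M
    simp; omega
  have htop : M = ⊤ := Submodule.eq_top_of_finrank_eq hfr
  obtain ⟨z, hz⟩ := exists_int_ne hF
  apply hz
  have := hV (coeQ z) (by rw [htop]; trivial)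
  have e : (fun i => algebraMap ℚ KK (coeQ z i)) = coeK z := by
    funext i; simp [coeQ, coeK]
  rw [← e]; exact this

theorem exists_prim_form {n d p : ℕ} (hp : p.Prime) (X : Set (Fin (n+1) → ℤ)) (m : Fin (n+1) →₀ ℕ) (N : ℕ) :
    ∀ G : MvPolynomial (Fin (n+1)) ℤ, G.IsHomogeneous d → (∀ x ∈ X, MvPolynomial.eval x G = 0) →
      (G.coeff m).natAbs = N → N ≠ 0 →
    ∃ G' : MvPolynomial (Fin (n+1)) ℤ, G'.IsHomogeneous d ∧ (∀ x ∈ X, MvPolynomial.eval x G' = 0) ∧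
      MvPolynomial.map (Int.castRingHom (ZMod p)) G' ≠ 0 := by
  induction N using Nat.strong_induction_on with
  | _ N ih =>
    intro G hG hX hm hN
    by_cases h0 : MvPolynomial.map (Int.castRingHom (ZMod p)) G = 0
    · rw [← MvPolynomial.C_dvd_iff_zmod] at h0
      obtain ⟨G', rfl⟩ := h0
      have hpz : (p:ℤ) ≠ 0 := by exact_mod_cast hp.ne_zero
      rw [MvPolynomial.coeff_C_mul, Int.natAbs_mul, Int.natAbs_natCast] at hm
      have hm0 : (G'.coeff m).natAbs ≠ 0 := by rintro h; rw [h] at hm; simp at hm; omega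
      refine ih _ ?_ G' ?_ ?_ rfl hm0
      · rw [← hm]
        have := hp.two_le
        nlinarith [Nat.pos_of_ne_zero hm0]
      · intro k hk
        apply hG
        rw [MvPolynomial.coeff_C_mul]
        exact mul_ne_zero hpz hk
      · intro x hx
        have := hX x hx
        rw [map_mul, MvPolynomial.eval_C] at this
        exact (mul_eq_zero.mp this).resolve_left hpz
    · exact ⟨G, hG, hX, h0⟩

theorem eval_smul_gen {R : Type*} [CommRing R] {σ : Type*} [Fintype σ] {f : MvPolynomial σ R} {d : ℕ}
    (hf : f.IsHomogeneous d) (a : R) (v : σ → R) :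
    MvPolynomial.eval (a • v) f = a^d * MvPolynomial.eval v f := by
  rw [MvPolynomial.eval_eq', MvPolynomial.eval_eq', Finset.mul_sum]
  apply Finset.sum_congr rfl
  intro m hm
  have h1 := hf (MvPolynomial.mem_support_iff.mp hm)
  have h2 : ∑ i, m i = d := by
    rw [← h1, Finsupp.weight_apply, Finsupp.sum_fintype] <;> simp
  simp only [Pi.smul_apply, smul_eq_mul, mul_pow, Finset.prod_mul_distrib, Finset.prod_pow_eq_pow_sum, h2]
  ring

theorem zeros_count {n d p : ℕ} (hn : 1 ≤ n) [Fact p.Prime] {f : MvPolynomial (Fin (n+1)) (ZMod p)}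
    (hf : f ≠ 0) (hd : f.IsHomogeneous d)
    (Z : Finset (Projectivization (ZMod p) (Fin (n+1) → ZMod p)))
    (hZ : ∀ l ∈ Z, MvPolynomial.eval l.rep f = 0) : Z.card ≤ 2 * d * p^(n-1) := by
  classical
  have hp := (Fact.out : p.Prime)
  have hsz := MvPolynomial.schwartz_zippel_totalDegree hf (Finset.univ : Finset (ZMod p))
  set W := {g ∈ Fintype.piFinset fun _ : Fin (n+1) => (Finset.univ : Finset (ZMod p)) | MvPolynomial.eval g f = 0} with hW
  have hWc : W.card ≤ d * p^n := by
    have hp0 : (0:ℚ≥0) < p := by exact_mod_cast hp.pos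
    have htd : (f.totalDegree : ℚ≥0) ≤ d := by exact_mod_cast hd.totalDegree_le
    rw [Finset.card_univ, ZMod.card, div_le_div_iff₀ (by positivity) hp0, pow_succ, ← mul_assoc] at hsz
    have h2 := le_of_mul_le_mul_right hsz hp0
    have h3 : (W.card : ℚ≥0) ≤ d * p^n := h2.trans (by gcongr)
    exact_mod_cast h3
  have hinj : (Z ×ˢ (Finset.univ : Finset (ZMod p)ˣ)).card ≤ W.card := by
    apply Finset.card_le_card_of_injOn (fun q => (q.2 : ZMod p) • q.1.rep)
    · rintro ⟨l, u⟩ hq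
      have hq' : l ∈ Z := (Finset.mem_product.mp hq).1
      simp only [hW, Finset.coe_filter, Set.mem_ofPred_eq, Fintype.mem_piFinset, Finset.mem_univ, implies_true, true_and]
      rw [eval_smul_gen hd, hZ l hq', mul_zero]
    · rintro ⟨l, u⟩ _ ⟨l', u'⟩ _ h
      simp only at h
      have hl : l = l' := by
        rw [← l.mk_rep, ← l'.mk_rep, Projectivization.mk_eq_mk_iff]
        refine ⟨u⁻¹ * u', ?_⟩
        rw [mul_smul]
        change (u⁻¹ : (ZMod p)ˣ) • ((u' : ZMod p) • l'.rep) = _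
        rw [← h]
        exact inv_smul_smul u l.rep
      subst hl
      have := smul_left_injective (ZMod p) l.rep_nonzero h
      rw [Units.ext this]
  rw [Finset.card_product, Finset.card_univ, ZMod.card_units] at hinj
  have h2 := hp.two_le
  obtain ⟨n', rfl⟩ : ∃ n', n = n'+1 := ⟨n-1, by omega⟩
  obtain ⟨q, rfl⟩ : ∃ q, p = q+1 := ⟨p-1, by omega⟩
  simp only [Nat.add_sub_cancel] at *
  have h3 : Z.card * q ≤ d * (q+1)^n' * (q+1) := by
    rw [mul_assoc, ← pow_succ]; exact hinj.trans hWc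
  have h4 : Z.card * q ≤ (2 * d * (q+1)^n') * q := by nlinarith [Nat.zero_le (d * (q+1)^n')]
  exact Nat.le_of_mul_le_mul_right h4 (by omega)

theorem exists_label {n d p b : ℕ} (hn : 1 ≤ n) (hp : p.Prime) (hb1 : 1 ≤ b) {F : MvPolynomial (Fin (n+1)) KK}
    (hF : F.IsHomogeneous d) (hF0 : F ≠ 0)
    (X : Set (Fin (n+1) → ℤ)) (hXb : ∀ x ∈ X, ∀ i, |x i| ≤ b) (hX : ∀ x ∈ X, MvPolynomial.eval (coeK x) F = 0)
    (hXp : ∀ x ∈ X, IsPrimitiveVec x) :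
    ∃ c : (Fin (n+1) → ℤ) → ℕ, (∀ x ∈ X, c x < 2 * d * p^(n-1)) ∧ ∀ x ∈ X, ∀ y ∈ X, c x = c y → RelP p x y := by
  classical
  have : Fact p.Prime := ⟨hp⟩
  have := Fintype.ofFinite (Projectivization (ZMod p) (Fin (n+1) → ZMod p))
  obtain ⟨z, hz⟩ := exists_int_ne hF0
  obtain ⟨G0, hG0, hGX0, hGz, -⟩ := exists_form hb1 hF X hXb hX z hz
  have hG00 : G0 ≠ 0 := by rintro rfl; simp at hGz
  obtain ⟨m, hm⟩ := MvPolynomial.ne_zero_iff.mp hG00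
  obtain ⟨G, hG, hGX, hGp⟩ := exists_prim_form hp X m _ G0 hG0 hGX0 rfl (by simpa using hm)
  set f := MvPolynomial.map (Int.castRingHom (ZMod p)) G with hf
  have hfh : f.IsHomogeneous d := hG.map _
  let red : (Fin (n+1) → ℤ) → (Fin (n+1) → ZMod p) := fun x i => (x i : ZMod p)
  have hred : ∀ x ∈ X, red x ≠ 0 := by
    intro x hx h0
    have : (p:ℤ) ∣ Finset.univ.gcd x := by
      apply Finset.dvd_gcd
      intro i _
      exact (ZMod.intCast_zmod_eq_zero_iff_dvd _ _).mp (congrFun h0 i)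
    rw [hXp x hx] at this
    exact hp.one_lt.ne' (by exact_mod_cast Int.eq_one_of_dvd_one (by positivity) this)
  have hsm : ∀ (a : ZMod p) v, MvPolynomial.eval (a • v) f = a^d * MvPolynomial.eval v f := eval_smul_gen hfh
  let Z : Finset (Projectivization (ZMod p) (Fin (n+1) → ZMod p)) :=
    Finset.univ.filter fun l => MvPolynomial.eval l.rep f = 0
  have hZc : Z.card ≤ 2 * d * p^(n-1) := zeros_count hn hGp hfh Z (fun l hl => (Finset.mem_filter.mp hl).2)
  have hmem : ∀ x (hx : x ∈ X), Projectivization.mk (ZMod p) (red x) (hred x hx) ∈ Z := by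
    intro x hx
    rw [Finset.mem_filter]
    refine ⟨Finset.mem_univ _, ?_⟩
    obtain ⟨a, ha⟩ := Projectivization.exists_smul_eq_mk_rep (ZMod p) (red x) (hred x hx)
    rw [← ha]
    change MvPolynomial.eval ((a : ZMod p) • red x) f = 0
    rw [hsm]
    have : MvPolynomial.eval (red x) f = ((MvPolynomial.eval x G : ℤ) : ZMod p) := by
      rw [hf, MvPolynomial.eval_map]
      exact (MvPolynomial.eval₂_comp (Int.castRingHom (ZMod p)) x G).symm
    rw [this, hGX x hx]; simp
  refine ⟨fun x => if hx : x ∈ X then Z.equivFin ⟨_, hmem x hx⟩ else 0, ?_, ?_⟩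
  · intro x hx
    simp only [hx, dif_pos]
    exact lt_of_lt_of_le (Fin.is_lt _) hZc
  · intro x hx y hy h
    simp only [hx, hy, dif_pos] at h
    have h1 := Z.equivFin.injective (Fin.ext h)
    have h2 := congrArg Subtype.val h1
    simp only at h2
    rw [eq_comm, Projectivization.mk_eq_mk_iff] at h2
    obtain ⟨a, ha⟩ := h2
    refine ⟨((a : ZMod p).val : ℤ), ?_, ?_⟩
    · rw [← ZMod.intCast_zmod_eq_zero_iff_dvd]
      simp
    · intro i
      rw [← ZMod.intCast_zmod_eq_zero_iff_dvd]
      have := congrFun ha i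
      push_cast
      simp only [ZMod.natCast_val, ZMod.cast_id', id]
      rw [sub_eq_zero, eq_comm]
      exact this

theorem prime_pool (P : ℕ) (hP : 1 ≤ P) (K : ℕ) : ∃ Q : Finset ℕ, Q.card = K ∧ ∀ p ∈ Q, p.Prime ∧ P < p ∧ p ≤ 2^K * P := by
  classical
  induction K with
  | zero => exact ⟨∅, rfl, by simp⟩
  | succ K ih =>
    obtain ⟨Q, hQ, hQp⟩ := ih
    have hpos : 0 < 2^K := by positivity
    obtain ⟨p, hp, h1, h2⟩ := Nat.exists_prime_lt_and_le_two_mul (2^K * P) (Nat.mul_pos hpos hP).ne'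
    refine ⟨insert p Q, ?_, ?_⟩
    · rw [Finset.card_insert_of_notMem, hQ]
      intro h
      have := (hQp p h).2.2
      omega
    · intro q hq
      rw [pow_succ]
      rcases Finset.mem_insert.mp hq with rfl | hq
      · refine ⟨hp, ?_, by linarith⟩
        nlinarith
      · obtain ⟨a1, a2, a3⟩ := hQp q hq
        exact ⟨a1, a2, by linarith⟩

theorem pow_le_prod_primes (P : ℕ) (S : Finset ℕ) (hS : ∀ p ∈ S, P < p) : P^S.card ≤ ∏ p ∈ S, p := by
  rw [← Finset.prod_const]
  exact Finset.prod_le_prod' (fun p hp => (hS p hp).le)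

theorem bad_count (P r b c a : ℕ) (hP : 2 ≤ P) (hb : b ≤ P^r) (Δ : ℤ) (hΔ : Δ ≠ 0) (hΔ2 : |Δ| ≤ (c * b^a : ℕ))
    (S : Finset ℕ) (hS : ∀ p ∈ S, p.Prime ∧ P < p) (hd : ∀ p ∈ S, ((p:ℕ):ℤ) ∣ Δ) : S.card ≤ c + r * a := by
  have h1 : ∏ p ∈ S, p ∣ Δ.natAbs :=
    Finset.prod_primes_dvd _ (fun p hp => (hS p hp).1.prime) (fun p hp => Int.natCast_dvd.mp (hd p hp))
  have h2 := Nat.le_of_dvd (Int.natAbs_pos.mpr hΔ) h1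
  have h3 : Δ.natAbs ≤ c * b^a := by
    rw [Int.abs_eq_natAbs] at hΔ2; exact_mod_cast hΔ2
  have h4 : c ≤ P^c := (Nat.lt_pow_self (by omega)).le
  have h5 : P^S.card ≤ P^(c + r * a) := by
    calc P^S.card ≤ _ := pow_le_prod_primes P S (fun p hp => (hS p hp).2)
      _ ≤ c * b^a := h2.trans h3
      _ ≤ P^c * (P^r)^a := by gcongr
      _ = _ := by rw [← pow_mul, ← pow_add]
  exact (Nat.pow_le_pow_iff_right (by omega)).mp h5

/-- constant: number of primes in the pool -/
def poolK (n d r s : ℕ) : ℕ := (r + 2*s) + ((n+1) * (cA n d + r * aA n d)) * (r + 2*s)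

theorem core {n d b r s P : ℕ} (hn : 1 ≤ n) (hb1 : 1 ≤ b) (hP : 2 ≤ P) (hPr : (n+1).factorial * b < P^r)
    (hs : (r + 2*s) * (n+2)^(n+1) < s * s)
    {F : MvPolynomial (Fin (n+1)) KK} (hF : F.IsHomogeneous d) (hF0 : F ≠ 0)
    (X : Set (Fin (n+1) → ℤ)) (hXb : ∀ x ∈ X, ∀ i, |x i| ≤ b) (hX : ∀ x ∈ X, MvPolynomial.eval (coeK x) F = 0)
    (hXp : ∀ x ∈ X, IsPrimitiveVec x) (hX0 : ∀ x ∈ X, x ≠ 0) :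
    ∃ 𝓜 : Finset (Submodule ℚ (Fin (n+1) → ℚ)),
      𝓜.card ≤ 2^(poolK n d r s) * (((2*d+1) * (2^(poolK n d r s) * P)^(n-1))^(r+2*s) * (d+1)^(n+1)) ∧
      (∀ x ∈ X, ∃ M ∈ 𝓜, coeQ x ∈ M) ∧
      ∀ M ∈ 𝓜, ∃ D ⊆ X, D.Nonempty ∧ M = spanQ D ∧ Van F M ∧ ∃ T : Finset ℕ, (∀ p ∈ T, p.Prime) ∧ b ≤ ∏ p ∈ T, p ∧
        ∀ p ∈ T, ∀ x ∈ D, ∀ y ∈ D, RelP p x y := by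
  classical
  set K := poolK n d r s with hK
  obtain ⟨Q, hQc, hQ⟩ := prime_pool P (by omega) K
  choose τ Δ h1 h2 h3 h4 using exists_tau_M hb1 hF X hXb hX hX0
  have hlab : ∀ p, ∃ c : (Fin (n+1) → ℤ) → ℕ, p ∈ Q → ((∀ x ∈ X, c x < 2 * d * p^(n-1)) ∧
      ∀ x ∈ X, ∀ y ∈ X, c x = c y → RelP p x y) := by
    intro p
    by_cases hp : p ∈ Q
    · obtain ⟨c, hc⟩ := exists_label hn (hQ p hp).1 hb1 hF hF0 X hXb hX hXp
      exact ⟨c, fun _ => hc⟩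
    · exact ⟨fun _ => 0, fun h => absurd h hp⟩
  choose c hc using hlab
  have hbP : b ≤ P^r := by
    have : 1 * b ≤ (n+1).factorial * b := Nat.mul_le_mul_right _ (Nat.factorial_pos _)
    omega
  set Nn := (2*d+1) * (2^K * P)^(n-1) with hNn
  have hNn1 : 1 ≤ Nn := Nat.mul_pos (by omega) (Nat.pow_pos (Nat.mul_pos (by positivity) (by omega)))
  have hcN : ∀ p ∈ Q, ∀ x ∈ X, c p x < Nn := by
    intro p hp x hx
    refine lt_of_lt_of_le ((hc p hp).1 x hx) ?_
    rw [hNn]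
    exact Nat.mul_le_mul (by omega) (Nat.pow_le_pow_left (hQ p hp).2.2 _)
  let D : (T : Finset ℕ) → ((p : ℕ) → p ∈ T → ℕ) → ℕ → Set (Fin (n+1) → ℤ) := fun T u a =>
    desc d τ (n+1) a {y ∈ X | ∀ p (hp : p ∈ T), c p y = u p hp}
  let all : Finset (Submodule ℚ (Fin (n+1) → ℚ)) :=
    (Q.powerset.filter fun T => T.card ≤ r + 2*s).biUnion fun T =>
      (((T.pi fun _ => Finset.range Nn) ×ˢ Finset.range ((d+1)^(n+1))).image fun q => spanQ (D T q.1 q.2))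
  have hall : all.card ≤ 2^K * (Nn^(r+2*s) * (d+1)^(n+1)) := by
    have e1 : (Q.powerset.filter fun T => T.card ≤ r + 2*s).card ≤ 2^K := by
      refine (Finset.card_filter_le _ _).trans ?_
      rw [Finset.card_powerset, hQc]
    refine (Finset.card_biUnion_le_card_mul _ _ (Nn^(r+2*s) * (d+1)^(n+1)) ?_).trans (Nat.mul_le_mul_right _ e1)
    intro T hT
    refine Finset.card_image_le.trans ?_
    rw [Finset.card_product, Finset.card_pi, Finset.card_range, Finset.prod_const, Finset.card_range]
    exact Nat.mul_le_mul_right _ (Nat.pow_le_pow_right hNn1 (Finset.mem_filter.mp hT).2)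
  let Good : Submodule ℚ (Fin (n+1) → ℚ) → Prop := fun M =>
    ∃ D ⊆ X, D.Nonempty ∧ M = spanQ D ∧ Van F M ∧ ∃ T : Finset ℕ, (∀ p ∈ T, p.Prime) ∧ b ≤ ∏ p ∈ T, p ∧
        ∀ p ∈ T, ∀ x ∈ D, ∀ y ∈ D, RelP p x y
  refine ⟨all.filter Good, (Finset.card_filter_le _ _).trans hall, ?_, fun M hM => (Finset.mem_filter.mp hM).2⟩
  intro x hx
  let Cl : Finset ℕ → Set (Fin (n+1) → ℤ) := fun S => {y ∈ X | ∀ p ∈ S, c p y = c p x}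
  have hCl : ∀ S p, Cl (insert p S) ⊆ Cl S := fun S p y hy =>
    ⟨hy.1, fun q hq => hy.2 q (Finset.mem_insert_of_mem hq)⟩
  have hbad : ∀ M, ∀ S ⊆ Q, (∀ p ∈ S, ((p:ℕ):ℤ) ∣ Δ M x) → S.card ≤ cA n d + r * aA n d := by
    intro M S hS hdv
    exact bad_count P r b _ _ hP hbP (Δ M x) (h3 M x hx).1 (h3 M x hx).2 S
      (fun p hp => ⟨(hQ p (hS hp)).1, (hQ p (hS hp)).2.1⟩) hdv
  obtain ⟨T, hTQ, hT1, hT2, hT3⟩ := leave_one_out Q (fun S => Phi τ x (n+1) (Cl S))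
    (fun S => badf τ Δ x Q (n+1) (Cl S)) ((n+2)^(n+1)) ((n+1) * (cA n d + r * aA n d)) (r+s) s s
    (fun S p => (Phi_mono τ Δ x Q (n+1) _ _ (hCl S p)).1) (fun S => (Phi_lt τ x (n+1) _).le)
    (fun S => badf_card τ Δ x Q _ hbad (n+1) _)
    (fun S p h => (Phi_mono τ Δ x Q (n+1) _ _ (hCl S p)).2 h)
    (by rw [hQc, hK, poolK, show r + s + s = r + 2*s by ring])
    (by rw [show r + s + s = r + 2*s by ring]; exact hs)
  have hTp : ∀ p ∈ T, p.Prime := fun p hp => (hQ p (hTQ hp)).1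
  have hxC : x ∈ Cl T := ⟨hx, fun p _ => rfl⟩
  have hcard : r ≤ (T \ badf τ Δ x Q (n+1) (Cl T)).card := by
    have := Finset.card_sdiff_add_card_inter T (badf τ Δ x Q (n+1) (Cl T))
    omega
  have hprod : (n+1).factorial * b < ∏ p ∈ T \ badf τ Δ x Q (n+1) (Cl T), p := by
    refine lt_of_lt_of_le hPr ((Nat.pow_le_pow_right (by omega) hcard).trans ?_)
    exact pow_le_prod_primes P _ (fun p hp => (hQ p (hTQ (Finset.mem_sdiff.mp hp).1)).2.1)
  obtain ⟨a, ha, hV, hxD⟩ := desc_exists d τ Δ x Q (b := b) F X hX0 h1 h2 h4 T hTQ hTp (n+1) (Cl T) (fun y hy => hy.1) hxC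
    (fun p hp y hy => (hc p (hTQ hp)).2 x hx y hy.1 (hy.2 p hp).symm) (finrank_le_n _) hprod
  have hsub := desc_sub d τ (n+1) a (Cl T)
  refine ⟨spanQ (desc d τ (n+1) a (Cl T)), ?_, Submodule.subset_span ⟨x, hxD, rfl⟩⟩
  rw [Finset.mem_filter]
  constructor
  · rw [Finset.mem_biUnion]
    refine ⟨T, Finset.mem_filter.mpr ⟨Finset.mem_powerset.mpr hTQ, by omega⟩, ?_⟩
    rw [Finset.mem_image]
    refine ⟨(fun p _ => c p x, a), ?_, rfl⟩
    rw [Finset.mem_product, Finset.mem_pi]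
    exact ⟨fun p hp => Finset.mem_range.mpr (hcN p (hTQ hp) x hx), Finset.mem_range.mpr ha⟩
  · refine ⟨_, fun y hy => (hsub hy).1, ⟨x, hxD⟩, rfl, hV, T, hTp, ?_, ?_⟩
    · have e1 : ∏ p ∈ T \ badf τ Δ x Q (n+1) (Cl T), p ≤ ∏ p ∈ T, p :=
        Finset.prod_le_prod_of_subset_of_one_le' Finset.sdiff_subset (fun p hp _ => (hTp p hp).one_le)
      have : 1 * b ≤ (n+1).factorial * b := Nat.mul_le_mul_right _ (Nat.factorial_pos _)
      omega
    · intro p hp y hy z hz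
      exact (hc p (hTQ hp)).2 y (hsub hy).1 z (hsub hz).1 (((hsub hy).2 p hp).trans ((hsub hz).2 p hp).symm)

theorem basis_of_good {n b : ℕ} {F : MvPolynomial (Fin (n+1)) KK} (hF0 : F ≠ 0)
    (X : Set (Fin (n+1) → ℤ)) (hXb : ∀ x ∈ X, ∀ i, |x i| ≤ b) (hX0 : ∀ x ∈ X, x ≠ 0)
    (M : Submodule ℚ (Fin (n+1) → ℚ))
    (h : ∃ D ⊆ X, D.Nonempty ∧ M = spanQ D ∧ Van F M ∧ ∃ T : Finset ℕ, (∀ p ∈ T, p.Prime) ∧ b ≤ ∏ p ∈ T, p ∧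
        ∀ p ∈ T, ∀ x ∈ D, ∀ y ∈ D, RelP p x y) :
    ∃ q : Σ m : ℕ, Fin (m + 1) → Fin (n + 1) → ℤ, LinearIndependent ℚ (fun i => coeQ (q.2 i)) ∧ q.1 + 1 ≤ n ∧
      Submodule.span ℚ (Set.range fun i => coeQ (q.2 i)) = M ∧ Van F M ∧ pluckerHeight q.2 ≤ (n+1).factorial * b := by
  obtain ⟨D, hDX, ⟨x, hx⟩, rfl, hV, T, hT, hbT, hR⟩ := h
  obtain ⟨k, v, hk, hvD, hli, hspan⟩ := exists_basis D
  have hkn : k ≤ n := hk ▸ van_ne_top hF0 hV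
  obtain _ | m := k
  · exfalso
    have h0 : spanQ D = ⊥ := Submodule.finrank_eq_zero.mp hk.symm
    have : coeQ x ∈ spanQ D := Submodule.subset_span ⟨x, hx, rfl⟩
    rw [h0, Submodule.mem_bot] at this
    apply hX0 x (hDX hx)
    ext i
    have := congrFun this i
    simpa [coeQ] using this
  · exact ⟨⟨m, v⟩, hli, hkn, hspan, hV, plucker_bound v hli b (fun i j => hXb _ (hDX (hvD i)) j) T hT
      (fun p hp j => hR p hp _ (hvD 0) _ (hvD j)) hbT⟩

theorem height_le {n : ℕ} {x : Fin (n+1) → ℤ} {B : ℝ} (h : heightVec x ≤ B) (i : Fin (n+1)) : |x i| ≤ (⌊B⌋₊ : ℤ) := by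
  have h1 : (Finset.univ.sup fun i => (x i).natAbs) ≤ ⌊B⌋₊ := Nat.le_floor h
  have h2 := (Finset.le_sup (f := fun i => (x i).natAbs) (Finset.mem_univ i)).trans h1
  rw [Int.abs_eq_natAbs]
  exact_mod_cast h2

theorem finite_box {n : ℕ} (b : ℕ) : {x : Fin (n+1) → ℤ | ∀ i, |x i| ≤ (b:ℤ)}.Finite := by
  refine (Set.Finite.pi' (fun _ : Fin (n+1) => Set.finite_Icc (-(b:ℤ)) b)).subset ?_
  intro x hx i
  exact abs_le.mp (hx i)

/-- choice of the size of the primes -/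
theorem choose_P (r c : ℕ) (hr : 1 ≤ r) (hc : 1 ≤ c) : ∃ P : ℕ, 2 ≤ P ∧ c < P^r ∧ P^r ≤ 2^r * c := by
  have hex : ∃ P, c < P^r := ⟨c+1, by
    calc c < (c+1)^1 := by rw [pow_one]; omega
      _ ≤ _ := Nat.pow_le_pow_right (by omega) hr⟩
  classical
  have hs := Nat.find_spec hex
  have h2 : 2 ≤ Nat.find hex := by
    by_contra hlt
    have : (Nat.find hex)^r ≤ 1^r := Nat.pow_le_pow_left (by omega) r
    rw [one_pow] at this; omega
  refine ⟨Nat.find hex, h2, hs, ?_⟩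
  have hm := Nat.find_min hex (m := Nat.find hex - 1) (by omega)
  rw [not_lt] at hm
  calc (Nat.find hex)^r ≤ (2 * (Nat.find hex - 1))^r := Nat.pow_le_pow_left (by omega) r
    _ = 2^r * (Nat.find hex - 1)^r := mul_pow _ _ _
    _ ≤ _ := Nat.mul_le_mul_left _ hm

theorem real_bound (n r s t P c0 b : ℕ) (hn : 1 ≤ n) (ε B : ℝ) (hε : 0 < ε) (hr : r = s * t) (hs : 1 ≤ s) (ht : 1 ≤ t)
    (hte : 2 * ((n:ℝ) - 1) ≤ ε * t) (hP : P^r ≤ c0 * b) (hB : 1 ≤ B) (hc0 : 1 ≤ c0) (hb : (b:ℝ) ≤ B) :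
    ((P^((n-1) * (r + 2*s)) : ℕ) : ℝ) ≤ (c0:ℝ)^((n:ℝ) - 1 + ε) * B^((n:ℝ) - 1 + ε) := by
  have hc0' : (1:ℝ) ≤ c0 := by exact_mod_cast hc0
  have hs' : (0:ℝ) < s := by exact_mod_cast hs
  have ht' : (0:ℝ) < t := by exact_mod_cast ht
  have hn' : (1:ℝ) ≤ n := by exact_mod_cast hn
  have h1 : ((P^r : ℕ):ℝ) ≤ c0 * B := by
    have : ((P^r : ℕ):ℝ) ≤ ((c0 * b : ℕ) : ℝ) := by exact_mod_cast hP
    push_cast at this ⊢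
    exact this.trans (by gcongr)
  have hbase : 1 ≤ (c0:ℝ) * B := by nlinarith
  have e1 : ((P^((n-1) * (r + 2*s)) : ℕ) : ℝ) = ((P^r : ℕ):ℝ) ^ (((n:ℝ)-1) * (1 + 2/t)) := by
    push_cast
    rw [← Real.rpow_natCast, ← Real.rpow_natCast, ← Real.rpow_mul (by positivity)]
    congr 1
    rw [hr]
    push_cast [Nat.cast_sub hn]
    field_simp
  rw [e1, ← Real.mul_rpow (by positivity) (by positivity)]
  calc ((P^r : ℕ):ℝ) ^ (((n:ℝ)-1) * (1 + 2/t)) ≤ ((c0:ℝ) * B) ^ (((n:ℝ)-1) * (1 + 2/t)) := by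
        apply Real.rpow_le_rpow (by positivity) h1
        have : 0 ≤ (n:ℝ) - 1 := by linarith
        positivity
    _ ≤ _ := by
        apply Real.rpow_le_rpow_of_exponent_le hbase
        have : ((n:ℝ)-1) * (2/t) ≤ ε := by
          rw [← mul_div_assoc, div_le_iff₀ ht']; linarith
        linarith

/-- **Lemma 5.** Let ε > 0 and let X ⊂ Pⁿ be a geometrically integral hypersurface
of degree d, cut out by an irreducible form F of degree d over the algebraic closure
of ℚ.  Then there exist linear subspaces M₁,…,M_J ⊆ X defined over ℚ (each given by
a linearly independent family of integer spanning vectors), with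
J = O_{d,ε,n}(B^{n-1+ε}) and 0 ≤ dim M_j ≤ n-1, such that
N_X(B) ≤ Σ_j N_{M_j}(B); moreover every M_j of dimension ≥ 1 has Plücker height
H(M_j) = O_{d,ε,n}(B^{1+ε}). -/
theorem statement6 (d n : ℕ) (hn : 2 ≤ n) (ε : ℝ) (hε : 0 < ε) :
    ∃ C : ℝ, 0 < C ∧ ∀ F : MvPolynomial (Fin (n + 1)) KK,
      F.IsHomogeneous d → Irreducible F → ∀ B : ℝ, 1 ≤ B →
      ∃ (J : ℕ) (M : Fin J → Σ m : ℕ, Fin (m + 1) → Fin (n + 1) → ℤ),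
        (J : ℝ) ≤ C * B ^ ((n : ℝ) - 1 + ε) ∧
        (∀ j, LinearIndependent ℚ (fun i => coeQ ((M j).2 i))) ∧
        (∀ j, (M j).1 + 1 ≤ n) ∧
        (∀ j, ∀ z : Fin (n + 1) → ℚ,
          z ∈ Submodule.span ℚ (Set.range fun i => coeQ ((M j).2 i)) →
          MvPolynomial.eval (fun i => algebraMap ℚ KK (z i)) F = 0) ∧
        (Set.ncard {x : Fin (n + 1) → ℤ | IsPrimitiveVec x ∧ heightVec x ≤ B ∧
            MvPolynomial.eval (coeK x) F = 0} ≤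
          ∑ j, Set.ncard {x : Fin (n + 1) → ℤ | IsPrimitiveVec x ∧ heightVec x ≤ B ∧
            coeQ x ∈ Submodule.span ℚ (Set.range fun i => coeQ ((M j).2 i))}) ∧
        (∀ j, 1 ≤ (M j).1 → (pluckerHeight (M j).2 : ℝ) ≤ C * B ^ (1 + ε)) := by
  obtain ⟨t, ht1, hte⟩ : ∃ t : ℕ, 1 ≤ t ∧ 2 * ((n:ℝ) - 1) ≤ ε * t := by
    refine ⟨⌈2 * ((n:ℝ) - 1) / ε⌉₊ + 1, by omega, ?_⟩
    have := Nat.le_ceil (2 * ((n:ℝ) - 1) / ε)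
    rw [div_le_iff₀ hε] at this
    push_cast
    nlinarith
  set s := (t+2) * (n+2)^(n+1) + 1 with hs
  set r := s * t with hr
  have hs1 : 1 ≤ s := by omega
  have hr1 : 1 ≤ r := Nat.mul_pos hs1 ht1
  have hsL : (r + 2*s) * (n+2)^(n+1) < s * s := by
    calc (r + 2*s) * (n+2)^(n+1) = s * ((t+2) * (n+2)^(n+1)) := by rw [hr]; ring
      _ < s * s := Nat.mul_lt_mul_of_pos_left (by omega) hs1
  set K := poolK n d r s with hK
  set c0 := 2^r * (n+1).factorial with hc0
  have hc01 : 1 ≤ c0 := Nat.mul_pos (by positivity) (Nat.factorial_pos _)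
  set C1 : ℕ := 2^K * (((2*d+1) * (2^K)^(n-1))^(r+2*s) * (d+1)^(n+1)) with hC1
  have hC1pos : 0 < C1 := by positivity
  have hC2pos : 0 < (n+1).factorial := Nat.factorial_pos _
  have hCp : 0 < (C1:ℝ) * (c0:ℝ)^((n:ℝ) - 1 + ε) := by
    have : (0:ℝ) < c0 := by exact_mod_cast hc01
    positivity
  refine ⟨C1 * (c0:ℝ)^((n:ℝ) - 1 + ε) + (n+1).factorial, by positivity, ?_⟩
  intro F hF hFirr B hB
  have hF0 := hFirr.ne_zero
  set b := ⌊B⌋₊ with hb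
  have hb1 : 1 ≤ b := Nat.le_floor (by simpa using hB)
  have hbB : (b:ℝ) ≤ B := Nat.floor_le (by linarith)
  set X : Set (Fin (n+1) → ℤ) := {x : Fin (n + 1) → ℤ | IsPrimitiveVec x ∧ heightVec x ≤ B ∧
            MvPolynomial.eval (coeK x) F = 0} with hXdef
  have hXb : ∀ x ∈ X, ∀ i, |x i| ≤ (b:ℤ) := fun x hx i => height_le hx.2.1 i
  have hXp : ∀ x ∈ X, IsPrimitiveVec x := fun x hx => hx.1
  have hX0 : ∀ x ∈ X, x ≠ 0 := by
    rintro x hx rfl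
    have := hXp _ hx
    unfold IsPrimitiveVec at this
    rw [Finset.gcd_eq_zero_iff.mpr (by simp)] at this
    exact zero_ne_one this
  obtain ⟨P, hP2, hP3, hP4⟩ := choose_P r ((n+1).factorial * b) hr1 (Nat.mul_pos (Nat.factorial_pos _) hb1)
  obtain ⟨𝓜, hcard, hcov, hgood⟩ := core (by omega) hb1 hP2 hP3 hsL hF hF0 X hXb (fun x hx => hx.2.2) hXp hX0
  have hgood' := fun M hM => basis_of_good hF0 X hXb hX0 M (hgood M hM)
  choose q hq1 hq2 hq3 hq4 hq5 using hgood'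
  have hBpos : 0 < B := by linarith
  refine ⟨𝓜.card, fun j => q _ (𝓜.equivFin.symm j).2, ?_, fun j => hq1 _ _, fun j => hq2 _ _, ?_, ?_, ?_⟩
  · have e1 : 𝓜.card ≤ C1 * P^((n-1) * (r + 2*s)) := by
      refine hcard.trans (le_of_eq ?_)
      rw [hC1, mul_pow _ P, ← mul_assoc (2*d+1), mul_pow _ (P^(n-1)), ← pow_mul P]
      ring
    have e2 := real_bound n r s t P c0 b (by omega) ε B hε hr hs1 ht1 hte
      (by rw [hc0, mul_assoc]; exact hP4) hB hc01 hbB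
    have e3 : (𝓜.card : ℝ) ≤ C1 * ((P^((n-1) * (r + 2*s)) : ℕ) : ℝ) := by exact_mod_cast e1
    have e4 : 0 ≤ B ^ ((n : ℝ) - 1 + ε) := by positivity
    calc (𝓜.card : ℝ) ≤ _ := e3
      _ ≤ C1 * ((c0:ℝ)^((n:ℝ) - 1 + ε) * B^((n:ℝ) - 1 + ε)) := by gcongr
      _ ≤ _ := by
        rw [add_mul, mul_assoc]
        have : 0 ≤ ((n+1).factorial : ℝ) * B ^ ((n : ℝ) - 1 + ε) := by positivity
        linarith
  · intro j z hz
    rw [hq3] at hz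
    exact hq4 _ (𝓜.equivFin.symm j).2 z hz
  · have hfin : ∀ j, {x : Fin (n + 1) → ℤ | IsPrimitiveVec x ∧ heightVec x ≤ B ∧
            coeQ x ∈ Submodule.span ℚ (Set.range fun i => coeQ ((q _ (𝓜.equivFin.symm j).2).2 i))}.Finite := by
      intro j
      exact (finite_box b).subset (fun x hx i => height_le hx.2.1 i)
    refine (Set.ncard_le_ncard (t := ⋃ j, {x : Fin (n + 1) → ℤ | IsPrimitiveVec x ∧ heightVec x ≤ B ∧
            coeQ x ∈ Submodule.span ℚ (Set.range fun i => coeQ ((q _ (𝓜.equivFin.symm j).2).2 i))}) ?_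
            (Set.finite_iUnion hfin)).trans ?_
    · intro x hx
      obtain ⟨M, hM, hxM⟩ := hcov x hx
      rw [Set.mem_iUnion]
      refine ⟨𝓜.equivFin ⟨M, hM⟩, hx.1, hx.2.1, ?_⟩
      rw [hq3]
      simpa using hxM
    · exact Set.ncard_iUnion_le_of_fintype _
  · intro j _
    have e1 : (pluckerHeight (q _ (𝓜.equivFin.symm j).2).2 : ℝ) ≤ (((n+1).factorial * b : ℕ) : ℝ) := by
      exact_mod_cast hq5 _ (𝓜.equivFin.symm j).2
    have e2 : B ≤ B^(1+ε) := by
      conv_lhs => rw [← Real.rpow_one B]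
      exact Real.rpow_le_rpow_of_exponent_le hB (by linarith)
    push_cast at e1
    have e3 : ((n+1).factorial : ℝ) * b ≤ (n+1).factorial * B^(1+ε) := by
      gcongr; exact hbB.trans e2
    have e4 : 0 ≤ B ^ (1 + ε) := by positivity
    calc _ ≤ _ := e1
      _ ≤ _ := e3
      _ ≤ _ := by
        gcongr
        linarith

end
end

section
/- Let V ⊂ P^N be a geometrically integral projective variety of degree d. Then the Fano variety F_1(V) of lines contained in V satisfies dim F_1(V) ≤ 2 dim V − 2 if d = 1, and dim F_1(V) ≤ 2 dim V − 3 if d ≥ 2. -/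
noncomputable section

section FanoHelpers

set_option linter.unusedSectionVars false
set_option linter.style.haveILetI false




namespace FanoAux

open MvPolynomial Module

section Alg

variable {K : Type*} [Field K] {σ : Type*} [Finite σ]

theorem finrank_map_ker {A B : Type*} [AddCommGroup A] [Module K A] [AddCommGroup B] [Module K B]
    (g : A →ₗ[K] B) (M : Submodule K A) [FiniteDimensional K M] :
    finrank K (M.map g) + finrank K (M ⊓ LinearMap.ker g : Submodule K A) = finrank K M := by
  rw [← LinearMap.finrank_range_add_finrank_ker (g.domRestrict M), LinearMap.range_domRestrict,
    LinearMap.ker_domRestrict]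
  congr 1
  rw [← Submodule.map_comap_subtype]
  exact (Submodule.equivMapOfInjective M.subtype M.subtype_injective _).finrank_eq.symm

/-- affine Hilbert function -/
def hF (I : Ideal (MvPolynomial σ K)) (t : ℕ) : ℕ :=
  finrank K ((restrictTotalDegree σ K t).map (Ideal.Quotient.mkₐ K I).toLinearMap)

/-- polynomial growth -/
def Gr (I : Ideal (MvPolynomial σ K)) (n : ℕ) : Prop := ∃ C : ℕ, ∀ t, hF I t ≤ C * (t + 1) ^ n

theorem restrict_mono {s t : ℕ} (h : s ≤ t) :
    restrictTotalDegree σ K s ≤ restrictTotalDegree σ K t := by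
  intro p hp
  rw [mem_restrictTotalDegree] at *
  omega

theorem hF_mono (I : Ideal (MvPolynomial σ K)) {s t : ℕ} (h : s ≤ t) : hF I s ≤ hF I t :=
  Submodule.finrank_mono (Submodule.map_mono (restrict_mono h))

theorem map_factor {I J : Ideal (MvPolynomial σ K)} (h : I ≤ J) (M : Submodule K (MvPolynomial σ K)) :
    M.map (Ideal.Quotient.mkₐ K J).toLinearMap =
    (M.map (Ideal.Quotient.mkₐ K I).toLinearMap).map (Ideal.Quotient.factorₐ K h).toLinearMap := by
  rw [← Submodule.map_comp]
  rfl

theorem hF_anti {I J : Ideal (MvPolynomial σ K)} (h : I ≤ J) (t : ℕ) : hF J t ≤ hF I t := by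
  unfold hF
  rw [map_factor h]
  exact Submodule.finrank_map_le _ _

theorem Gr.anti {I J : Ideal (MvPolynomial σ K)} (h : I ≤ J) {n : ℕ} (hI : Gr I n) : Gr J n := by
  obtain ⟨C, hC⟩ := hI
  exact ⟨C, fun t => (hF_anti h t).trans (hC t)⟩

theorem drop_aux {I J : Ideal (MvPolynomial σ K)} (hI : I.IsPrime) (h : I ≤ J)
    (f : MvPolynomial σ K) (hfJ : f ∈ J) (hfI : f ∉ I) (t : ℕ) :
    hF J (t + f.totalDegree) + hF I t ≤ hF I (t + f.totalDegree) := by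
  unfold hF
  rw [map_factor h, ← finrank_map_ker (Ideal.Quotient.factorₐ K h).toLinearMap
    (Submodule.map (Ideal.Quotient.mkₐ K I).toLinearMap (restrictTotalDegree σ K (t + f.totalDegree)))]
  gcongr
  set q := Ideal.Quotient.mk I f with hq
  have hq0 : q ≠ 0 := by rwa [hq, Ne, Ideal.Quotient.eq_zero_iff_mem]
  have inj : Function.Injective (LinearMap.mulLeft K q) := by
    intro a b hab
    exact mul_left_cancel₀ hq0 hab
  rw [(Submodule.equivMapOfInjective _ inj (Submodule.map (Ideal.Quotient.mkₐ K I).toLinearMap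
    (restrictTotalDegree σ K t))).finrank_eq]
  apply Submodule.finrank_mono
  rintro _ ⟨_, ⟨p, hp, rfl⟩, rfl⟩
  refine ⟨⟨f * p, ?_, ?_⟩, ?_⟩
  · have hp' := (mem_restrictTotalDegree _ _ _).1 hp
    refine (mem_restrictTotalDegree _ _ _).2 ((totalDegree_mul _ _).trans ?_)
    omega
  · simp [hq]
  · rw [SetLike.mem_coe, LinearMap.mem_ker]
    change Ideal.Quotient.factor h (Ideal.Quotient.mk I f * Ideal.Quotient.mk I p) = 0
    rw [← map_mul, Ideal.Quotient.factor_mk, Ideal.Quotient.eq_zero_iff_mem]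
    exact J.mul_mem_right _ hfJ

theorem Gr.drop {I J : Ideal (MvPolynomial σ K)} (hI : I.IsPrime) (h : I < J) {n : ℕ}
    (hG : Gr I (n + 1)) : Gr J n := by
  obtain ⟨C, hC⟩ := hG
  obtain ⟨hle, f, hfJ, hfI⟩ := SetLike.lt_iff_le_and_exists.1 h
  set e := f.totalDegree with he
  have key : ∀ t m, m * hF J t ≤ hF I (t + m * e) := by
    intro t m
    induction m with
    | zero => simp
    | succ m ih =>
      have h1 := drop_aux hI hle f hfJ hfI (t + m * e)
      rw [← he] at h1
      have h2 : hF J t ≤ hF J (t + m * e + e) := hF_mono J (by omega)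
      have h3 : t + (m + 1) * e = t + m * e + e := by ring
      rw [h3]
      have h4 : (m + 1) * hF J t = m * hF J t + hF J t := by ring
      rw [h4]
      omega
  refine ⟨C * (1 + e) ^ (n + 1), fun t => ?_⟩
  have h1 := (key t (t + 1)).trans (hC _)
  have h2 : t + (t + 1) * e + 1 = (1 + e) * (t + 1) := by ring
  rw [h2, mul_pow] at h1
  refine Nat.le_of_mul_le_mul_left (c := t + 1) ?_ (by omega)
  calc _ ≤ _ := h1
    _ = _ := by ring

/-- Homogeneous ideals -/
def HomId (I : Ideal (MvPolynomial σ K)) : Prop := ∀ p ∈ I, ∀ n, homogeneousComponent n p ∈ I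

theorem HomId.exists_of_not_prime {I : Ideal (MvPolynomial σ K)} (hI : HomId I) (htop : I ≠ ⊤)
    (hp : ¬ I.IsPrime) : ∃ a b : MvPolynomial σ K, (∃ d, a.IsHomogeneous d) ∧
      (∃ d, b.IsHomogeneous d) ∧ a ∉ I ∧ b ∉ I ∧ a * b ∈ I := by
  classical
  by_contra hcon
  push Not at hcon
  apply hp
  letI := MvPolynomial.gradedAlgebra (σ := σ) (R := K)
  have hI' : I.IsHomogeneous (homogeneousSubmodule σ K) := by
    intro i p hp
    have := hI p hp i
    rw [← decomposition.decompose'_apply] at this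
    exact this
  refine hI'.isPrime_of_homogeneous_mem_or_mem htop ?_
  rintro x y ⟨i, hx⟩ ⟨j, hy⟩ hxy
  by_contra h
  push Not at h
  exact hcon x y ⟨i, hx⟩ ⟨j, hy⟩ h.1 h.2 hxy

theorem comp_mul {a : MvPolynomial σ K} {e : ℕ} (ha : a.IsHomogeneous e) (g : MvPolynomial σ K)
    (n : ℕ) : homogeneousComponent n (a * g) =
      if e ≤ n then a * homogeneousComponent (n - e) g else 0 := by
  classical
  letI := MvPolynomial.gradedAlgebra (σ := σ) (R := K)
  have ha' : a ∈ homogeneousSubmodule σ K e := ha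
  have hd : ∀ (p : MvPolynomial σ K) i, homogeneousComponent i p =
    (DirectSum.decompose (homogeneousSubmodule σ K) p i : MvPolynomial σ K) := by
    intro p i
    rw [← decomposition.decompose'_apply]
    rfl
  rw [hd, hd]
  split_ifs with h
  · exact DirectSum.coe_decompose_mul_of_left_mem_of_le _ ha' h
  · exact DirectSum.coe_decompose_mul_of_left_mem_of_not_le _ ha' h

/-- truncation -/
def trunc (t : ℕ) : MvPolynomial σ K →ₗ[K] MvPolynomial σ K :=
  ∑ i ∈ Finset.range (t + 1), homogeneousComponent i

theorem trunc_apply (t : ℕ) (p : MvPolynomial σ K) :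
    trunc t p = ∑ i ∈ Finset.range (t + 1), homogeneousComponent i p := by
  simp [trunc]

theorem trunc_self {t : ℕ} {p : MvPolynomial σ K} (h : p.totalDegree ≤ t) : trunc t p = p := by
  rw [trunc_apply]
  conv_rhs => rw [← sum_homogeneousComponent p]
  symm
  apply Finset.sum_subset
  · intro i hi
    simp at *
    omega
  · intro i _ hi
    apply homogeneousComponent_eq_zero
    simp at hi
    omega

theorem trunc_deg (t : ℕ) (p : MvPolynomial σ K) : (trunc t p).totalDegree ≤ t := by
  rw [trunc_apply]
  apply totalDegree_finsetSum_le
  intro i hi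
  refine (homogeneousComponent_isHomogeneous i p).totalDegree_le.trans ?_
  simp at hi
  omega

theorem trunc_mul {a : MvPolynomial σ K} {e : ℕ} (ha : a.IsHomogeneous e) (g : MvPolynomial σ K)
    (n : ℕ) : trunc (n + e) (a * g) = a * trunc n g := by
  rw [trunc_apply, trunc_apply, Finset.mul_sum]
  have : n + e + 1 = e + (n + 1) := by ring
  rw [this, Finset.sum_range_add]
  have h0 : ∑ x ∈ Finset.range e, homogeneousComponent x (a * g) = 0 := by
    apply Finset.sum_eq_zero
    intro x hx
    rw [comp_mul ha, if_neg]
    simp at hx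
    omega
  rw [h0, zero_add]
  apply Finset.sum_congr rfl
  intro x _
  rw [comp_mul ha, if_pos (by omega)]
  rw [Nat.add_sub_cancel_left]

theorem trunc_mul_lt {a : MvPolynomial σ K} {e : ℕ} (ha : a.IsHomogeneous e) (g : MvPolynomial σ K)
    (n : ℕ) (h : n < e) : trunc n (a * g) = 0 := by
  rw [trunc_apply]
  apply Finset.sum_eq_zero
  intro x hx
  rw [comp_mul ha, if_neg]
  simp at hx
  omega

theorem HomId.trunc_mem {I : Ideal (MvPolynomial σ K)} (hI : HomId I) {p : MvPolynomial σ K}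
    (hp : p ∈ I) (t : ℕ) : trunc t p ∈ I := by
  rw [trunc_apply]
  exact I.sum_mem fun i _ => hI p hp i

/-- the fundamental exact sequence estimate -/
theorem split_aux {I Q : Ideal (MvPolynomial σ K)} (hI : HomId I) {a : MvPolynomial σ K} {e : ℕ}
    (ha : a.IsHomogeneous e) (hQ : ∀ g ∈ Q, a * g ∈ I) (t s : ℕ) (hs : t ≤ s + e) :
    hF I t ≤ hF (I ⊔ Ideal.span {a}) t + hF Q s := by
  have hle : I ≤ I ⊔ Ideal.span {a} := le_sup_left
  unfold hF
  rw [map_factor hle, ← finrank_map_ker (Ideal.Quotient.factorₐ K hle).toLinearMap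
    (Submodule.map (Ideal.Quotient.mkₐ K I).toLinearMap (restrictTotalDegree σ K t))]
  gcongr
  let φ : (MvPolynomial σ K ⧸ Q) →ₗ[K] (MvPolynomial σ K ⧸ I) :=
    Submodule.liftQ (Q.restrictScalars K)
      ((Ideal.Quotient.mkₐ K I).toLinearMap ∘ₗ LinearMap.mulLeft K a) (by
        intro g hg
        rw [LinearMap.mem_ker]
        change Ideal.Quotient.mk I (a * g) = 0
        rw [Ideal.Quotient.eq_zero_iff_mem]
        exact hQ g hg)
  have hφ : ∀ g, φ (Ideal.Quotient.mk Q g) = Ideal.Quotient.mk I (a * g) := fun g => rfl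
  refine le_trans (Submodule.finrank_mono (t := ((restrictTotalDegree σ K s).map
    (Ideal.Quotient.mkₐ K Q).toLinearMap).map φ) ?_) (Submodule.finrank_map_le _ _)
  rintro _ ⟨⟨p, hp, rfl⟩, hk⟩
  have hpt : p.totalDegree ≤ t := (mem_restrictTotalDegree _ _ _).1 hp
  have hpm : p ∈ I ⊔ Ideal.span {a} := by
    rw [← Ideal.Quotient.eq_zero_iff_mem]
    exact hk
  obtain ⟨i, hi, b, hb, hib⟩ := Submodule.mem_sup.1 hpm
  obtain ⟨g, rfl⟩ := Ideal.mem_span_singleton.1 hb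
  have h1 : p - trunc t (a * g) ∈ I := by
    rw [← trunc_self hpt, ← hib]
    have : trunc t (i + a * g) - trunc t (a * g) = trunc t i := by rw [map_add]; ring
    rw [this]
    exact hI.trunc_mem hi t
  obtain ⟨g', hg', hgt⟩ : ∃ g' : MvPolynomial σ K, g'.totalDegree ≤ s ∧
      trunc t (a * g) = a * g' := by
    rcases lt_or_ge t e with h | h
    · exact ⟨0, by simp, by rw [trunc_mul_lt ha g t h]; simp⟩
    · refine ⟨trunc (t - e) g, (trunc_deg _ _).trans (by omega), ?_⟩
      rw [← trunc_mul ha]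
      congr 2
      omega
  refine ⟨Ideal.Quotient.mk Q g', ⟨g', (mem_restrictTotalDegree _ _ _).2 hg', rfl⟩, ?_⟩
  rw [hφ, ← hgt]
  symm
  change Ideal.Quotient.mk I p = _
  rw [Ideal.Quotient.eq]
  exact h1

end Alg
end FanoAux



namespace FanoAux

open MvPolynomial Module

section Alg2

variable {K : Type*} [Field K] {σ : Type*} [Finite σ]

theorem HomId.colon {I : Ideal (MvPolynomial σ K)} (hI : HomId I) {a : MvPolynomial σ K} {e : ℕ}
    (ha : a.IsHomogeneous e) :
    HomId (Submodule.comap (LinearMap.mulLeft (MvPolynomial σ K) a) I : Ideal _) := by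
  intro p hp n
  have h1 : a * p ∈ I := hp
  have h2 := hI _ h1 (n + e)
  rw [comp_mul ha, if_pos (by omega), Nat.add_sub_cancel] at h2
  exact h2

theorem HomId.sup_span {I : Ideal (MvPolynomial σ K)} (hI : HomId I) {a : MvPolynomial σ K} {e : ℕ}
    (ha : a.IsHomogeneous e) : HomId (I ⊔ Ideal.span {a}) := by
  intro p hp n
  obtain ⟨i, hi, b, hb, rfl⟩ := Submodule.mem_sup.1 hp
  obtain ⟨g, rfl⟩ := Ideal.mem_span_singleton.1 hb
  rw [map_add]
  refine Ideal.add_mem _ (Ideal.mem_sup_left (hI i hi n)) (Ideal.mem_sup_right ?_)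
  rw [comp_mul ha]
  split_ifs
  · exact Ideal.mul_mem_right _ _ (Ideal.mem_span_singleton_self a)
  · exact Ideal.zero_mem _

/-- The irrelevant ideal. -/
def irr (σ K : Type*) [Field K] : Ideal (MvPolynomial σ K) :=
  RingHom.ker (constantCoeff : MvPolynomial σ K →+* K)

theorem irr_prime : (irr σ K).IsPrime := RingHom.ker_isPrime _

theorem mem_irr {p : MvPolynomial σ K} : p ∈ irr σ K ↔ coeff 0 p = 0 := by
  rw [irr, RingHom.mem_ker, constantCoeff_eq]

theorem irr_hom : HomId (irr σ K) := by
  intro p hp n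
  rw [mem_irr] at *
  rw [coeff_homogeneousComponent, hp]
  simp

theorem HomId.le_irr {I : Ideal (MvPolynomial σ K)} (hI : HomId I) (h : I ≠ ⊤) : I ≤ irr σ K := by
  intro p hp
  rw [mem_irr]
  by_contra hc
  have h0 := hI p hp 0
  rw [homogeneousComponent_zero] at h0
  apply h
  apply Ideal.eq_top_of_isUnit_mem _ h0
  exact (isUnit_iff_ne_zero.2 hc).map C

theorem hF_le_one {I : Ideal (MvPolynomial σ K)} {t : ℕ}
    (h : ∀ p : MvPolynomial σ K, p.totalDegree ≤ t → ∃ c : K, p - C c ∈ I) : hF I t ≤ 1 := by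
  unfold hF
  refine (Submodule.finrank_mono (t := Submodule.span K {(1 : MvPolynomial σ K ⧸ I)}) ?_).trans
    ((finrank_span_le_card _).trans (by simp))
  rintro _ ⟨p, hp, rfl⟩
  obtain ⟨c, hc⟩ := h p ((mem_restrictTotalDegree _ _ _).1 hp)
  refine Submodule.mem_span_singleton.2 ⟨c, ?_⟩
  have := (Ideal.Quotient.eq (I := I)).2 hc
  change _ = Ideal.Quotient.mk I p
  rw [this, ← mul_one (C c), ← smul_eq_C_mul]
  exact ((Ideal.Quotient.mkₐ K I).toLinearMap.map_smul c 1).symm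

theorem hF_zero_le (I : Ideal (MvPolynomial σ K)) : hF I 0 ≤ 1 := by
  apply hF_le_one
  intro p hp
  refine ⟨coeff 0 p, ?_⟩
  rw [← totalDegree_eq_zero_iff_eq_C.1 (Nat.le_zero.1 hp), sub_self]
  exact I.zero_mem

theorem hF_irr (t : ℕ) : hF (irr σ K) t ≤ 1 := by
  apply hF_le_one
  intro p hp
  refine ⟨coeff 0 p, ?_⟩
  rw [mem_irr]
  simp

/-- homogeneous primes over `I` -/
abbrev HP (I : Ideal (MvPolynomial σ K)) := {P : Ideal (MvPolynomial σ K) // P.IsPrime ∧ HomId P ∧ I ≤ P}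

def HP.incl {I J : Ideal (MvPolynomial σ K)} (h : I ≤ J) (P : HP J) : HP I :=
  ⟨P.1, P.2.1, P.2.2.1, h.trans P.2.2.2⟩

theorem HP.incl_strictMono {I J : Ideal (MvPolynomial σ K)} (h : I ≤ J) :
    StrictMono (HP.incl h) := fun _ _ hab => hab

theorem Gr_of_chains (I : Ideal (MvPolynomial σ K)) : HomId I → ∀ n : ℕ,
    (∀ p : LTSeries (HP I), p.length ≤ n) → Gr I n := by
  induction I using WellFoundedGT.induction with
  | ind I ih =>
  intro hI n hn
  by_cases htop : I = ⊤
  · refine ⟨1, fun t => ?_⟩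
    have : hF I t ≤ 0 := by
      unfold hF
      rw [Nat.le_zero, Submodule.finrank_eq_zero, eq_bot_iff, Submodule.map_le_iff_le_comap]
      intro p _
      rw [Submodule.mem_comap, Submodule.mem_bot]
      change Ideal.Quotient.mk I p = 0
      rw [Ideal.Quotient.eq_zero_iff_mem, htop]
      trivial
    omega
  by_cases hp : I.IsPrime
  · rcases (hI.le_irr htop).eq_or_lt with heq | hlt
    · refine ⟨1, fun t => ?_⟩
      rw [heq]
      refine (hF_irr t).trans ?_
      rw [one_mul]
      exact Nat.one_le_pow _ _ (by omega)
    · -- a form of positive degree outside I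
      obtain ⟨_, f, hf, hfI⟩ := SetLike.lt_iff_le_and_exists.1 hlt
      obtain ⟨e, he⟩ : ∃ e, homogeneousComponent e f ∉ I := by
        by_contra hcon
        push Not at hcon
        apply hfI
        rw [← sum_homogeneousComponent f]
        exact I.sum_mem fun i _ => hcon i
      have he0 : e ≠ 0 := by
        rintro rfl
        rw [homogeneousComponent_zero, mem_irr.1 hf] at he
        simp at he
      set a := homogeneousComponent e f with ha_def
      have ha : a.IsHomogeneous e := homogeneousComponent_isHomogeneous e f
      set J := I ⊔ Ideal.span {a} with hJ
      have hIJ : I ≤ J := le_sup_left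
      have haJ : a ∈ J := Ideal.mem_sup_right (Ideal.mem_span_singleton_self a)
      have hIJ' : I < J := lt_of_le_of_ne hIJ (fun h => he (h ▸ haJ))
      obtain ⟨n', rfl⟩ : ∃ n', n = n' + 1 := by
        have h1 : (⟨I, hp, hI, le_rfl⟩ : HP I) < ⟨irr σ K, irr_prime, irr_hom, hlt.le⟩ := hlt
        have h2 := hn ((RelSeries.singleton _ (⟨irr σ K, irr_prime, irr_hom, hlt.le⟩ : HP I)).cons
          ⟨I, hp, hI, le_rfl⟩ h1)
        have h3 : 1 ≤ n := h2
        exact ⟨n - 1, by omega⟩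
      obtain ⟨D, hD⟩ := ih J hIJ' (hI.sup_span ha) n' (by
        intro p
        have hlt' : (⟨I, hp, hI, le_rfl⟩ : HP I) < (p.map _ (HP.incl_strictMono hIJ)).head := by
          change I < (p.head).1
          exact lt_of_lt_of_le hIJ' p.head.2.2.2
        have h2 := hn ((p.map _ (HP.incl_strictMono hIJ)).cons _ hlt')
        simp at h2
        exact h2)
      have step : ∀ t, hF I (t + 1) ≤ hF J (t + 1) + hF I t := fun t =>
        split_aux hI ha (fun g hg => I.mul_mem_left _ hg) _ _ (by omega)
      have bound : ∀ t, hF I t ≤ 1 + t * (D * (t + 1) ^ n') := by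
        intro t
        induction t with
        | zero => simpa using hF_zero_le I
        | succ t iht =>
          have h1 := step t
          have h2 := hD (t + 1)
          have h3 : t * (D * (t + 1) ^ n') ≤ t * (D * (t + 1 + 1) ^ n') := by gcongr; omega
          have h4 : (t + 1) * (D * (t + 1 + 1) ^ n') =
            t * (D * (t + 1 + 1) ^ n') + D * (t + 1 + 1) ^ n' := by ring
          omega
      refine ⟨1 + D, fun t => (bound t).trans ?_⟩
      have h1 : 1 ≤ (t + 1) ^ (n' + 1) := Nat.one_le_pow _ _ (by omega)
      have h2 : t * (D * (t + 1) ^ n') ≤ D * (t + 1) ^ (n' + 1) := by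
        calc t * (D * (t + 1) ^ n') ≤ (t + 1) * (D * (t + 1) ^ n') := by gcongr; omega
          _ = _ := by ring
      calc _ ≤ _ := Nat.add_le_add h1 h2
        _ = _ := by ring
  · obtain ⟨a, b, ⟨e, ha⟩, -, haI, hbI, hab⟩ := hI.exists_of_not_prime htop hp
    set J := I ⊔ Ideal.span {a} with hJ
    set Q : Ideal (MvPolynomial σ K) :=
      Submodule.comap (LinearMap.mulLeft (MvPolynomial σ K) a) I with hQ
    have hIJ : I ≤ J := le_sup_left
    have haJ : a ∈ J := Ideal.mem_sup_right (Ideal.mem_span_singleton_self a)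
    have hIJ' : I < J := lt_of_le_of_ne hIJ (fun h => haI (h ▸ haJ))
    have hIQ : I ≤ Q := fun g hg => I.mul_mem_left a hg
    have hbQ : b ∈ Q := hab
    have hIQ' : I < Q := lt_of_le_of_ne hIQ (fun h => hbI (h ▸ hbQ))
    obtain ⟨C1, h1⟩ := ih J hIJ' (hI.sup_span ha) n
      (fun p => hn (p.map _ (HP.incl_strictMono hIJ)))
    obtain ⟨C2, h2⟩ := ih Q hIQ' (hI.colon ha) n
      (fun p => hn (p.map _ (HP.incl_strictMono hIQ)))
    refine ⟨C1 + C2, fun t => ?_⟩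
    have h3 := split_aux hI ha (Q := Q) (fun g hg => hg) t t (by omega)
    calc _ ≤ _ := h3.trans (Nat.add_le_add (h1 t) (h2 t))
      _ = _ := by ring

end Alg2

section Prod

variable {K : Type*} [Field K] {τ : Type*} [Fintype τ]

theorem finrank_map₂_le {A B D : Type*} [AddCommGroup A] [Module K A] [AddCommGroup B] [Module K B]
    [AddCommGroup D] [Module K D] (f : A →ₗ[K] B →ₗ[K] D) (p : Submodule K A) (q : Submodule K B)
    [FiniteDimensional K p] [FiniteDimensional K q] :
    finrank K (Submodule.map₂ f p q) ≤ finrank K p * finrank K q ∧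
    FiniteDimensional K (Submodule.map₂ f p q) := by
  rw [TensorProduct.map₂_eq_range_lift_comp_mapIncl]
  refine ⟨(LinearMap.finrank_range_le _).trans ?_, inferInstance⟩
  rw [finrank_tensorProduct]

theorem mono_split (s : Fin 2 × τ →₀ ℕ) (t : ℕ) (hs : s.degree ≤ t) :
    ∃ p q : MvPolynomial τ K, p.totalDegree ≤ t ∧ q.totalDegree ≤ t ∧
      (monomial s 1 : MvPolynomial (Fin 2 × τ) K) =
        rename (fun j => (0, j)) p * rename (fun j => (1, j)) q := by
  rw [Finsupp.degree_eq_sum, Fintype.sum_prod_type, Fin.sum_univ_two] at hs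
  have aux : ∀ i : Fin 2, (∏ j, (X j : MvPolynomial τ K) ^ s (i, j)).totalDegree ≤ ∑ j, s (i, j) := by
    intro i
    refine (totalDegree_finsetProd _ _).trans ?_
    gcongr with j _
    rw [totalDegree_X_pow]
  refine ⟨∏ j, X j ^ s (0, j), ∏ j, X j ^ s (1, j), (aux 0).trans (by omega),
    (aux 1).trans (by omega), ?_⟩
  rw [monomial_eq, Finsupp.prod_fintype _ _ (by simp), Fintype.prod_prod_type, Fin.prod_univ_two]
  simp

theorem hF_prod {I : Ideal (MvPolynomial τ K)} {J : Ideal (MvPolynomial (Fin 2 × τ) K)}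
    (h : ∀ p ∈ I, ∀ i : Fin 2, rename (fun j => (i, j)) p ∈ J) (t : ℕ) :
    hF J t ≤ hF I t * hF I t := by
  let α : Fin 2 → (MvPolynomial τ K ⧸ I) →ₐ[K] (MvPolynomial (Fin 2 × τ) K ⧸ J) := fun i =>
    Ideal.Quotient.liftₐ I ((Ideal.Quotient.mkₐ K J).comp (rename (fun j => (i, j)))) (by
      intro p hp
      change Ideal.Quotient.mk J _ = 0
      rw [Ideal.Quotient.eq_zero_iff_mem]
      exact h p hp i)
  have hα : ∀ i p, α i (Ideal.Quotient.mk I p) = Ideal.Quotient.mk J (rename (fun j => (i, j)) p) :=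
    fun i p => rfl
  let B := (LinearMap.mul K (MvPolynomial (Fin 2 × τ) K ⧸ J)).compl₁₂ (α 0).toLinearMap
    (α 1).toLinearMap
  have hf := finrank_map₂_le B
    ((restrictTotalDegree τ K t).map (Ideal.Quotient.mkₐ K I).toLinearMap)
    ((restrictTotalDegree τ K t).map (Ideal.Quotient.mkₐ K I).toLinearMap)
  haveI := hf.2
  refine le_trans ?_ hf.1
  apply Submodule.finrank_mono
  rintro _ ⟨p, hp, rfl⟩
  have hpt : p.totalDegree ≤ t := (mem_restrictTotalDegree _ _ _).1 hp
  rw [p.as_sum, map_sum]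
  apply Submodule.sum_mem
  intro s hs
  have hst : s.degree ≤ t := (le_totalDegree hs).trans hpt
  obtain ⟨p1, p2, h1, h2, h3⟩ := mono_split (K := K) s t hst
  have h4 : monomial s (coeff s p) = coeff s p • (monomial s 1 : MvPolynomial (Fin 2 × τ) K) := by
    rw [smul_monomial, smul_eq_mul, mul_one]
  rw [h4, map_smul]
  apply Submodule.smul_mem
  have h5 : (Ideal.Quotient.mkₐ K J).toLinearMap (monomial s 1) =
      B (Ideal.Quotient.mk I p1) (Ideal.Quotient.mk I p2) := by
    change Ideal.Quotient.mk J (monomial s 1) =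
      Ideal.Quotient.mk J (rename (fun j => (0, j)) p1) *
      Ideal.Quotient.mk J (rename (fun j => (1, j)) p2)
    rw [h3, map_mul]
  rw [h5]
  exact Submodule.apply_mem_map₂ _ ⟨p1, (mem_restrictTotalDegree _ _ _).2 h1, rfl⟩
    ⟨p2, (mem_restrictTotalDegree _ _ _).2 h2, rfl⟩

theorem Gr_prod {I : Ideal (MvPolynomial τ K)} {J : Ideal (MvPolynomial (Fin 2 × τ) K)}
    (h : ∀ p ∈ I, ∀ i : Fin 2, rename (fun j => (i, j)) p ∈ J) {n : ℕ} (hI : Gr I n) :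
    Gr J (2 * n) := by
  obtain ⟨C, hC⟩ := hI
  refine ⟨C * C, fun t => (hF_prod h t).trans ?_⟩
  calc _ ≤ _ := Nat.mul_le_mul (hC t) (hC t)
    _ = _ := by ring

theorem finrank_restrict_ge (s : ℕ) :
    (s + 1) ^ 4 ≤ finrank K (restrictTotalDegree (Fin 2 × Fin 2) K (4 * s)) := by
  let m : (Fin 2 × Fin 2 → Fin (s + 1)) → (Fin 2 × Fin 2 →₀ ℕ) :=
    fun f => Finsupp.equivFunOnFinite.symm (fun i => (f i : ℕ))
  have hm : Function.Injective m := by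
    intro f g hfg
    funext i
    have := DFunLike.congr_fun hfg i
    exact Fin.ext this
  have hli := (basisMonomials (Fin 2 × Fin 2) K).linearIndependent.comp m hm
  have hmem : ∀ f, (basisMonomials (Fin 2 × Fin 2) K (m f)) ∈
      restrictTotalDegree (Fin 2 × Fin 2) K (4 * s) := by
    intro f
    rw [mem_restrictTotalDegree, coe_basisMonomials]
    refine (totalDegree_monomial_le _ _).trans ?_
    change (m f).degree ≤ _
    rw [Finsupp.degree_eq_sum]
    refine (Finset.sum_le_card_nsmul _ _ s ?_).trans (by simp)
    intro i _
    exact Nat.lt_succ_iff.1 (f i).2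
  have hli' : LinearIndependent K (fun f => (⟨_, hmem f⟩ : restrictTotalDegree (Fin 2 × Fin 2) K (4 * s))) :=
    LinearIndependent.of_comp (Submodule.subtype _) hli
  have := hli'.fintype_card_le_finrank
  simpa using this

theorem Gr_lower {ρ : Type*} [Finite ρ] {I : Ideal (MvPolynomial ρ K)}
    (l : Fin 2 × Fin 2 → MvPolynomial ρ K) (hl : ∀ i, (l i).totalDegree ≤ 1)
    (hinj : ∀ p : MvPolynomial (Fin 2 × Fin 2) K, aeval l p ∈ I → p = 0) {m : ℕ} (hG : Gr I m) : 4 ≤ m := by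
  have hdeg : ∀ p : MvPolynomial (Fin 2 × Fin 2) K, (aeval l p).totalDegree ≤ p.totalDegree := by
    intro p
    rw [aeval_def, eval₂_eq']
    apply totalDegree_finsetSum_le
    intro s hs
    refine (totalDegree_mul _ _).trans ?_
    rw [algebraMap_eq, totalDegree_C, zero_add]
    refine (totalDegree_finsetProd _ _).trans (le_trans ?_ (le_totalDegree hs))
    change _ ≤ s.degree
    rw [Finsupp.degree_eq_sum]
    gcongr with i _
    refine (totalDegree_pow _ _).trans ?_
    calc s i * (l i).totalDegree ≤ s i * 1 := by gcongr; exact hl i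
      _ = s i := by ring
  have key : ∀ t, finrank K (restrictTotalDegree (Fin 2 × Fin 2) K t) ≤ hF I t := by
    intro t
    let φ : MvPolynomial (Fin 2 × Fin 2) K →ₗ[K] (MvPolynomial ρ K ⧸ I) :=
      ((Ideal.Quotient.mkₐ K I).comp (aeval l)).toLinearMap
    have hφ : Function.Injective φ := by
      rw [← LinearMap.ker_eq_bot, LinearMap.ker_eq_bot']
      intro p hp
      apply hinj
      rw [← Ideal.Quotient.eq_zero_iff_mem]
      exact hp
    rw [(Submodule.equivMapOfInjective φ hφ _).finrank_eq]
    apply Submodule.finrank_mono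
    rintro _ ⟨p, hp, rfl⟩
    exact ⟨aeval l p, (mem_restrictTotalDegree _ _ _).2
      ((hdeg p).trans ((mem_restrictTotalDegree _ _ _).1 hp)), rfl⟩
  obtain ⟨C, hC⟩ := hG
  by_contra hm
  push Not at hm
  have h1 : ∀ s, s + 1 ≤ C * 4 ^ m := by
    intro s
    have h2 := (finrank_restrict_ge (K := K) s).trans ((key _).trans (hC (4 * s)))
    have h3 : (4 * s + 1) ^ m ≤ 4 ^ m * (s + 1) ^ 3 := by
      calc (4 * s + 1) ^ m ≤ (4 * (s + 1)) ^ m := by gcongr; omega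
        _ = 4 ^ m * (s + 1) ^ m := mul_pow _ _ _
        _ ≤ 4 ^ m * (s + 1) ^ 3 := by gcongr <;> omega
    have h4 : (s + 1) ^ 3 * (s + 1) ≤ (s + 1) ^ 3 * (C * 4 ^ m) := by
      calc _ = (s + 1) ^ 4 := by ring
        _ ≤ _ := h2
        _ ≤ C * (4 ^ m * (s + 1) ^ 3) := by gcongr
        _ = _ := by ring
    exact Nat.le_of_mul_le_mul_left h4 (by positivity)
  have := h1 (C * 4 ^ m)
  omega

end Prod
end FanoAux



namespace FanoAux

open MvPolynomial Module

section Cone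

theorem aev {K : Type*} [Field K] {σ : Type*} (x : σ → K) (p : MvPolynomial σ K) :
    aeval x p = eval x p :=
  congrFun (congrArg DFunLike.coe (coe_aeval_eq_eval x)) p

theorem eval_smul_hom {K : Type*} [Field K] {σ : Type*} {f : MvPolynomial σ K} {d : ℕ}
    (hf : f.IsHomogeneous d) (c : K) (x : σ → K) : eval (c • x) f = c ^ d * eval x f := by
  rw [eval_eq, eval_eq, Finset.mul_sum]
  refine Finset.sum_congr rfl fun m hm => ?_
  have h1 : m.degree = d := by
    have := hf (mem_support_iff.1 hm)
    rw [Finsupp.degree_eq_weight_one]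
    exact this
  have h2 : ∏ i ∈ m.support, (c • x) i ^ m i = c ^ d * ∏ i ∈ m.support, x i ^ m i := by
    simp only [Pi.smul_apply, smul_eq_mul, mul_pow, Finset.prod_mul_distrib]
    rw [Finset.prod_pow_eq_pow_sum, ← h1]
    rfl
  rw [h2]; ring

theorem homId_vanishing {K : Type*} [Field K] [Infinite K] {σ : Type*} {X : Set (σ → K)}
    (hX : ∀ (c : K), ∀ x ∈ X, c • x ∈ X) : HomId (vanishingIdeal K X) := by
  intro p hp n x hx
  have key : (∑ i ∈ Finset.range (p.totalDegree + 1),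
      Polynomial.C (eval x (homogeneousComponent i p)) * Polynomial.X ^ i) = 0 := by
    apply Polynomial.funext
    intro c
    have h1 := hp (c • x) (hX c x hx)
    rw [aev] at h1
    have h2 : eval (c • x) p = eval (c • x)
      (∑ i ∈ Finset.range (p.totalDegree + 1), homogeneousComponent i p) := by
      rw [sum_homogeneousComponent]
    rw [h2, map_sum] at h1
    rw [Polynomial.eval_finsetSum, Polynomial.eval_zero, ← h1]
    refine Finset.sum_congr rfl fun i _ => ?_
    rw [eval_smul_hom (homogeneousComponent_isHomogeneous i p)]
    rw [Polynomial.eval_mul, Polynomial.eval_C, Polynomial.eval_pow, Polynomial.eval_X, mul_comm]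
  rw [aev]
  by_cases hn : n < p.totalDegree + 1
  · have := congrArg (fun q => Polynomial.coeff q n) key
    simp only [Polynomial.finsetSum_coeff, Polynomial.coeff_C_mul_X_pow, Polynomial.coeff_zero] at this
    rw [Finset.sum_ite_eq, if_pos (Finset.mem_range.2 hn)] at this
    exact this
  · rw [homogeneousComponent_eq_zero _ _ (by omega)]; simp

variable {N : ℕ}

def cone (V : Set (Pn N)) : Set (Fin (N + 1) → KK) :=
  {x | ∀ h : x ≠ 0, Projectivization.mk KK x h ∈ V}

theorem zero_mem_cone (V : Set (Pn N)) : (0 : Fin (N + 1) → KK) ∈ cone V :=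
  fun h => (h rfl).elim

theorem smul_mem_cone {V : Set (Pn N)} (c : KK) (x : Fin (N + 1) → KK) (hx : x ∈ cone V) :
    c • x ∈ cone V := by
  intro h
  have hx0 : x ≠ 0 := by rintro rfl; simp at h
  have hc : c ≠ 0 := by rintro rfl; simp at h
  have := hx hx0
  convert this using 1
  rw [Projectivization.mk_eq_mk_iff']
  exact ⟨c, rfl⟩

theorem rep_mem_cone {V : Set (Pn N)} {z : Pn N} : z.rep ∈ cone V ↔ z ∈ V := by
  constructor
  · intro h
    have := h z.rep_nonzero
    rwa [Projectivization.mk_rep] at this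
  · intro h _
    rwa [Projectivization.mk_rep]

theorem eval_rep_iff {f : MvPolynomial (Fin (N + 1)) KK} {d : ℕ} (hf : f.IsHomogeneous d)
    (x : Fin (N + 1) → KK) (h : x ≠ 0) :
    eval (Projectivization.mk KK x h).rep f = 0 ↔ eval x f = 0 := by
  obtain ⟨a, ha⟩ := Projectivization.exists_smul_eq_mk_rep KK x h
  rw [← ha]
  have : eval (a • x) f = (a : KK) ^ d * eval x f := eval_smul_hom hf (a : KK) x
  rw [this]
  simp

theorem mk_mem_projZeros {S : Set (MvPolynomial (Fin (N + 1)) KK)}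
    (hS : ∀ f ∈ S, ∃ d, f.IsHomogeneous d) (x : Fin (N + 1) → KK) (h : x ≠ 0) :
    Projectivization.mk KK x h ∈ projZeros S ↔ ∀ f ∈ S, eval x f = 0 := by
  constructor
  · intro hm f hf
    obtain ⟨d, hd⟩ := hS f hf
    exact (eval_rep_iff hd x h).1 (hm f hf)
  · intro hm f hf
    obtain ⟨d, hd⟩ := hS f hf
    exact (eval_rep_iff hd x h).2 (hm f hf)

theorem eval_zero_of_eval {f : MvPolynomial (Fin (N + 1)) KK} {d : ℕ} (hf : f.IsHomogeneous d)
    (z : Fin (N + 1) → KK) (hz : eval z f = 0) : eval 0 f = 0 := by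
  have := eval_smul_hom hf 0 z
  rw [zero_smul, hz, mul_zero] at this
  exact this

def IV (V : Set (Pn N)) : Ideal (MvPolynomial (Fin (N + 1)) KK) := vanishingIdeal KK (cone V)

theorem mem_IV {V : Set (Pn N)} {f : MvPolynomial (Fin (N + 1)) KK} :
    f ∈ IV V ↔ ∀ x ∈ cone V, eval x f = 0 := by
  rw [IV, mem_vanishingIdeal_iff]
  simp only [aev]

instance : Infinite KK := inferInstance

theorem IV_hom (V : Set (Pn N)) : HomId (IV V) := homId_vanishing smul_mem_cone

theorem mem_IV_of_hom {V : Set (Pn N)} (hne : V.Nonempty) {f : MvPolynomial (Fin (N + 1)) KK} {d : ℕ}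
    (hf : f.IsHomogeneous d) (h : V ⊆ projZeros {f}) : f ∈ IV V := by
  rw [mem_IV]
  intro x hx
  by_cases h0 : x = 0
  · subst h0
    obtain ⟨z, hz⟩ := hne
    exact eval_zero_of_eval hf z.rep (h hz f rfl)
  · exact (eval_rep_iff hf x h0).1 (h (hx h0) f rfl)

theorem IV_ne_top (V : Set (Pn N)) : IV V ≠ ⊤ := by
  intro h
  have : (1 : MvPolynomial (Fin (N + 1)) KK) ∈ IV V := h ▸ Submodule.mem_top
  have := mem_IV.1 this 0 (zero_mem_cone V)
  simp at this

theorem IV_prime {V : Set (Pn N)} (hV : ProjVariety V) : (IV V).IsPrime := by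
  by_contra hp
  obtain ⟨a, b, ⟨d, ha⟩, ⟨e, hb⟩, hna, hnb, hab⟩ :=
    HomId.exists_of_not_prime (IV_hom V) (IV_ne_top V) hp
  have hne := hV.2.1
  have := hV.2.2 (projZeros {a}) (projZeros {b}) ⟨{a}, by simpa using ⟨d, ha⟩, rfl⟩
    ⟨{b}, by simpa using ⟨e, hb⟩, rfl⟩ (by
      intro z hz
      have h1 := mem_IV.1 hab z.rep (rep_mem_cone.2 hz)
      rw [map_mul, mul_eq_zero] at h1
      rcases h1 with h1 | h1
      · left; rintro f rfl; exact h1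
      · right; rintro f rfl; exact h1)
  rcases this with h | h
  · exact hna (mem_IV_of_hom hne ha h)
  · exact hnb (mem_IV_of_hom hne hb h)

theorem exists_not_mem_cone {V : Set (Pn N)} (hV : ProjVariety V) {x : Fin (N + 1) → KK}
    (hx : x ∉ cone V) : ∃ f ∈ IV V, eval x f ≠ 0 := by
  obtain ⟨S, hS, hVS⟩ := hV.1
  have h0 : x ≠ 0 := by rintro rfl; exact hx (zero_mem_cone V)
  have h1 : Projectivization.mk KK x h0 ∉ V := fun h => hx fun _ => h
  nth_rw 1 [hVS] at h1
  rw [mk_mem_projZeros hS] at h1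
  push Not at h1
  obtain ⟨f, hf, hfx⟩ := h1
  obtain ⟨d, hd⟩ := hS f hf
  refine ⟨f, mem_IV_of_hom hV.2.1 hd ?_, hfx⟩
  rw [hVS]
  rintro z hz g rfl
  exact hz _ hf

end Cone

end FanoAux



namespace FanoAux

open MvPolynomial Module

section ZP

variable {N : ℕ}

theorem mem_ideal_of_vanish {P : Ideal (MvPolynomial (Fin (N + 1)) KK)} (hP : P.IsPrime)
    {f : MvPolynomial (Fin (N + 1)) KK}
    (h : ∀ x, (∀ p ∈ P, eval x p = 0) → eval x f = 0) : f ∈ P := by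
  have h1 := IsPrime.vanishingIdeal_zeroLocus (K := KK) P
  rw [← h1, mem_vanishingIdeal_iff]
  intro x hx
  rw [aev]
  refine h x fun p hp => ?_
  rw [← aev]
  exact mem_zeroLocus_iff.1 hx p hp

def ZP (P : Ideal (MvPolynomial (Fin (N + 1)) KK)) : Set (Pn N) :=
  projZeros {f | f ∈ P ∧ ∃ d, f.IsHomogeneous d}

theorem mk_mem_ZP {P : Ideal (MvPolynomial (Fin (N + 1)) KK)} (hP : HomId P)
    (x : Fin (N + 1) → KK) (h : x ≠ 0) :
    Projectivization.mk KK x h ∈ ZP P ↔ ∀ p ∈ P, eval x p = 0 := by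
  rw [ZP, mk_mem_projZeros (fun f hf => hf.2)]
  constructor
  · intro h1 p hp
    rw [← sum_homogeneousComponent p, map_sum]
    exact Finset.sum_eq_zero fun i _ => h1 _ ⟨hP p hp i, i, homogeneousComponent_isHomogeneous i p⟩
  · intro h1 f hf
    exact h1 f hf.1

theorem rep_mem_ZP {P : Ideal (MvPolynomial (Fin (N + 1)) KK)} (hP : HomId P) {z : Pn N} :
    z ∈ ZP P ↔ ∀ p ∈ P, eval z.rep p = 0 := by
  rw [← mk_mem_ZP hP _ z.rep_nonzero, Projectivization.mk_rep]

theorem ZP_variety {P : Ideal (MvPolynomial (Fin (N + 1)) KK)} (hP : P.IsPrime) (hH : HomId P)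
    (hirr : P ≠ irr _ KK) : ProjVariety (ZP P) := by
  have hne : (ZP P).Nonempty := by
    by_contra hne
    apply hirr
    refine le_antisymm (hH.le_irr hP.ne_top) fun f hf => mem_ideal_of_vanish hP fun x hx => ?_
    by_cases h0 : x = 0
    · rw [h0, eval_zero]; exact mem_irr.1 hf
    · exact (hne ⟨_, (mk_mem_ZP hH x h0).2 hx⟩).elim
  refine ⟨⟨_, fun f hf => hf.2, rfl⟩, hne, ?_⟩
  rintro C₁ C₂ ⟨S₁, hS₁, rfl⟩ ⟨S₂, hS₂, rfl⟩ hsub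
  by_contra hcon
  push Not at hcon
  obtain ⟨h1, h2⟩ := hcon
  rw [Set.not_subset] at h1 h2
  obtain ⟨z₁, hz₁, h1⟩ := h1
  obtain ⟨z₂, hz₂, h2⟩ := h2
  have h1' : ∃ f ∈ S₁, eval z₁.rep f ≠ 0 := by
    by_contra hc; push Not at hc; exact h1 hc
  have h2' : ∃ f ∈ S₂, eval z₂.rep f ≠ 0 := by
    by_contra hc; push Not at hc; exact h2 hc
  obtain ⟨f, hf, hf1⟩ := h1'
  obtain ⟨g, hg, hg1⟩ := h2'
  obtain ⟨d, hd⟩ := hS₁ f hf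
  obtain ⟨e, he⟩ := hS₂ g hg
  have hvan : ∀ z ∈ ZP P, eval z.rep (f * g) = 0 := by
    intro z hz
    rw [map_mul, mul_eq_zero]
    exact (hsub hz).imp (fun h => h f hf) (fun h => h g hg)
  have hfg : f * g ∈ P := by
    refine mem_ideal_of_vanish hP fun x hx => ?_
    by_cases h0 : x = 0
    · rw [h0]; exact eval_zero_of_eval (hd.mul he) _ (hvan z₁ hz₁)
    · exact (eval_rep_iff (hd.mul he) x h0).1 (hvan _ ((mk_mem_ZP hH x h0).2 hx))
  rcases hP.mem_or_mem hfg with h | h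
  · exact hf1 ((rep_mem_ZP hH).1 hz₁ f h)
  · exact hg1 ((rep_mem_ZP hH).1 hz₂ g h)

theorem ZP_sub {V : Set (Pn N)} (hV : ProjVariety V) {P : Ideal (MvPolynomial (Fin (N + 1)) KK)}
    (hH : HomId P) (h : IV V ≤ P) : ZP P ⊆ V := by
  intro z hz
  rw [← rep_mem_cone]
  by_contra hc
  obtain ⟨f, hf, hfz⟩ := exists_not_mem_cone hV hc
  exact hfz ((rep_mem_ZP hH).1 hz f (h hf))

theorem ZP_lt {P Q : Ideal (MvPolynomial (Fin (N + 1)) KK)} (hP : P.IsPrime) (hHP : HomId P)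
    (hQ : Q.IsPrime) (hHQ : HomId Q) (h : P < Q) : ZP Q < ZP P := by
  refine ⟨fun z hz f hf => hz f ⟨h.le hf.1, hf.2⟩, fun hsub => h.not_ge fun f hf => ?_⟩
  refine mem_ideal_of_vanish hP fun x hx => ?_
  by_cases h0 : x = 0
  · rw [h0, eval_zero]; exact mem_irr.1 (hHQ.le_irr hQ.ne_top hf)
  · exact (mk_mem_ZP hHQ x h0).1 (hsub ((mk_mem_ZP hHP x h0).2 hx)) f hf

theorem Gr_IV {V : Set (Pn N)} (hV : ProjVariety V) {δ : ℕ}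
    (hdim : projDim V = ((δ : ENat) : WithBot ENat)) : Gr (IV V) (δ + 1) := by
  refine Gr_of_chains _ (IV_hom V) _ fun p => ?_
  rcases hl : p.length with _ | l
  · omega
  have hlt : ∀ i j : Fin (p.length + 1), i < j → (p i).1 < (p j).1 := fun i j hij => p.strictMono hij
  have hni : ∀ i : Fin (p.length + 1), i < Fin.last _ → (p i).1 ≠ irr _ KK := by
    intro i hi heq
    have h1 := hlt i _ hi
    rw [heq] at h1
    exact h1.not_ge ((p (Fin.last _)).2.2.1.le_irr (p (Fin.last _)).2.1.ne_top)
  let idx : Fin (l + 1) → Fin (p.length + 1) := fun i => ⟨l - i, by omega⟩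
  have hidx : ∀ i, idx i < Fin.last _ := by
    intro i
    rw [Fin.lt_def]
    simp only [idx, Fin.val_last]
    omega
  let q : LTSeries {W : Set (Pn N) // ProjVariety W ∧ W ⊆ V} :=
    LTSeries.mk l (fun i => ⟨ZP (p (idx i)).1,
      ZP_variety (p (idx i)).2.1 (p (idx i)).2.2.1 (hni _ (hidx i)),
      ZP_sub hV (p (idx i)).2.2.1 (p (idx i)).2.2.2⟩) (by
        intro i j hij
        have h1 : idx j < idx i := by
          rw [Fin.lt_def] at hij ⊢
          simp only [idx]
          omega
        exact ZP_lt (p (idx j)).2.1 (p (idx j)).2.2.1 (p (idx i)).2.1 (p (idx i)).2.2.1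
          (hlt _ _ h1))
  have h2 := Order.LTSeries.length_le_krullDim q
  have h3 : Order.krullDim {W : Set (Pn N) // ProjVariety W ∧ W ⊆ V} = _ := hdim
  rw [h3] at h2
  have h4 : l ≤ δ := by
    have : ((l : ENat) : WithBot ENat) ≤ ((δ : ENat) : WithBot ENat) := h2
    exact_mod_cast this
  omega

end ZP

end FanoAux



namespace FanoAux

open MvPolynomial Module

section Frames

variable {N : ℕ}

theorem eval_aeval' {K : Type*} [Field K] {σ τ : Type*} (x : τ → K) (g : σ → MvPolynomial τ K)
    (f : MvPolynomial σ K) : eval x (aeval g f) = eval (fun i => eval x (g i)) f := by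
  induction f using MvPolynomial.induction_on with
  | C a => simp
  | add p q hp hq => rw [map_add, map_add, map_add, hp, hq]
  | mul_X p i hp => rw [map_mul, map_mul, map_mul, hp, aeval_X, eval_X]

def un {m n : ℕ} (v : Fin m → Fin n → KK) : Fin m × Fin n → KK := fun p => v p.1 p.2

theorem un_curry (w : Fin 2 × Fin (N + 1) → KK) :
    un ![fun j => w (0, j), fun j => w (1, j)] = w := by
  funext ⟨i, j⟩
  fin_cases i <;> rfl

def JV (V : Set (Pn N)) : Ideal (MvPolynomial (Fin 2 × Fin (N + 1)) KK) :=
  vanishingIdeal KK {w : Fin 2 × Fin (N + 1) → KK | ∀ i, (fun j => w (i, j)) ∈ cone V}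

theorem mem_JV {V : Set (Pn N)} {f : MvPolynomial (Fin 2 × Fin (N + 1)) KK} :
    f ∈ JV V ↔ ∀ x ∈ cone V, ∀ y ∈ cone V, eval (un ![x, y]) f = 0 := by
  rw [JV, mem_vanishingIdeal_iff]
  simp only [aev]
  constructor
  · intro h x hx y hy
    refine h _ fun i => ?_
    fin_cases i
    · exact hx
    · exact hy
  · intro h w hw
    rw [← un_curry w]
    exact h _ (hw 0) _ (hw 1)

theorem Gr_JV {V : Set (Pn N)} {n : ℕ} (h : Gr (IV V) n) : Gr (JV V) (2 * n) := by
  refine Gr_prod (I := IV V) (fun p hp i => ?_) h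
  rw [mem_JV]
  intro x hx y hy
  rw [eval_rename]
  refine mem_IV.1 hp _ ?_
  fin_cases i
  · exact hx
  · exact hy

theorem slice_right (f : MvPolynomial (Fin 2 × Fin (N + 1)) KK) (y : Fin (N + 1) → KK) :
    ∃ g : MvPolynomial (Fin (N + 1)) KK, ∀ x, eval x g = eval (un ![x, y]) f := by
  refine ⟨aeval (fun p : Fin 2 × Fin (N + 1) => (if p.1 = 0 then X p.2 else C (y p.2) : MvPolynomial (Fin (N + 1)) KK)) f,
    fun x => ?_⟩
  rw [eval_aeval']
  congr 2
  funext ⟨i, j⟩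
  fin_cases i <;> simp [un]

theorem slice_left (f : MvPolynomial (Fin 2 × Fin (N + 1)) KK) (x : Fin (N + 1) → KK) :
    ∃ g : MvPolynomial (Fin (N + 1)) KK, ∀ y, eval y g = eval (un ![x, y]) f := by
  refine ⟨aeval (fun p : Fin 2 × Fin (N + 1) => (if p.1 = 1 then X p.2 else C (x p.2) : MvPolynomial (Fin (N + 1)) KK)) f,
    fun y => ?_⟩
  rw [eval_aeval']
  congr 2
  funext ⟨i, j⟩
  fin_cases i <;> simp [un]

theorem exists_both {V : Set (Pn N)} (hV : ProjVariety V) {f g : MvPolynomial (Fin (N + 1)) KK}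
    (hf : ∃ x ∈ cone V, eval x f ≠ 0) (hg : ∃ x ∈ cone V, eval x g ≠ 0) :
    ∃ x ∈ cone V, eval x f ≠ 0 ∧ eval x g ≠ 0 := by
  by_contra hc
  push Not at hc
  have : f * g ∈ IV V := by
    rw [mem_IV]
    intro x hx
    rw [map_mul, mul_eq_zero]
    by_cases h : eval x f = 0
    · exact Or.inl h
    · exact Or.inr (hc x hx h)
  rcases (IV_prime hV).mem_or_mem this with h | h
  · obtain ⟨x, hx, hx'⟩ := hf
    exact hx' (mem_IV.1 h x hx)
  · obtain ⟨x, hx, hx'⟩ := hg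
    exact hx' (mem_IV.1 h x hx)

theorem JV_prime {V : Set (Pn N)} (hV : ProjVariety V) : (JV V).IsPrime := by
  refine ⟨?_, ?_⟩
  · intro h
    have : (1 : MvPolynomial (Fin 2 × Fin (N + 1)) KK) ∈ JV V := h ▸ Submodule.mem_top
    have := mem_JV.1 this 0 (zero_mem_cone V) 0 (zero_mem_cone V)
    simp at this
  · intro f g hfg
    by_contra hc
    push Not at hc
    obtain ⟨hf, hg⟩ := hc
    rw [mem_JV] at hf hg
    push Not at hf hg
    obtain ⟨x₁, hx₁, y₁, hy₁, hf⟩ := hf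
    obtain ⟨x₂, hx₂, y₂, hy₂, hg⟩ := hg
    obtain ⟨f', hf'⟩ := slice_right f y₁
    obtain ⟨g', hg'⟩ := slice_right g y₂
    obtain ⟨x, hx, h1, h2⟩ := exists_both hV (f := f') (g := g')
      ⟨x₁, hx₁, by rwa [hf']⟩ ⟨x₂, hx₂, by rwa [hg']⟩
    rw [hf'] at h1
    rw [hg'] at h2
    obtain ⟨f'', hf''⟩ := slice_left f x
    obtain ⟨g'', hg''⟩ := slice_left g x
    obtain ⟨y, hy, h3, h4⟩ := exists_both hV (f := f'') (g := g'')
      ⟨y₁, hy₁, by rwa [hf'']⟩ ⟨y₂, hy₂, by rwa [hg'']⟩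
    rw [hf''] at h3
    rw [hg''] at h4
    have := mem_JV.1 hfg x hx y hy
    rw [map_mul, mul_eq_zero] at this
    exact this.elim h3 h4

/-! frames -/

def act (A : Fin 2 → Fin 2 → KK) (v : Fin 2 → Fin (N + 1) → KK) : Fin 2 → Fin (N + 1) → KK :=
  fun i j => A i 0 * v 0 j + A i 1 * v 1 j

def dt (A : Fin 2 → Fin 2 → KK) : KK := A 0 0 * A 1 1 - A 0 1 * A 1 0

def dtp : MvPolynomial (Fin 2 × Fin 2) KK := X (0, 0) * X (1, 1) - X (0, 1) * X (1, 0)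

theorem eval_dtp (A : Fin 2 → Fin 2 → KK) : eval (un A) dtp = dt A := by
  simp [dtp, dt, un]

theorem eq_zero_of_dt {h : MvPolynomial (Fin 2 × Fin 2) KK}
    (hh : ∀ A, dt A ≠ 0 → eval (un A) h = 0) : h = 0 := by
  have h1 : h * dtp = 0 := by
    apply MvPolynomial.funext
    intro w
    have hw : w = un (fun i j => w (i, j)) := rfl
    rw [hw, map_mul, eval_dtp, map_zero, mul_eq_zero]
    by_cases h0 : dt (fun i j => w (i, j)) = 0
    · exact Or.inr h0
    · exact Or.inl (hh _ h0)
  rcases mul_eq_zero.1 h1 with h2 | h2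
  · exact h2
  · exfalso
    have := eval_dtp ![![1, 0], ![0, 1]]
    rw [h2] at this
    simp [dt] at this

def mn (v : Fin 2 → Fin (N + 1) → KK) (j k : Fin (N + 1)) : KK := v 0 j * v 1 k - v 0 k * v 1 j

theorem li_iff (v : Fin 2 → Fin (N + 1) → KK) :
    LinearIndependent KK v ↔ ∃ j k, mn v j k ≠ 0 := by
  rw [Fintype.linearIndependent_iff]
  simp only [Fin.sum_univ_two]
  constructor
  · intro h
    by_contra hc
    push Not at hc
    by_cases h0 : v 0 = 0
    · have := h ![1, 0] (by simp [h0]) 0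
      simp at this
    · obtain ⟨j, hj⟩ := Function.ne_iff.1 h0
      have := h ![v 1 j, - v 0 j] (by
        funext k
        have := hc j k
        simp only [mn] at this
        simp only [Pi.add_apply, Pi.smul_apply, smul_eq_mul, Matrix.cons_val_zero,
          Matrix.cons_val_one, Pi.zero_apply]
        linear_combination -this) 1
      simp at this
      exact hj this
  · rintro ⟨j, k, hjk⟩ g hg
    have hj := congrFun hg j
    have hk := congrFun hg k
    simp only [Pi.add_apply, Pi.smul_apply, smul_eq_mul, Pi.zero_apply] at hj hk
    have h0 : g 0 * mn v j k = 0 := by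
      simp only [mn]; linear_combination v 1 k * hj - v 1 j * hk
    have h1 : g 1 * mn v j k = 0 := by
      simp only [mn]; linear_combination v 0 j * hk - v 0 k * hj
    intro i
    fin_cases i
    · exact (mul_eq_zero.1 h0).resolve_right hjk
    · exact (mul_eq_zero.1 h1).resolve_right hjk

theorem mn_act (A : Fin 2 → Fin 2 → KK) (v : Fin 2 → Fin (N + 1) → KK) (j k : Fin (N + 1)) :
    mn (act A v) j k = dt A * mn v j k := by
  simp only [mn, act, dt]; ring

theorem li_act {A : Fin 2 → Fin 2 → KK} (hA : dt A ≠ 0) {v : Fin 2 → Fin (N + 1) → KK}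
    (hv : LinearIndependent KK v) : LinearIndependent KK (act A v) := by
  rw [li_iff] at hv ⊢
  obtain ⟨j, k, h⟩ := hv
  exact ⟨j, k, by rw [mn_act]; exact mul_ne_zero hA h⟩

theorem span_act_le (A : Fin 2 → Fin 2 → KK) (v : Fin 2 → Fin (N + 1) → KK) :
    Submodule.span KK (Set.range (act A v)) ≤ Submodule.span KK (Set.range v) := by
  rw [Submodule.span_le]
  rintro _ ⟨i, rfl⟩
  have : act A v i = A i 0 • v 0 + A i 1 • v 1 := rfl
  rw [this]
  exact Submodule.add_mem _ (Submodule.smul_mem _ _ (Submodule.subset_span ⟨0, rfl⟩))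
    (Submodule.smul_mem _ _ (Submodule.subset_span ⟨1, rfl⟩))

theorem span_act {A : Fin 2 → Fin 2 → KK} (hA : dt A ≠ 0) {v : Fin 2 → Fin (N + 1) → KK}
    (hv : LinearIndependent KK v) :
    Submodule.span KK (Set.range (act A v)) = Submodule.span KK (Set.range v) := by
  apply Submodule.eq_of_le_of_finrank_eq (span_act_le A v)
  rw [finrank_span_eq_card hv, finrank_span_eq_card (li_act hA hv)]

theorem exists_act {v v' : Fin 2 → Fin (N + 1) → KK} (hv' : LinearIndependent KK v')
    (h : Submodule.span KK (Set.range v') = Submodule.span KK (Set.range v)) :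
    ∃ A, dt A ≠ 0 ∧ v' = act A v := by
  have h1 : ∀ i, ∃ c : Fin 2 → KK, ∑ k, c k • v k = v' i := by
    intro i
    rw [← Submodule.mem_span_range_iff_exists_fun, ← h]
    exact Submodule.subset_span ⟨i, rfl⟩
  choose A hA using h1
  have h2 : v' = act A v := by
    funext i j
    rw [← hA i, Fin.sum_univ_two]; rfl
  refine ⟨A, ?_, h2⟩
  intro h0
  rw [li_iff] at hv'
  obtain ⟨j, k, hjk⟩ := hv'
  rw [h2, mn_act, h0, zero_mul] at hjk
  exact hjk rfl

theorem act_one (v : Fin 2 → Fin (N + 1) → KK) : act ![![1, 0], ![0, 1]] v = v := by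
  funext i j
  fin_cases i <;> simp [act]

theorem exists_frame {Λ : Submodule KK (Fin (N + 1) → KK)} (h : finrank KK Λ = 2) :
    ∃ v : Fin 2 → Fin (N + 1) → KK, LinearIndependent KK v ∧ Submodule.span KK (Set.range v) = Λ := by
  let b := Module.finBasisOfFinrankEq KK Λ h
  refine ⟨fun i => (b i : Fin (N + 1) → KK), ?_, ?_⟩
  · exact b.linearIndependent.map' Λ.subtype (Submodule.ker_subtype _)
  · have : Set.range (fun i => (b i : Fin (N + 1) → KK)) = Λ.subtype '' Set.range b := by
      rw [← Set.range_comp]; rfl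
    rw [this, Submodule.span_image, b.span_eq, Submodule.map_top, Submodule.range_subtype]

/-- the pull back of `f` along `A ↦ act A v` -/
theorem pull_A (f : MvPolynomial (Fin 2 × Fin (N + 1)) KK) (v : Fin 2 → Fin (N + 1) → KK) :
    ∃ g : MvPolynomial (Fin 2 × Fin 2) KK, ∀ A, eval (un A) g = eval (un (act A v)) f := by
  refine ⟨aeval (fun p : Fin 2 × Fin (N + 1) =>
    (X (p.1, 0) * C (v 0 p.2) + X (p.1, 1) * C (v 1 p.2) : MvPolynomial (Fin 2 × Fin 2) KK)) f,
    fun A => ?_⟩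
  rw [eval_aeval']
  congr 2
  funext p
  simp [un, act]

theorem pull_v (f : MvPolynomial (Fin 2 × Fin (N + 1)) KK) (A : Fin 2 → Fin 2 → KK) :
    ∃ g : MvPolynomial (Fin 2 × Fin (N + 1)) KK, ∀ v, eval (un v) g = eval (un (act A v)) f := by
  refine ⟨aeval (fun p : Fin 2 × Fin (N + 1) =>
    (C (A p.1 0) * X (0, p.2) + C (A p.1 1) * X (1, p.2) : MvPolynomial (Fin 2 × Fin (N + 1)) KK)) f,
    fun v => ?_⟩
  rw [eval_aeval']
  congr 2
  funext p
  simp [un, act]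

end Frames

end FanoAux



namespace FanoAux

open MvPolynomial Module

section Iz

variable {N : ℕ}

abbrev Sub (N : ℕ) := Submodule KK (Fin (N + 1) → KK)

def Iz (Z : Set (Sub N)) : Ideal (MvPolynomial (Fin 2 × Fin (N + 1)) KK) :=
  vanishingIdeal KK {w | ∃ v : Fin 2 → Fin (N + 1) → KK, LinearIndependent KK v ∧
    Submodule.span KK (Set.range v) ∈ Z ∧ w = un v}

theorem mem_Iz {Z : Set (Sub N)} {f : MvPolynomial (Fin 2 × Fin (N + 1)) KK} :
    f ∈ Iz Z ↔ ∀ v : Fin 2 → Fin (N + 1) → KK, LinearIndependent KK v →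
      Submodule.span KK (Set.range v) ∈ Z → eval (un v) f = 0 := by
  rw [Iz, mem_vanishingIdeal_iff]
  simp only [aev]
  constructor
  · intro h v h1 h2
    exact h _ ⟨v, h1, h2, rfl⟩
  · rintro h _ ⟨v, h1, h2, rfl⟩
    exact h v h1 h2

theorem GrClosed.dest {Z : Set (Sub N)} (h : GrClosed 1 N Z) :
    (∀ W ∈ Z, finrank KK W = 2) ∧ ∃ S : Set (MvPolynomial (Fin 2 × Fin (N + 1)) KK),
      ∀ v : Fin 2 → Fin (N + 1) → KK,
        (LinearIndependent KK v → Submodule.span KK (Set.range v) ∈ Z) ↔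
          ∀ f ∈ S, eval (un v) f = 0 := by
  refine ⟨h.1, ?_⟩
  obtain ⟨S, hS⟩ := h.2
  exact ⟨S, fun v => Set.ext_iff.1 hS v⟩

theorem GrClosed.intro {Z : Set (Sub N)} (h1 : ∀ W ∈ Z, finrank KK W = 2)
    (S : Set (MvPolynomial (Fin 2 × Fin (N + 1)) KK))
    (h2 : ∀ v : Fin 2 → Fin (N + 1) → KK,
        (LinearIndependent KK v → Submodule.span KK (Set.range v) ∈ Z) ↔
          ∀ f ∈ S, eval (un v) f = 0) : GrClosed 1 N Z :=
  ⟨h1, S, Set.ext h2⟩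

def Cf (Z : Set (Sub N)) (f : MvPolynomial (Fin 2 × Fin (N + 1)) KK) : Set (Sub N) :=
  {Λ | Λ ∈ Z ∧ ∀ v : Fin 2 → Fin (N + 1) → KK, LinearIndependent KK v →
      Submodule.span KK (Set.range v) = Λ → eval (un v) f = 0}

def mnp (j k : Fin (N + 1)) : MvPolynomial (Fin 2 × Fin (N + 1)) KK :=
  X (0, j) * X (1, k) - X (0, k) * X (1, j)

theorem eval_mnp (v : Fin 2 → Fin (N + 1) → KK) (j k : Fin (N + 1)) :
    eval (un v) (mnp j k) = mn v j k := by
  simp [mnp, mn, un]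

theorem Cf_closed {Z : Set (Sub N)} (hZ : GrClosed 1 N Z)
    (f : MvPolynomial (Fin 2 × Fin (N + 1)) KK) : GrClosed 1 N (Cf Z f) := by
  obtain ⟨h1, S, hS⟩ := GrClosed.dest hZ
  refine GrClosed.intro (fun W hW => h1 W hW.1)
    (S ∪ {p | ∃ (A : Fin 2 → Fin 2 → KK) (j k : Fin (N + 1)), dt A ≠ 0 ∧
      p = mnp j k * Classical.choose (pull_v f A)}) fun v => ⟨fun h => ?_, fun h hv => ?_⟩
  · rintro g (hg | ⟨A, j, k, hA, rfl⟩)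
    · exact (hS v).1 (fun hv => (h hv).1) g hg
    · rw [map_mul, Classical.choose_spec (pull_v f A), eval_mnp, mul_eq_zero]
      by_cases hv : LinearIndependent KK v
      · exact Or.inr ((h hv).2 _ (li_act hA hv) (span_act hA hv))
      · left
        by_contra hc
        exact hv ((li_iff v).2 ⟨j, k, hc⟩)
  · refine ⟨(hS v).2 (fun g hg => h g (Or.inl hg)) hv, fun v' hv' hsp => ?_⟩
    obtain ⟨A, hA, rfl⟩ := exists_act hv' hsp
    obtain ⟨j, k, hjk⟩ := (li_iff v).1 hv
    have := h _ (Or.inr ⟨A, j, k, hA, rfl⟩)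
    rw [map_mul, Classical.choose_spec (pull_v f A), eval_mnp, mul_eq_zero] at this
    exact this.resolve_left hjk

theorem mem_Iz_of_Cf {Z : Set (Sub N)} {f : MvPolynomial (Fin 2 × Fin (N + 1)) KK}
    (h : Z ⊆ Cf Z f) : f ∈ Iz Z :=
  mem_Iz.2 fun v hv hvZ => (h hvZ).2 v hv rfl

theorem Iz_prime {Z : Set (Sub N)} (hZ : GrVariety 1 N Z) : (Iz Z).IsPrime := by
  refine ⟨?_, ?_⟩
  · intro h
    obtain ⟨Λ, hΛ⟩ := hZ.2.1
    obtain ⟨v, hv, hsp⟩ := exists_frame (hZ.1.1 Λ hΛ)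
    have : (1 : MvPolynomial (Fin 2 × Fin (N + 1)) KK) ∈ Iz Z := h ▸ Submodule.mem_top
    have := mem_Iz.1 this v hv (hsp ▸ hΛ)
    simp at this
  · intro f g hfg
    have key : Z ⊆ Cf Z f ∪ Cf Z g := by
      intro Λ hΛ
      by_contra hc
      have hf : ∃ v : Fin 2 → Fin (N + 1) → KK, LinearIndependent KK v ∧
          Submodule.span KK (Set.range v) = Λ ∧ eval (un v) f ≠ 0 := by
        by_contra h'
        push Not at h'
        exact hc (Or.inl ⟨hΛ, h'⟩)
      have hg : ∃ v : Fin 2 → Fin (N + 1) → KK, LinearIndependent KK v ∧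
          Submodule.span KK (Set.range v) = Λ ∧ eval (un v) g ≠ 0 := by
        by_contra h'
        push Not at h'
        exact hc (Or.inr ⟨hΛ, h'⟩)
      obtain ⟨v, hv, hsp, hfv⟩ := hf
      obtain ⟨v', hv', hsp', hgv⟩ := hg
      obtain ⟨A, hA, rfl⟩ := exists_act (v := v) hv' (hsp'.trans hsp.symm)
      obtain ⟨F, hF⟩ := pull_A f v
      obtain ⟨G, hG⟩ := pull_A g v
      have hF0 : F ≠ 0 := by
        rintro rfl
        have := hF ![![1, 0], ![0, 1]]
        rw [act_one, map_zero] at this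
        exact hfv this.symm
      have hG0 : G ≠ 0 := by
        rintro rfl
        have := hG A
        rw [map_zero] at this
        exact hgv this.symm
      refine mul_ne_zero hF0 hG0 (eq_zero_of_dt fun B hB => ?_)
      rw [map_mul, hF, hG, ← map_mul]
      exact mem_Iz.1 hfg _ (li_act hB hv) (by rw [span_act hB hv, hsp]; exact hΛ)
    exact (hZ.2.2 _ _ (Cf_closed hZ.1 f) (Cf_closed hZ.1 g) key).imp mem_Iz_of_Cf mem_Iz_of_Cf

theorem Iz_lower {Z : Set (Sub N)} (hZ : GrVariety 1 N Z) {m : ℕ} (h : Gr (Iz Z) m) : 4 ≤ m := by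
  obtain ⟨Λ, hΛ⟩ := hZ.2.1
  obtain ⟨v, hv, hsp⟩ := exists_frame (hZ.1.1 Λ hΛ)
  obtain ⟨j, k, hjk⟩ := (li_iff v).1 hv
  let a : Fin 2 → KK := ![v 1 k / mn v j k, - v 0 k / mn v j k]
  let b : Fin 2 → KK := ![- v 1 j / mn v j k, v 0 j / mn v j k]
  refine Gr_lower (fun p : Fin 2 × Fin 2 =>
    (C (a p.2) * X (p.1, j) + C (b p.2) * X (p.1, k) : MvPolynomial (Fin 2 × Fin (N + 1)) KK))
    (fun i => ?_) (fun p hp => ?_) h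
  · refine (totalDegree_add _ _).trans (max_le ?_ ?_)
    all_goals
      refine (totalDegree_mul _ _).trans ?_
      rw [totalDegree_C, totalDegree_X]
  · refine eq_zero_of_dt fun A hA => ?_
    have h1 := mem_Iz.1 hp _ (li_act hA hv) (by rw [span_act hA hv, hsp]; exact hΛ)
    rw [eval_aeval'] at h1
    rw [← h1]
    congr 2
    funext ⟨i, l⟩
    simp only [map_add, map_mul, eval_C, eval_X, un, act]
    have hD : mn v j k = v 0 j * v 1 k - v 0 k * v 1 j := rfl
    fin_cases l
    · simp only [a, b, Fin.zero_eta, Matrix.cons_val_zero]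
      generalize mn v j k = D at hjk hD
      field_simp
      rw [hD]
      ring
    · simp only [a, b, Fin.mk_one, Matrix.cons_val_one, Matrix.cons_val_zero]
      generalize mn v j k = D at hjk hD
      field_simp
      rw [hD]
      ring

theorem planeSet_sub_iff {Λ : Sub N} {V : Set (Pn N)} (h : planeSet Λ ⊆ V)
    {x : Fin (N + 1) → KK} (hx : x ∈ Λ) : x ∈ cone V := by
  intro h0
  apply h
  obtain ⟨a, ha⟩ := Projectivization.exists_smul_eq_mk_rep KK x h0
  change (Projectivization.mk KK x h0).rep ∈ Λ
  rw [← ha]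
  exact Λ.smul_mem (a : KK) hx

theorem JV_le_Iz {V : Set (Pn N)} {Z : Set (Sub N)} (hZ : Z ⊆ Fano 1 N V) : JV V ≤ Iz Z := by
  intro f hf
  rw [mem_Iz]
  intro v hv hvZ
  have h1 : ∀ i, v i ∈ cone V := fun i =>
    planeSet_sub_iff (hZ hvZ).2 (Submodule.subset_span ⟨i, rfl⟩)
  have := mem_JV.1 hf _ (h1 0) _ (h1 1)
  have h2 : ![v 0, v 1] = v := by
    funext i; fin_cases i <;> rfl
  rwa [h2] at this

theorem Iz_lt {Z Z' : Set (Sub N)} (hZ : GrVariety 1 N Z) (hZ' : GrVariety 1 N Z') (h : Z < Z') :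
    Iz Z' < Iz Z := by
  refine ⟨fun f hf => mem_Iz.2 fun v hv hvZ => mem_Iz.1 hf v hv (h.1 hvZ), fun hle => ?_⟩
  obtain ⟨Λ, hΛ, hΛ'⟩ := Set.not_subset.1 h.2
  obtain ⟨v, hv, hsp⟩ := exists_frame (hZ'.1.1 Λ hΛ)
  obtain ⟨h1, S, hS⟩ := GrClosed.dest hZ.1
  apply hΛ'
  rw [← hsp]
  refine (hS v).2 (fun f hf => ?_) hv
  refine mem_Iz.1 (hle (mem_Iz.2 fun u hu huZ => ?_)) v hv (hsp ▸ hΛ)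
  exact (hS u).1 (fun _ => huZ) f hf

theorem chain_bound {V : Set (Pn N)} {n : ℕ}
    (hn : ∀ Z : Set (Sub N), GrVariety 1 N Z → Z ⊆ Fano 1 N V → Gr (Iz Z) n)
    (p : LTSeries {W : Set (Sub N) // GrVariety 1 N W ∧ W ⊆ Fano 1 N V}) : p.length + 4 ≤ n := by
  have key : ∀ i (hi : i ≤ p.length), ∃ m, m + i = n ∧
      Gr (Iz (p ⟨p.length - i, by omega⟩).1) m := by
    intro i
    induction i with
    | zero => exact fun _ => ⟨n, rfl, hn _ (p _).2.1 (p _).2.2⟩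
    | succ i ih =>
      intro hi
      obtain ⟨m, hm, hG⟩ := ih (by omega)
      have h4 := Iz_lower (p ⟨p.length - i, by omega⟩).2.1 hG
      obtain ⟨m', rfl⟩ : ∃ m', m = m' + 1 := ⟨m - 1, by omega⟩
      refine ⟨m', by omega, Gr.drop (Iz_prime (p ⟨p.length - i, by omega⟩).2.1) ?_ hG⟩
      refine Iz_lt (p _).2.1 (p _).2.1 (p.strictMono ?_)
      rw [Fin.lt_def]
      change p.length - (i + 1) < p.length - i
      omega
  obtain ⟨m, hm, hG⟩ := key p.length le_rfl
  have := Iz_lower (p _).2.1 hG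
  omega

theorem grDim_bound {V : Set (Pn N)} {n c δ : ℕ}
    (hn : ∀ Z : Set (Sub N), GrVariety 1 N Z → Z ⊆ Fano 1 N V → Gr (Iz Z) n)
    (hc : n + c = 2 * δ + 4) :
    grDim 1 N (Fano 1 N V) + ((c : ENat) : WithBot ENat) ≤ (((2 * δ : ℕ) : ENat) : WithBot ENat) := by
  rw [grDim]
  rcases isEmpty_or_nonempty {W : Set (Sub N) // GrVariety 1 N W ∧ W ⊆ Fano 1 N V} with he | ⟨⟨W⟩⟩
  · rw [Order.krullDim_eq_bot]
    simp
  · have h4 := chain_bound hn (RelSeries.singleton _ W)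
    have h5 : 4 ≤ n := by omega
    have : Order.krullDim {W : Set (Sub N) // GrVariety 1 N W ∧ W ⊆ Fano 1 N V} ≤
        (((n - 4 : ℕ) : ENat) : WithBot ENat) := by
      refine iSup_le fun p => ?_
      have := chain_bound hn p
      have h6 : p.length ≤ n - 4 := by omega
      exact_mod_cast h6
    refine (add_le_add_left this _).trans ?_
    have h7 : n - 4 + c = 2 * δ := by omega
    rw [← h7]
    push_cast
    exact le_rfl

end Iz

end FanoAux



namespace FanoAux

open MvPolynomial Module

section Fin

variable {N : ℕ}

theorem Gr_Iz_nonlinear {V : Set (Pn N)} (hV : ProjVariety V) {n : ℕ} (hn : Gr (JV V) (n + 1))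
    {x y : Fin (N + 1) → KK} (hx : x ∈ cone V) (hy : y ∈ cone V) (hxy : x + y ∉ cone V)
    {Z : Set (Sub N)} (hZ : Z ⊆ Fano 1 N V) : Gr (Iz Z) n := by
  refine Gr.drop (JV_prime hV) (lt_of_le_of_ne (JV_le_Iz hZ) ?_) hn
  intro heq
  obtain ⟨f, hf, hfx⟩ := exists_not_mem_cone hV hxy
  let F : MvPolynomial (Fin 2 × Fin (N + 1)) KK :=
    aeval (fun j => (X (0, j) + X (1, j) : MvPolynomial (Fin 2 × Fin (N + 1)) KK)) f
  have hF : ∀ v : Fin 2 → Fin (N + 1) → KK, eval (un v) F = eval (v 0 + v 1) f := by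
    intro v
    rw [eval_aeval']
    congr 2
    funext j
    simp [un]
  have h1 : F ∈ Iz Z := by
    rw [mem_Iz]
    intro v hv hvZ
    rw [hF]
    refine mem_IV.1 hf _ (planeSet_sub_iff (hZ hvZ).2 ?_)
    exact Submodule.add_mem _ (Submodule.subset_span ⟨0, rfl⟩) (Submodule.subset_span ⟨1, rfl⟩)
  rw [← heq] at h1
  have h2 := mem_JV.1 h1 x hx y hy
  rw [hF] at h2
  exact hfx h2

theorem deg_le_one {V : Set (Pn N)} (h : ∀ x ∈ cone V, ∀ y ∈ cone V, x + y ∈ cone V) :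
    projDeg V ≤ 1 := by
  refine csSup_le' ?_
  rintro k ⟨W, hfin, rfl⟩
  rw [Set.ncard_le_one hfin]
  intro a ha b hb
  by_contra hab
  have hli : LinearIndependent KK (Projectivization.rep ∘ ![a, b]) := by
    rw [← Projectivization.independent_iff]
    exact (Projectivization.independent_pair_iff_ne a b).2 hab
  have hli2 : ∀ s t : KK, s • a.rep + t • b.rep = 0 → s = 0 ∧ t = 0 := by
    intro s t hst
    rw [Fintype.linearIndependent_iff] at hli
    have := hli ![s, t] (by rw [Fin.sum_univ_two]; exact hst)
    exact ⟨this 0, this 1⟩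
  have hne : ∀ c : KK, a.rep + c • b.rep ≠ 0 := by
    intro c hc
    have := (hli2 1 c (by rw [one_smul]; exact hc)).1
    exact one_ne_zero this
  let φ : KK → Pn N := fun c => Projectivization.mk KK (a.rep + c • b.rep) (hne c)
  have hinj : Function.Injective φ := by
    intro c c' hcc
    obtain ⟨t, ht⟩ := (Projectivization.mk_eq_mk_iff' _ _ _ _ _).1 hcc
    have h1 := hli2 (t - 1) (t * c' - c) (by
      rw [smul_add] at ht
      rw [sub_smul, sub_smul, one_smul, mul_smul]
      rw [← sub_eq_zero] at ht
      rw [← ht]; abel)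
    have h2 : t = 1 := sub_eq_zero.1 h1.1
    have h3 := h1.2
    rw [h2, one_mul] at h3
    exact (sub_eq_zero.1 h3).symm
  refine Set.infinite_of_injective_forall_mem hinj (s := V ∩ planeSet W) (fun c => ?_) hfin
  refine ⟨h _ (rep_mem_cone.2 ha.1) _ (smul_mem_cone c _ (rep_mem_cone.2 hb.1)) (hne c), ?_⟩
  obtain ⟨u, hu⟩ := Projectivization.exists_smul_eq_mk_rep KK (a.rep + c • b.rep) (hne c)
  change (Projectivization.mk KK (a.rep + c • b.rep) (hne c)).rep ∈ W
  rw [← hu]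
  exact W.smul_mem (u : KK) (W.add_mem ha.2 (W.smul_mem c hb.2))

theorem main (N d δ : ℕ) (V : Set (Pn N)) (hV : ProjVariety V)
    (hdeg : projDeg V = d) (hdim : projDim V = ((δ : ENat) : WithBot ENat)) :
    (d = 1 → grDim 1 N (Fano 1 N V) + ((2 : ENat) : WithBot ENat) ≤
      (((2 * δ : ℕ) : ENat) : WithBot ENat)) ∧
    (2 ≤ d → grDim 1 N (Fano 1 N V) + ((3 : ENat) : WithBot ENat) ≤
      (((2 * δ : ℕ) : ENat) : WithBot ENat)) := by
  have hG : Gr (JV V) (2 * (δ + 1)) := Gr_JV (Gr_IV hV hdim)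
  refine ⟨fun _ => ?_, fun hd => ?_⟩
  · exact grDim_bound (c := 2) (n := 2 * (δ + 1)) (fun Z _ hZ => Gr.anti (JV_le_Iz hZ) hG) (by omega)
  · have hnl : ¬ ∀ x ∈ cone V, ∀ y ∈ cone V, x + y ∈ cone V := by
      intro h
      have := deg_le_one h
      omega
    push Not at hnl
    obtain ⟨x, hx, y, hy, hxy⟩ := hnl
    exact grDim_bound (c := 3) (n := 2 * δ + 1)
      (fun Z _ hZ => Gr_Iz_nonlinear hV hG hx hy hxy hZ) (by omega)

end Fin

end FanoAux


end FanoHelpers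

/-- **Lemma 6.** Let V ⊂ Pᴺ be a geometrically integral projective variety of
degree d and dimension δ.  Then the Fano variety F₁(V) of lines contained in V has
dimension at most 2δ - 2 if d = 1, and at most 2δ - 3 if d ≥ 2 (the inequalities
being expressed additively so as to respect the convention that the empty set is
the only algebraic set of negative dimension). -/
theorem statement7 (N d δ : ℕ) (V : Set (Pn N)) (hV : ProjVariety V)
    (hdeg : projDeg V = d) (hdim : projDim V = ((δ : ENat) : WithBot ENat)) :
    (d = 1 → grDim 1 N (Fano 1 N V) + ((2 : ENat) : WithBot ENat) ≤
      (((2 * δ : ℕ) : ENat) : WithBot ENat)) ∧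
    (2 ≤ d → grDim 1 N (Fano 1 N V) + ((3 : ENat) : WithBot ENat) ≤
      (((2 * δ : ℕ) : ENat) : WithBot ENat)) := by
  exact FanoAux.main N d δ V hV hdeg hdim

end
end

section
/- Let k be a field, let X ⊂ P^n_k be a hypersurface of degree d > 1, and let m be an integer with 2m ≥ n. Then every m-plane Λ ⊆ X intersects the singular locus of X; equivalently, if a homogeneous polynomial F of degree d > 1 in x_0,…,x_n vanishes identically on an m-plane Λ with 2m ≥ n, then Λ contains a point at which all partial derivatives ∂F/∂x_i vanish. In particular, if X is smooth then the Fano variety F_m(X) of m-planes in X is empty. -/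
open MvPolynomial

noncomputable def phiKill (K : Type*) [Field K] (N i : ℕ) :
    MvPolynomial (Fin N) K →ₐ[K] MvPolynomial (Fin N) K :=
  aeval (fun j : Fin N => if j.val < i then 0 else X j)

lemma phiKill_comp (K : Type*) [Field K] (N i : ℕ) (p : MvPolynomial (Fin N) K) :
    phiKill K N (i+1) (phiKill K N i p) = phiKill K N (i+1) p := by
  have : (phiKill K N (i+1)).comp (phiKill K N i) = phiKill K N (i+1) := by
    ext1 j
    simp only [phiKill, AlgHom.comp_apply, aeval_X]
    by_cases h : j.val < i
    · simp [h, Nat.lt_succ_of_lt h]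
    · simp [h]
  exact DFunLike.congr_fun this p

lemma height_phiKill (K : Type*) [Field K] (N i : ℕ) (hi : i ≤ N) :
    (i : ℕ∞) ≤ (RingHom.ker (phiKill K N i)).height := by
  induction i with
  | zero => simp
  | succ i ih =>
    have h1 := ih (by omega)
    have hp : (RingHom.ker (phiKill K N i)).IsPrime := RingHom.ker_isPrime _
    have hp' : (RingHom.ker (phiKill K N (i+1))).IsPrime := RingHom.ker_isPrime _
    have hlt : RingHom.ker (phiKill K N i) < RingHom.ker (phiKill K N (i+1)) := by
      refine lt_of_le_of_ne ?_ ?_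
      · intro p hp
        rw [RingHom.mem_ker] at hp ⊢
        rw [← phiKill_comp, hp, map_zero]
      · intro h
        have : (X ⟨i, hi⟩ : MvPolynomial (Fin N) K) ∈ RingHom.ker (phiKill K N i) := by
          rw [h, RingHom.mem_ker]; simp [phiKill]
        rw [RingHom.mem_ker] at this
        simp [phiKill] at this
    have := Ideal.height_add_one_le_of_lt_of_isPrime hlt
    push_cast
    exact (add_le_add_left h1 1).trans this

lemma exists_common_zero (K : Type*) [Field K] [IsAlgClosed K] (N r : ℕ) (hr : r < N)
    (G : Fin r → MvPolynomial (Fin N) K) (hG : ∀ j, aeval (0 : Fin N → K) (G j) = 0) :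
    ∃ y : Fin N → K, y ≠ 0 ∧ ∀ j, aeval y (G j) = 0 := by
  by_contra! hcon
  have hz : zeroLocus K (Ideal.span (Set.range G)) = {(0 : Fin N → K)} := by
    rw [zeroLocus_span]
    ext y
    constructor
    · intro hy
      by_contra hne
      obtain ⟨j, hj⟩ := hcon y hne
      exact hj (hy _ ⟨j, rfl⟩)
    · rintro rfl p ⟨j, rfl⟩
      exact hG j
  have hrad := vanishingIdeal_zeroLocus_eq_radical (K := K) (Ideal.span (Set.range G))
  rw [hz] at hrad
  have hker : RingHom.ker (phiKill K N N) ≤ vanishingIdeal K {(0 : Fin N → K)} := by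
    intro p hp
    rw [mem_vanishingIdeal_singleton_iff]
    rw [RingHom.mem_ker] at hp
    have h : (aeval (0 : Fin N → K)).comp (phiKill K N N) = aeval (0 : Fin N → K) := by
      ext1 j
      simp [phiKill]
    rw [← h, AlgHom.comp_apply, hp, map_zero]
  have hmin : vanishingIdeal K {(0 : Fin N → K)} ∈ (Ideal.span (Set.range G)).minimalPrimes := by
    rw [← Ideal.radical_minimalPrimes, ← hrad, Ideal.minimalPrimes_eq_subsingleton_self]
    rfl
  have h1 := Ideal.height_le_card_of_mem_minimalPrimes_span (Set.finite_range G) hmin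
  have h2 := (height_phiKill K N N le_rfl).trans (Ideal.height_mono hker)
  have h3 : (Set.range G).ncard ≤ r := by
    rw [← Set.image_univ]
    exact (Set.ncard_image_le).trans (by simp)
  have h4 := h2.trans h1
  norm_cast at h4
  omega

lemma dir_deriv {k K : Type*} [Field k] [Field K] [Algebra k K] (N : ℕ)
    (F : MvPolynomial (Fin N) k) (v w : Fin N → K) :
    (Polynomial.derivative
      (aeval (fun i => Polynomial.C (v i) + Polynomial.X * Polynomial.C (w i)) F)).eval 0 =
      ∑ i, w i * aeval v (pderiv i F) := by
  have key : ∀ p : MvPolynomial (Fin N) k, Polynomial.eval 0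
      (aeval (fun i => Polynomial.C (v i) + Polynomial.X * Polynomial.C (w i)) p) = aeval v p := by
    intro p
    induction p using MvPolynomial.induction_on with
    | C a => simp [IsScalarTower.algebraMap_apply k K (Polynomial K)]
    | add p q hp hq => simp only [map_add, Polynomial.eval_add, hp, hq]
    | mul_X p i hp =>
      simp only [map_mul, Polynomial.eval_mul, hp, aeval_X]; simp
  induction F using MvPolynomial.induction_on with
  | C a => simp [IsScalarTower.algebraMap_apply k K (Polynomial K)]
  | add p q hp hq => simp only [map_add, Polynomial.eval_add, hp, hq, mul_add, Finset.sum_add_distrib]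
  | mul_X p i hp =>
    simp only [map_mul, aeval_X, Polynomial.derivative_mul, Polynomial.eval_add,
      Polynomial.eval_mul, hp, key, Derivation.leibniz, pderiv_X, map_add, smul_eq_mul, mul_add,
      Finset.sum_add_distrib]
    simp [Pi.single_apply, apply_ite, Finset.sum_mul]
    rw [add_comm, mul_comm]
    congr 1
    exact Finset.sum_congr rfl fun _ _ => by ring

lemma dir_deriv_zero {k K : Type*} [Field k] [Field K] [Infinite K] [Algebra k K] (N : ℕ)
    (F : MvPolynomial (Fin N) k) (W : Submodule K (Fin N → K))
    (hWX : ∀ v ∈ W, aeval v F = 0) (v w : Fin N → K) (hv : v ∈ W) (hw : w ∈ W) :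
    ∑ i, w i * aeval v (pderiv i F) = 0 := by
  rw [← dir_deriv]
  have : aeval (fun i => Polynomial.C (v i) + Polynomial.X * Polynomial.C (w i)) F = 0 := by
    apply Polynomial.funext
    intro t
    have key : ∀ p : MvPolynomial (Fin N) k, Polynomial.eval t
      (aeval (fun i => Polynomial.C (v i) + Polynomial.X * Polynomial.C (w i)) p) =
        aeval (v + t • w) p := by
      intro p
      induction p using MvPolynomial.induction_on with
      | C a => simp [IsScalarTower.algebraMap_apply k K (Polynomial K)]
      | add p q hp hq => simp only [map_add, Polynomial.eval_add, hp, hq]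
      | mul_X p i hp =>
        simp only [map_mul, Polynomial.eval_mul, hp, aeval_X, Polynomial.eval_add,
          Polynomial.eval_C, Polynomial.eval_X, Pi.add_apply, Pi.smul_apply, smul_eq_mul]
    rw [key, hWX _ (W.add_mem hv (W.smul_mem t hw))]; simp
  rw [this]; simp

/-- **Proposition (appendix, Prop. 1).** Let k be a field, F a form of degree d > 1
in n+1 variables over k, and m an integer with 2m ≥ n.  If F vanishes identically on
an m-plane Λ of Pⁿ (given as an (m+1)-dimensional linear subspace W of the geometric
affine cone, over the algebraic closure), then Λ contains a point at which all the
partial derivatives ∂F/∂xᵢ vanish; that is, Λ intersects the singular locus of the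
hypersurface X = {F = 0}.  In particular, if X is smooth then the Fano variety
F_m(X) is empty. -/
theorem statement8 (k : Type) [Field k] (n m d : ℕ) (h2m : n ≤ 2 * m) (hd : 1 < d)
    (F : MvPolynomial (Fin (n + 1)) k) (hF : F.IsHomogeneous d)
    (W : Submodule (AlgebraicClosure k) (Fin (n + 1) → AlgebraicClosure k))
    (hW : Module.finrank (AlgebraicClosure k) W = m + 1)
    (hWX : ∀ v ∈ W, MvPolynomial.aeval v F = 0) :
    ∃ v ∈ W, v ≠ 0 ∧ ∀ i, MvPolynomial.aeval v (MvPolynomial.pderiv i F) = 0 := by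
  obtain ⟨U, hU⟩ := W.exists_isCompl
  have hdim := Submodule.finrank_add_eq_of_isCompl hU
  rw [hW, Module.finrank_fin_fun] at hdim
  let bW := Module.finBasisOfFinrankEq _ W hW
  let bU := Module.finBasis (AlgebraicClosure k) U
  let pt : (Fin (m + 1) → AlgebraicClosure k) → W := fun y => ∑ l, y l • bW l
  let L : Fin (n + 1) → MvPolynomial (Fin (m + 1)) (AlgebraicClosure k) :=
    fun i => ∑ l, X l * C ((bW l : Fin (n + 1) → AlgebraicClosure k) i)
  let G : Fin (Module.finrank (AlgebraicClosure k) U) →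
      MvPolynomial (Fin (m + 1)) (AlgebraicClosure k) :=
    fun j => ∑ i, C ((bU j : Fin (n + 1) → AlgebraicClosure k) i) * aeval L (pderiv i F)
  have hL : ∀ (y : Fin (m + 1) → AlgebraicClosure k) (p : MvPolynomial (Fin (n + 1)) k),
      aeval y (aeval L p) = aeval (pt y : Fin (n + 1) → AlgebraicClosure k) p := by
    intro y p
    induction p using MvPolynomial.induction_on with
    | C a =>
      simp [IsScalarTower.algebraMap_apply k (AlgebraicClosure k)
        (MvPolynomial (Fin (m + 1)) (AlgebraicClosure k))]
    | add p q hp hq => simp only [map_add, hp, hq]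
    | mul_X p i hp =>
      simp only [map_mul, hp, aeval_X]; simp [L, pt, Finset.sum_apply]
  have hGe : ∀ y j, aeval y (G j) = ∑ i, (bU j : Fin (n + 1) → AlgebraicClosure k) i *
      aeval (pt y : Fin (n + 1) → AlgebraicClosure k) (pderiv i F) := by
    intro y j
    simp only [G, map_sum, map_mul, hL]
    simp
  obtain ⟨y, hy0, hy⟩ := exists_common_zero (AlgebraicClosure k) (m + 1) _ (by omega) G (by
    intro j
    rw [hGe]
    refine Finset.sum_eq_zero fun i _ => ?_
    have h0 : ((pt 0 : W) : Fin (n + 1) → AlgebraicClosure k) = 0 := by simp [pt]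
    have hh : (pderiv i F).IsHomogeneous (d - 1) := hF.pderiv
    have : aeval (0 : Fin (n + 1) → AlgebraicClosure k) (pderiv i F) = 0 := by
      rw [aeval_zero, constantCoeff_eq, hh.coeff_eq_zero, map_zero]
      simp; omega
    rw [h0, this, mul_zero])
  refine ⟨pt y, (pt y).2, ?_, ?_⟩
  · intro h
    have h' : pt y = 0 := Subtype.ext h
    apply hy0
    funext l
    exact Fintype.linearIndependent_iff.mp bW.linearIndependent y h' l
  · let φ : (Fin (n + 1) → AlgebraicClosure k) →ₗ[AlgebraicClosure k] AlgebraicClosure k :=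
      Fintype.linearCombination (AlgebraicClosure k)
        (fun i => aeval (pt y : Fin (n + 1) → AlgebraicClosure k) (pderiv i F))
    have hφ : ∀ u, φ u = ∑ i, u i *
        aeval (pt y : Fin (n + 1) → AlgebraicClosure k) (pderiv i F) := by
      intro u; simp [φ, Fintype.linearCombination_apply]
    have hφW : W ≤ LinearMap.ker φ := by
      intro w hw
      rw [LinearMap.mem_ker, hφ]
      exact dir_deriv_zero _ F W hWX _ _ (pt y).2 hw
    have hφU : U ≤ LinearMap.ker φ := by
      have : φ.comp U.subtype = 0 := by
        apply bU.ext
        intro j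
        simp only [LinearMap.comp_apply, Submodule.subtype_apply, hφ, LinearMap.zero_apply]
        rw [← hGe, hy]
      intro u hu
      exact DFunLike.congr_fun this ⟨u, hu⟩
    have htop : (⊤ : Submodule _ _) ≤ LinearMap.ker φ := by
      rw [← hU.sup_eq_top]; exact sup_le hφW hφU
    intro i
    have := htop (Submodule.mem_top (x := Pi.single i 1))
    rw [LinearMap.mem_ker, hφ] at this
    simpa [Pi.single_apply] using this
end
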